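/- arXiv:2406.08400 — 6 statements merged into one kernel-verified Lean document; each statement's English description precedes it below -/
import Mathlib

section
/- For every real number x ≥ 0 and every θ ∈ [0,1] one has cosh(x) − 1 ≤ x^{2θ}·cosh(x). -/
/-- For every real `x ≥ 0` and every `θ ∈ [0,1]` one has
`cosh x − 1 ≤ x^(2θ)·cosh x`. -/
theorem cosh_sub_one_le (x θ : ℝ) (hx : 0 ≤ x) (hθ : θ ∈ Set.Icc (0 : ℝ) 1) :
    Real.cosh x - 1 ≤ x ^ (2 * θ) * Real.cosh x := by
  obtain ⟨h0, h1⟩ := hθ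
  have hc := Real.cosh_pos x
  rcases hx.eq_or_lt with rfl | hpos
  · have := Real.rpow_nonneg (le_refl (0:ℝ)) (2 * θ)
    simp only [Real.cosh_zero]
    linarith
  rcases le_total 1 x with h | h
  · have := Real.one_le_rpow h (by linarith : 0 ≤ 2 * θ)
    nlinarith
  · have h2 : x ^ 2 ≤ x ^ (2 * θ) := by
      rw [← Real.rpow_two]
      exact Real.rpow_le_rpow_of_exponent_ge hpos h (by linarith)
    have h3 : Real.cosh x ≤ Real.exp (x ^ 2 / 2) := Real.cosh_le_exp_half_sq x
    have h4 : 1 - x ^ 2 ≤ Real.exp (-x ^ 2) := by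
      have := Real.add_one_le_exp (-x ^ 2)
      linarith
    have h5 : Real.cosh x * (1 - x ^ 2) ≤ 1 := by
      calc Real.cosh x * (1 - x ^ 2) ≤ Real.exp (x ^ 2 / 2) * Real.exp (-x ^ 2) :=
            mul_le_mul h3 h4 (by nlinarith) (Real.exp_pos _).le
        _ = Real.exp (x ^ 2 / 2 + -x ^ 2) := (Real.exp_add _ _).symm
        _ ≤ 1 := Real.exp_le_one_iff.2 (by nlinarith [sq_nonneg x])
    nlinarith
end

section
/- Let p ≥ 1 be an integer, let ξ₁, …, ξ_p be real numbers and set ξ = ξ₁ + ⋯ + ξ_p. Then |1 − cosh(|ξ|)·∏_{j=1}^p sech(|ξ_j|)| ≤ 2^p · Σ_{j ≠ k, 1 ≤ j,k ≤ p} |ξ_j||ξ_k|, where the sum is over all ordered pairs (j,k) with j ≠ k. -/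
lemma abs_tanh_le_two_mul (x : ℝ) : |Real.tanh x| ≤ 2 * |x| := by
  have key : ∀ y : ℝ, 0 ≤ y → |Real.tanh y| ≤ 2 * |y| := by
    intro y hy
    have hs : 0 ≤ Real.sinh y := Real.sinh_nonneg_iff.2 hy
    have hc := Real.cosh_pos y
    rw [Real.tanh_eq_sinh_div_cosh, abs_of_nonneg (div_nonneg hs hc.le), abs_of_nonneg hy,
      div_le_iff₀ hc, Real.sinh_eq, Real.cosh_eq]
    have h1 : Real.exp (-y) = Real.exp y * Real.exp (-(2 * y)) := by
      rw [← Real.exp_add]; ring_nf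
    have h2 := Real.add_one_le_exp (-(2 * y))
    have h3 := mul_le_mul_of_nonneg_left h2 (Real.exp_pos y).le
    have h4 := mul_nonneg hy (Real.exp_pos (-y)).le
    nlinarith
  rcases le_total 0 x with h | h
  · exact key x h
  · simpa using key (-x) (by linarith)

/-- Joint induction: bounds for `cosh S / P`, `sinh S / P` and `1 - cosh S / P`. -/
lemma cosh_sech_aux (p : ℕ) : ∀ ξ : Fin p → ℝ,
    |Real.cosh (∑ j, ξ j) * ∏ j, (Real.cosh (ξ j))⁻¹| ≤ 2 ^ p ∧
    |Real.sinh (∑ j, ξ j) * ∏ j, (Real.cosh (ξ j))⁻¹| ≤ 2 ^ p * ∑ j, |ξ j| ∧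
    |1 - Real.cosh (∑ j, ξ j) * ∏ j, (Real.cosh (ξ j))⁻¹| ≤
      2 ^ p * ∑ j, ∑ k, if j ≠ k then |ξ j| * |ξ k| else 0 := by
  induction p with
  | zero => intro ξ; simp
  | succ p ih =>
    intro ξ
    obtain ⟨h1, h2, h3⟩ := ih (fun i => ξ i.succ)
    have hQ : (∑ j, ∑ k, if j ≠ k then |ξ j| * |ξ k| else 0) =
        (∑ j : Fin p, ∑ k : Fin p, if j ≠ k then |ξ j.succ| * |ξ k.succ| else 0)
          + 2 * (|ξ 0| * ∑ j : Fin p, |ξ j.succ|) := by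
      have e0 : ∀ j : Fin p, (0 : Fin (p+1)) ≠ j.succ := fun j => (Fin.succ_ne_zero j).symm
      simp only [Fin.sum_univ_succ, Fin.succ_inj, ne_eq, Fin.succ_ne_zero, e0,
        not_false_eq_true, not_true_eq_false, if_true, if_false, Finset.sum_add_distrib,
        Finset.mul_sum, zero_add, mul_comm _ |ξ 0|]
      simp only [← Finset.mul_sum]
      ring
    have hQ0 : 0 ≤ ∑ j : Fin p, ∑ k : Fin p,
        if j ≠ k then |ξ j.succ| * |ξ k.succ| else 0 := by
      refine Finset.sum_nonneg fun j _ => Finset.sum_nonneg fun k _ => ?_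
      split_ifs <;> positivity
    have hA0 : 0 ≤ ∑ j : Fin p, |ξ j.succ| := Finset.sum_nonneg fun j _ => abs_nonneg _
    rw [hQ, Fin.sum_univ_succ, Fin.sum_univ_succ (fun j => |ξ j|), Fin.prod_univ_succ]
    have hP : 0 < ∏ j : Fin p, (Real.cosh (ξ j.succ))⁻¹ :=
      Finset.prod_pos fun j _ => inv_pos.2 (Real.cosh_pos _)
    generalize (∑ j : Fin p, ∑ k : Fin p,
        if j ≠ k then |ξ j.succ| * |ξ k.succ| else 0) = Q at *
    generalize (∑ j : Fin p, |ξ j.succ|) = A at *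
    generalize (∏ j : Fin p, (Real.cosh (ξ j.succ))⁻¹) = P at *
    generalize (∑ j : Fin p, ξ j.succ) = S at *
    generalize ξ 0 = x at *
    have hc := Real.cosh_pos x
    have ht1 : |Real.tanh x| ≤ 1 := (Real.abs_tanh_lt_one x).le
    have htx : |Real.tanh x| ≤ 2 * |x| := abs_tanh_le_two_mul x
    have eF : Real.cosh (x + S) * ((Real.cosh x)⁻¹ * P) =
        Real.cosh S * P + (Real.sinh S * P) * Real.tanh x := by
      rw [Real.cosh_add, Real.tanh_eq_sinh_div_cosh]; field_simp
    have eG : Real.sinh (x + S) * ((Real.cosh x)⁻¹ * P) =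
        Real.sinh S * P + (Real.cosh S * P) * Real.tanh x := by
      rw [Real.sinh_add, Real.tanh_eq_sinh_div_cosh]; field_simp; ring
    have hGF : |Real.sinh S * P| ≤ 2 ^ p := by
      refine le_trans ?_ h1
      rw [abs_mul, abs_mul]
      refine mul_le_mul_of_nonneg_right ?_ (abs_nonneg _)
      apply sq_le_sq.1
      nlinarith [Real.cosh_sq S]
    rw [eF, eG]
    have h2p : (0 : ℝ) < 2 ^ p := by positivity
    generalize Real.cosh S * P = F at *
    generalize Real.sinh S * P = G at *
    rw [pow_succ]
    generalize (2 : ℝ) ^ p = T at *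
    generalize Real.tanh x = t at *
    have m1 : |G * t| ≤ T * 1 := by
      rw [abs_mul]; exact mul_le_mul hGF ht1 (abs_nonneg _) h2p.le
    have m2 : |F * t| ≤ T * (2 * |x|) := by
      rw [abs_mul]; exact mul_le_mul h1 htx (abs_nonneg _) h2p.le
    have m3 : |G * t| ≤ T * A * (2 * |x|) := by
      rw [abs_mul]; exact mul_le_mul h2 htx (abs_nonneg _) (by positivity)
    have hTA : 0 ≤ T * A := by positivity
    have hTx : 0 ≤ T * (2 * |x|) := by positivity
    have hTQ : 0 ≤ T * Q := by positivity
    have hTAx : 0 ≤ T * A * |x| := by positivity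
    refine ⟨?_, ?_, ?_⟩
    · linarith [abs_add_le F (G * t)]
    · linarith [abs_add_le G (F * t)]
    · have := abs_sub (1 - F) (G * t)
      rw [show 1 - (F + G * t) = 1 - F - G * t by ring]
      linarith


/-- Lemma 2.5 of the paper: for `ξ = ξ₁ + ⋯ + ξ_p`,
`|1 − cosh(|ξ|)·∏ sech(|ξ_j|)| ≤ 2^p · Σ_{j≠k} |ξ_j||ξ_k|`,
the sum ranging over all ordered pairs `(j,k)` with `j ≠ k`. -/
theorem cosh_sech_prod_est (p : ℕ) (hp : 1 ≤ p) (ξ : Fin p → ℝ) :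
    |1 - Real.cosh (|∑ j, ξ j|) * ∏ j, (Real.cosh (|ξ j|))⁻¹| ≤
      2 ^ p * ∑ j, ∑ k, if j ≠ k then |ξ j| * |ξ k| else 0 := by

  simp only [Real.cosh_abs]
  exact (cosh_sech_aux p ξ).2.2
end

section
/- Let σ ≥ 0 and let ξ₁, ξ₂, ξ₃ be real numbers with ξ = ξ₁ + ξ₂ + ξ₃. Then |1 − cosh(σ|ξ|)·sech(σ|ξ₁|)·sech(σ|ξ₂|)·sech(σ|ξ₃|)| ≤ 16 σ² (|ξ₁||ξ₂| + |ξ₁||ξ₃| + |ξ₂||ξ₃|). -/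
theorem tanh_aux (x : ℝ) : |Real.sinh x / Real.cosh x| ≤ 2 * |x| := by
  have key : ∀ y : ℝ, 0 ≤ y → Real.sinh y ≤ 2 * y * Real.cosh y := by
    intro y hy
    rw [Real.sinh_eq, Real.cosh_eq]
    have h1 := Real.add_one_le_exp (-2 * y)
    have h2 : Real.exp (-y) = Real.exp y * Real.exp (-2 * y) := by
      rw [← Real.exp_add]; ring_nf
    have h3 := Real.exp_pos y
    have h4 := mul_le_mul_of_nonneg_left h1 h3.le
    have h5 : 0 ≤ y * Real.exp (-y) := by positivity
    nlinarith
  have hc := Real.cosh_pos x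
  rw [abs_div, abs_of_pos hc, div_le_iff₀ hc, Real.abs_sinh, ← Real.cosh_abs x]
  exact key _ (abs_nonneg x)

/-- Trilinear symbol bound: for `σ ≥ 0` and `ξ = ξ₁ + ξ₂ + ξ₃`,
`|1 − cosh(σ|ξ|)·sech(σ|ξ₁|)·sech(σ|ξ₂|)·sech(σ|ξ₃|)|
  ≤ 16 σ² (|ξ₁||ξ₂| + |ξ₁||ξ₃| + |ξ₂||ξ₃|)`. -/
theorem trilinear_symbol_est (σ : ℝ) (hσ : 0 ≤ σ) (ξ₁ ξ₂ ξ₃ : ℝ) :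
    |1 - Real.cosh (σ * |ξ₁ + ξ₂ + ξ₃|) * (Real.cosh (σ * |ξ₁|))⁻¹ *
        (Real.cosh (σ * |ξ₂|))⁻¹ * (Real.cosh (σ * |ξ₃|))⁻¹| ≤
      16 * σ ^ 2 * (|ξ₁| * |ξ₂| + |ξ₁| * |ξ₃| + |ξ₂| * |ξ₃|) := by
  have hcosh : ∀ z : ℝ, Real.cosh (σ * |z|) = Real.cosh (σ * z) := by
    intro z
    rw [← Real.cosh_abs (σ * z), abs_mul, abs_of_nonneg hσ]
  have ht : ∀ z : ℝ, |Real.sinh (σ * z) / Real.cosh (σ * z)| ≤ 2 * (σ * |z|) := by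
    intro z
    have := tanh_aux (σ * z)
    rwa [abs_mul, abs_of_nonneg hσ] at this
  have hm : ∀ z w : ℝ, |(Real.sinh (σ * z) / Real.cosh (σ * z)) *
      (Real.sinh (σ * w) / Real.cosh (σ * w))| ≤ 4 * σ ^ 2 * (|z| * |w|) := by
    intro z w
    rw [abs_mul]
    calc _ ≤ (2 * (σ * |z|)) * (2 * (σ * |w|)) :=
          mul_le_mul (ht z) (ht w) (abs_nonneg _) (by positivity)
      _ = _ := by ring
  have h1 := (Real.cosh_pos (σ * ξ₁)).ne'
  have h2 := (Real.cosh_pos (σ * ξ₂)).ne'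
  have h3 := (Real.cosh_pos (σ * ξ₃)).ne'
  have e : 1 - Real.cosh (σ * |ξ₁ + ξ₂ + ξ₃|) * (Real.cosh (σ * |ξ₁|))⁻¹ *
        (Real.cosh (σ * |ξ₂|))⁻¹ * (Real.cosh (σ * |ξ₃|))⁻¹ =
      -((Real.sinh (σ * ξ₁) / Real.cosh (σ * ξ₁)) * (Real.sinh (σ * ξ₂) / Real.cosh (σ * ξ₂))
      + (Real.sinh (σ * ξ₁) / Real.cosh (σ * ξ₁)) * (Real.sinh (σ * ξ₃) / Real.cosh (σ * ξ₃))
      + (Real.sinh (σ * ξ₂) / Real.cosh (σ * ξ₂)) * (Real.sinh (σ * ξ₃) / Real.cosh (σ * ξ₃))) := by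
    simp only [hcosh, mul_add, Real.cosh_add, Real.sinh_add]
    field_simp
    ring
  rw [e, abs_neg]
  refine (abs_add_three _ _ _).trans ?_
  have a := hm ξ₁ ξ₂
  have b := hm ξ₁ ξ₃
  have c := hm ξ₂ ξ₃
  have p : 0 ≤ σ ^ 2 * (|ξ₁| * |ξ₂| + |ξ₁| * |ξ₃| + |ξ₂| * |ξ₃|) := by positivity
  linarith
end

section
/- For every b > 1/2 there exists a constant C > 0 such that for every Schwartz function u : ℝ² → ℂ one has ‖u‖_{L^8(ℝ²)} ≤ C · ( ∫_{ℝ²} (1+|τ−ξ³|)^{2b} |û(ξ,τ)|² dξ dτ )^{1/2}. -/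
open MeasureTheory

namespace Airy8

/-- Gaussian weight. -/
noncomputable def gw (ε : ℝ) (z : ℝ × ℝ) : ℝ :=
  Real.exp (-ε * z.1 ^ 2) * Real.exp (-ε * z.2 ^ 2)

/-- Fourier transform of the Gaussian weight. -/
noncomputable def gk (ε : ℝ) (p : ℝ × ℝ) : ℝ :=
  (Real.pi / ε) * (Real.exp (-(1 / (4 * ε)) * p.1 ^ 2) * Real.exp (-(1 / (4 * ε)) * p.2 ^ 2))

/-- The phase. -/
noncomputable def ph (z p : ℝ × ℝ) : ℂ := Complex.exp (((z.1 * p.1 + z.2 * p.2 : ℝ) : ℂ) * Complex.I)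

lemma ph_norm (z p : ℝ × ℝ) : ‖ph z p‖ = 1 := Complex.norm_exp_ofReal_mul_I _

lemma ph_cont : Continuous (fun q : (ℝ × ℝ) × (ℝ × ℝ) => ph q.1 q.2) := by
  unfold ph; fun_prop

lemma ph_add (z p q : ℝ × ℝ) : ph z (p + q) = ph z p * ph z q := by
  unfold ph; rw [← Complex.exp_add]; congr 1; simp; ring

lemma ph_conj (z p : ℝ × ℝ) : (starRingEnd ℂ) (ph z p) = ph z (-p) := by
  unfold ph; rw [← Complex.exp_conj]; congr 1; simp; ring

lemma gw_nonneg (ε : ℝ) (z) : 0 ≤ gw ε z := by unfold gw; positivity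
lemma gk_nonneg {ε : ℝ} (h : 0 < ε) (z) : 0 ≤ gk ε z := by unfold gk; positivity

lemma gw_integrable {ε : ℝ} (h : 0 < ε) : Integrable (gw ε) := by
  unfold gw
  exact (integrable_exp_neg_mul_sq h).mul_prod (integrable_exp_neg_mul_sq h)

lemma gk_meas (ε : ℝ) : Measurable (gk ε) := by unfold gk; fun_prop

lemma gk_lintegral {ε : ℝ} (h : 0 < ε) :
    ∫⁻ p, ENNReal.ofReal (gk ε p) = ENNReal.ofReal ((2 * Real.pi) ^ 2) := by
  have h4 : 0 < 1 / (4 * ε) := by positivity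
  have hi : Integrable (gk ε) := by
    unfold gk
    exact ((integrable_exp_neg_mul_sq h4).mul_prod (integrable_exp_neg_mul_sq h4)).const_mul _
  rw [← ofReal_integral_eq_lintegral_ofReal hi (Filter.Eventually.of_forall (gk_nonneg h))]
  congr 1
  unfold gk
  rw [integral_const_mul, Measure.volume_eq_prod,
    integral_prod_mul (fun x : ℝ => Real.exp (-(1 / (4 * ε)) * x ^ 2))
      (fun x : ℝ => Real.exp (-(1 / (4 * ε)) * x ^ 2)), integral_gaussian]
  rw [Real.mul_self_sqrt (by positivity)]
  field_simp
  norm_num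

lemma gauss1 {ε : ℝ} (h : 0 < ε) (t : ℝ) :
    ∫ x : ℝ, Complex.exp (((x * t : ℝ) : ℂ) * Complex.I) * (Real.exp (-ε * x ^ 2) : ℂ) =
      ((√(Real.pi / ε) * Real.exp (-(1 / (4 * ε)) * t ^ 2) : ℝ) : ℂ) := by
  have := fourierIntegral_gaussian (b := (ε : ℂ)) (by simpa using h) (t : ℂ)
  convert this using 1
  · congr 1; ext x; push_cast; congr 2; ring
  · push_cast
    congr 1
    · rw [Real.sqrt_eq_rpow, Complex.ofReal_cpow (by positivity)]; push_cast; rfl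
    · congr 1; field_simp

lemma gauss2 {ε : ℝ} (h : 0 < ε) (p : ℝ × ℝ) :
    ∫ z : ℝ × ℝ, ph z p * (gw ε z : ℂ) = (gk ε p : ℂ) := by
  have : ∀ z : ℝ × ℝ, ph z p * (gw ε z : ℂ) =
      (Complex.exp (((z.1 * p.1 : ℝ) : ℂ) * Complex.I) * (Real.exp (-ε * z.1 ^ 2) : ℂ)) *
      (Complex.exp (((z.2 * p.2 : ℝ) : ℂ) * Complex.I) * (Real.exp (-ε * z.2 ^ 2) : ℂ)) := by
    intro z
    unfold ph gw
    push_cast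
    rw [add_mul, Complex.exp_add]; ring
  simp_rw [this]
  rw [Measure.volume_eq_prod, integral_prod_mul (fun x : ℝ => Complex.exp (((x * p.1 : ℝ) : ℂ) * Complex.I) * (Real.exp (-ε * x ^ 2) : ℂ))
    (fun x : ℝ => Complex.exp (((x * p.2 : ℝ) : ℂ) * Complex.I) * (Real.exp (-ε * x ^ 2) : ℂ)),
    gauss1 h, gauss1 h, ← Complex.ofReal_mul]
  congr 1
  unfold gk
  have := Real.mul_self_sqrt (show 0 ≤ Real.pi / ε by positivity)
  linear_combination (Real.exp (-(1 / (4 * ε)) * p.1 ^ 2) * Real.exp (-(1 / (4 * ε)) * p.2 ^ 2)) * this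

lemma l2bound {Ω : Type*} [MeasurableSpace Ω] (m : Measure Ω) [SFinite m] {h : Ω → ℂ}
    (hh : Integrable h m) {Φ : Ω → ℝ × ℝ} (hΦ : Measurable Φ) {ε : ℝ} (hε : 0 < ε) :
    ∫⁻ z, ‖∫ ω, h ω * ph z (Φ ω) ∂m‖ₑ ^ 2 * ENNReal.ofReal (gw ε z) ≤
      ∫⁻ ω : Ω × Ω, ‖h ω.1‖ₑ * ‖h ω.2‖ₑ * ENNReal.ofReal (gk ε (Φ ω.1 - Φ ω.2)) ∂(m.prod m) := by
  set A : ℝ × ℝ → ℂ := fun z => ∫ ω, h ω * ph z (Φ ω) ∂m with hA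
  set H : ℝ × ℝ → Ω × Ω → ℂ := fun z ω =>
    (h ω.1 * (starRingEnd ℂ) (h ω.2)) * (ph z (Φ ω.1 - Φ ω.2) * (gw ε z : ℂ)) with hH
  have hphm : Measurable (fun q : (ℝ × ℝ) × (ℝ × ℝ) => ph q.1 q.2) := ph_cont.measurable
  have hstar : Integrable (fun ω => (starRingEnd ℂ) (h ω)) m := by
    have := (Complex.conjLIE.toContinuousLinearEquiv.toContinuousLinearMap).integrable_comp hh
    simpa using this
  have hHi : Integrable (Function.uncurry H) (volume.prod (m.prod m)) := by
    have h1 : Integrable (fun q : (ℝ × ℝ) × (Ω × Ω) =>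
        (gw ε q.1 : ℂ) * (h q.2.1 * (starRingEnd ℂ) (h q.2.2))) (volume.prod (m.prod m)) :=
      (gw_integrable hε).ofReal.mul_prod (hh.mul_prod hstar)
    have h2 : Integrable (fun q : (ℝ × ℝ) × (Ω × Ω) =>
        ph q.1 (Φ q.2.1 - Φ q.2.2) * ((gw ε q.1 : ℂ) * (h q.2.1 * (starRingEnd ℂ) (h q.2.2))))
        (volume.prod (m.prod m)) := by
      refine h1.bdd_mul (c := 1) ?_ (Filter.Eventually.of_forall fun q => (ph_norm _ _).le)
      refine Measurable.aestronglyMeasurable ?_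
      exact hphm.comp (f := fun q : (ℝ × ℝ) × (Ω × Ω) => (q.1, Φ q.2.1 - Φ q.2.2)) (by fun_prop)
    refine h2.congr (Filter.Eventually.of_forall fun q => ?_)
    simp only [Function.uncurry, hH]; ring
  have hin : ∀ z, ∫ ω, H z ω ∂(m.prod m) = ((‖A z‖ ^ 2 * gw ε z : ℝ) : ℂ) := by
    intro z
    have : ∀ ω : Ω × Ω, H z ω = (gw ε z : ℂ) * ((h ω.1 * ph z (Φ ω.1)) *
        (starRingEnd ℂ) (h ω.2 * ph z (Φ ω.2))) := by
      intro ω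
      simp only [hH, sub_eq_add_neg, ph_add, map_mul, ph_conj]; ring
    simp_rw [this]
    rw [integral_const_mul, integral_prod_mul (fun ω => h ω * ph z (Φ ω))
      (fun ω => (starRingEnd ℂ) (h ω * ph z (Φ ω))), integral_conj, Complex.mul_conj,
      Complex.normSq_eq_norm_sq]
    push_cast; ring
  have hsw := integral_integral_swap hHi
  have hleft : ∫⁻ z, ‖A z‖ₑ ^ 2 * ENNReal.ofReal (gw ε z) =
      ‖∫ z, ∫ ω, H z ω ∂(m.prod m)‖ₑ := by
    have hIn : Integrable (fun z => ‖A z‖ ^ 2 * gw ε z) := by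
      have := hHi.integral_prod_left
      have h3 := this.re
      refine h3.congr (Filter.Eventually.of_forall fun z => ?_)
      have := hin z
      simp only [Function.uncurry]
      rw [this]; exact Complex.ofReal_re _
    simp_rw [hin]
    rw [integral_complex_ofReal, ← ofReal_norm, Complex.norm_real, Real.norm_of_nonneg
      (integral_nonneg fun z => mul_nonneg (by positivity) (gw_nonneg _ _)),
      ofReal_integral_eq_lintegral_ofReal hIn
        (Filter.Eventually.of_forall fun z => mul_nonneg (by positivity) (gw_nonneg _ _))]
    congr 1; ext z
    rw [ENNReal.ofReal_mul (by positivity), ENNReal.ofReal_pow (by positivity), ofReal_norm]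
  rw [hleft, hsw]
  refine (enorm_integral_le_lintegral_enorm _).trans (lintegral_mono fun ω => ?_)
  simp only [hH]
  rw [integral_const_mul, gauss2 hε, enorm_mul, enorm_mul]
  refine le_of_eq ?_
  congr 1
  · congr 1; simp [← ofReal_norm]
  · rw [← ofReal_norm, Complex.norm_real, Real.norm_of_nonneg (gk_nonneg hε _)]

lemma schwartz_fourier (u : SchwartzMap (ℝ × ℝ) ℂ) : ∃ W : SchwartzMap (ℝ × ℝ) ℂ,
    (∀ p, W p = ∫ q : ℝ × ℝ, Complex.exp (-Complex.I * (q.1 * p.1 + q.2 * p.2)) * u q) ∧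
    (∀ z, u z = ((2 * Real.pi) ^ 2 : ℝ)⁻¹ • ∫ p, ph z p * W p) := by
  let e := WithLp.prodContinuousLinearEquiv 2 ℝ ℝ ℝ
  let v : SchwartzMap (WithLp 2 (ℝ × ℝ)) ℂ := SchwartzMap.compCLMOfContinuousLinearEquiv ℂ e u
  let w := FourierTransform.fourier v
  have h2pi : (2 * Real.pi)⁻¹ ≠ 0 := by positivity
  let s : (ℝ × ℝ) ≃L[ℝ] (ℝ × ℝ) :=
    ContinuousLinearEquiv.smulLeft (Units.mk0 ((2 * Real.pi)⁻¹) h2pi)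
  let W : SchwartzMap (ℝ × ℝ) ℂ :=
    SchwartzMap.compCLMOfContinuousLinearEquiv ℂ (s.trans e.symm) w
  have hmp := WithLp.volume_preserving_ofLp ℝ ℝ
  have hme : MeasurableEmbedding (WithLp.ofLp : WithLp 2 (ℝ × ℝ) → ℝ × ℝ) :=
    e.toHomeomorph.measurableEmbedding
  have hW : ∀ p : ℝ × ℝ, W p = w (e.symm ((2 * Real.pi)⁻¹ • p)) := fun p => rfl
  refine ⟨W, ?_, ?_⟩
  · intro p
    rw [hW]
    have : w (e.symm ((2 * Real.pi)⁻¹ • p)) =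
      FourierTransform.fourier (v : WithLp 2 (ℝ × ℝ) → ℂ) (e.symm ((2 * Real.pi)⁻¹ • p)) := by
      rw [← SchwartzMap.fourier_coe]
    rw [this, Real.fourier_eq', ← hmp.integral_comp hme]
    congr 1
    ext q
    have hv : v q = u (WithLp.ofLp q) := rfl
    rw [hv, smul_eq_mul]
    congr 2
    have : inner ℝ q (e.symm ((2 * Real.pi)⁻¹ • p)) =
      (2 * Real.pi)⁻¹ * (q.fst * p.1 + q.snd * p.2) := by
      simp [e, WithLp.prod_inner_apply]; ring
    rw [this]
    push_cast
    have : (Real.pi : ℂ) ≠ 0 := by exact_mod_cast Real.pi_ne_zero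
    field_simp
    have f1 : q.fst = q.ofLp.1 := rfl
    have f2 : q.snd = q.ofLp.2 := rfl
    rw [f1, f2]; ring
  · intro z
    have h1 : u z = v (e.symm z) := by simp [v]
    have h2 : v = FourierTransformInv.fourierInv w := by simp [w]
    have h3 : v (e.symm z) = FourierTransformInv.fourierInv (w : WithLp 2 (ℝ × ℝ) → ℂ) (e.symm z) := by
      rw [h2, ← SchwartzMap.fourierInv_coe]
    have h4 : ∫ p, ph z p * W p =
        ∫ p, (fun p => ph z ((2 * Real.pi) • p) * w (e.symm p)) ((2 * Real.pi)⁻¹ • p) := by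
      congr 1; ext p
      rw [hW]
      beta_reduce
      rw [smul_smul, mul_inv_cancel₀ (by positivity), one_smul]
    rw [h1, h3, Real.fourierInv_eq', h4, Measure.integral_comp_smul volume (fun p : ℝ × ℝ => ph z ((2 * Real.pi) • p) * w (e.symm p)) ((2 * Real.pi)⁻¹)]
    rw [← hmp.integral_comp hme]
    rw [smul_smul]
    have : ((2 * Real.pi) ^ 2)⁻¹ * |(((2 * Real.pi)⁻¹) ^ Module.finrank ℝ (ℝ × ℝ))⁻¹| = 1 := by
      simp
      rw [abs_of_pos Real.pi_pos]
      field_simp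
    rw [this, one_smul]
    congr 1
    ext q
    rw [smul_eq_mul]
    have hw : e.symm (WithLp.ofLp q) = q := rfl
    rw [hw]
    congr 1
    unfold ph
    congr 2
    have : inner ℝ q (e.symm z) = (q.fst * z.1 + q.snd * z.2) := by
      simp [e, WithLp.prod_inner_apply]; ring
    rw [this]
    simp
    ring
lemma lintegral_abs (F : ℝ → ENNReal) :
    ∫⁻ x, F |x| = 2 * ∫⁻ x in Set.Ioi (0:ℝ), F x := by
  have h1 : ∫⁻ x in Set.Ioi (0:ℝ), F |x| = ∫⁻ x in Set.Ioi (0:ℝ), F x :=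
    setLIntegral_congr_fun measurableSet_Ioi fun x hx => by
      rw [abs_of_pos hx]
  have h2 : ∫⁻ x in Set.Iio (0:ℝ), F |x| = ∫⁻ x in Set.Ioi (0:ℝ), F |x| := by
    have := (Measure.measurePreserving_neg (volume : Measure ℝ)).setLIntegral_comp_preimage_emb
      (Homeomorph.neg ℝ).measurableEmbedding (fun x => F |x|) (Set.Ioi 0)
    rw [← this]
    simp
  have h3 : ∫⁻ x in Set.Iic (0:ℝ), F |x| = ∫⁻ x in Set.Iio (0:ℝ), F |x| :=
    setLIntegral_congr Iio_ae_eq_Iic.symm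
  have := lintegral_add_compl (μ := volume) (fun x => F |x|) (measurableSet_Ioi (a := (0:ℝ)))
  rw [← this, Set.compl_Ioi, h3, h2, h1, two_mul]

lemma k1 {R : ℝ} (hR : 0 < R) :
    ∫⁻ z : ℝ, (Set.Iio R).indicator (fun r => ENNReal.ofReal (r ^ (-(2/3) : ℝ))) |z| =
      ENNReal.ofReal (6 * R ^ ((1/3) : ℝ)) := by
  rw [lintegral_abs, setLIntegral_indicator measurableSet_Iio, Set.inter_comm,
    Set.Ioi_inter_Iio, setLIntegral_congr Ioo_ae_eq_Ioc]
  have hi : IntervalIntegrable (fun x : ℝ => x ^ (-(2/3) : ℝ)) volume 0 R :=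
    intervalIntegral.intervalIntegrable_rpow' (by norm_num)
  rw [← ofReal_integral_eq_lintegral_ofReal, ← intervalIntegral.integral_of_le hR.le,
    integral_rpow (Or.inl (by norm_num))]
  · rw [show (2 : ENNReal) = ENNReal.ofReal 2 by simp, ← ENNReal.ofReal_mul (by norm_num)]
    congr 1
    rw [Real.zero_rpow (by norm_num)]
    norm_num
    ring
  · exact (intervalIntegrable_iff_integrableOn_Ioc_of_le hR.le).1 hi
  · refine (ae_restrict_iff' measurableSet_Ioc).2 (Filter.Eventually.of_forall fun x hx => ?_)
    exact Real.rpow_nonneg hx.1.le _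

lemma k2 {R : ℝ} (hR : 0 < R) :
    ∫⁻ z : ℝ, (Set.Ici R).indicator (fun r => ENNReal.ofReal (r ^ (-2 : ℝ))) |z| =
      ENNReal.ofReal (2 / R) := by
  rw [lintegral_abs, setLIntegral_indicator measurableSet_Ici]
  have : Set.Ici R ∩ Set.Ioi 0 = Set.Ici R := by
    ext x; simp; intro h; linarith
  rw [this, setLIntegral_congr Ioi_ae_eq_Ici.symm,
    ← ofReal_integral_eq_lintegral_ofReal (integrableOn_Ioi_rpow_of_lt (by norm_num) hR),
    integral_Ioi_rpow_of_lt (by norm_num) hR]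
  · rw [show (2 : ENNReal) = ENNReal.ofReal 2 by simp, ← ENNReal.ofReal_mul (by norm_num)]
    congr 1
    norm_num
    rw [Real.rpow_neg hR.le]
    simp
    field_simp
  · refine (ae_restrict_iff' measurableSet_Ioi).2 (Filter.Eventually.of_forall fun x hx => ?_)
    exact Real.rpow_nonneg (hR.le.trans (le_of_lt hx)) _

lemma young3 {s z a : ℝ} (hs : 0 < s) (hz : 0 < z) (hy : 0 ≤ a) :
    a * z ^ (-(2/3) : ℝ) ≤ s * a ^ (3/2 : ℝ) + s ^ (-2 : ℝ) * z ^ (-2 : ℝ) := by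
  have Y := Real.young_inequality_of_nonneg (a := s ^ (2/3 : ℝ) * a)
    (b := s ^ (-(2/3) : ℝ) * z ^ (-(2/3) : ℝ))
    (by positivity) (by positivity) (show Real.HolderConjugate (3/2) 3 from
      Real.holderConjugate_iff.2 ⟨by norm_num, by norm_num⟩)
  have e3 : s ^ (2/3 : ℝ) * a * (s ^ (-(2/3) : ℝ) * z ^ (-(2/3) : ℝ)) = a * z ^ (-(2/3) : ℝ) := by
    rw [Real.rpow_neg hs.le]; field_simp
  rw [e3, Real.mul_rpow (Real.rpow_nonneg hs.le _) hy,
    Real.mul_rpow (Real.rpow_nonneg hs.le _) (Real.rpow_nonneg hz.le _),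
    ← Real.rpow_mul hs.le, ← Real.rpow_mul hs.le, ← Real.rpow_mul hz.le,
    show (2/3 * (3/2) : ℝ) = 1 by norm_num, show (-(2/3) * 3 : ℝ) = -2 by norm_num,
    Real.rpow_one] at Y
  have a1 : 0 ≤ s * a ^ (3/2 : ℝ) := by positivity
  have a2 : 0 ≤ s ^ (-2 : ℝ) * z ^ (-2 : ℝ) := by positivity
  linarith

lemma inner_bound {h : ℝ → ℝ} (hm : Measurable h) (h0 : ∀ y, 0 ≤ h y) {N : ℝ} (hN : 0 < N)
    (hIn : ∫⁻ y, ENNReal.ofReal (h y ^ (3/2 : ℝ)) ≤ ENNReal.ofReal N) {c : ℝ} (hc : 0 ≤ c) (x : ℝ) :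
    ∫⁻ y, ENNReal.ofReal (min c (h y) * |x - y| ^ (-(2/3) : ℝ)) ≤
      ENNReal.ofReal (9 * N ^ (1/3 : ℝ) * c ^ (1/2 : ℝ)) := by
  rcases hc.eq_or_lt with rfl | hc
  · have : ∀ y, min 0 (h y) = 0 := fun y => min_eq_left (h0 y)
    simp [this]
  set R : ℝ := N * c ^ (-(3/2) : ℝ) with hRdef
  set s : ℝ := c ^ (1/2 : ℝ) * N ^ (-(2/3) : ℝ) with hsdef
  have hR : 0 < R := by positivity
  have hs : 0 < s := by positivity
  have e1 : ∫⁻ y, (Set.Iio R).indicator (fun r => ENNReal.ofReal (r ^ (-(2/3) : ℝ))) |x - y| =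
      ENNReal.ofReal (6 * R ^ ((1/3) : ℝ)) := by
    rw [← k1 hR]
    exact lintegral_sub_left_eq_self (fun z => (Set.Iio R).indicator (fun r => ENNReal.ofReal (r ^ (-(2/3) : ℝ))) |z|) x
  have e2 : ∫⁻ y, (Set.Ici R).indicator (fun r => ENNReal.ofReal (r ^ (-2 : ℝ))) |x - y| =
      ENNReal.ofReal (2 / R) := by
    rw [← k2 hR]
    exact lintegral_sub_left_eq_self (fun z => (Set.Ici R).indicator (fun r => ENNReal.ofReal (r ^ (-2 : ℝ))) |z|) x
  have pw : ∀ y, ENNReal.ofReal (min c (h y) * |x - y| ^ (-(2/3) : ℝ)) ≤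
      ENNReal.ofReal c * (Set.Iio R).indicator (fun r => ENNReal.ofReal (r ^ (-(2/3) : ℝ))) |x - y|
      + (ENNReal.ofReal s * ENNReal.ofReal (h y ^ (3/2 : ℝ)) + ENNReal.ofReal (s ^ (-2 : ℝ)) *
        (Set.Ici R).indicator (fun r => ENNReal.ofReal (r ^ (-2 : ℝ))) |x - y|) := by
    intro y
    by_cases hlt : |x - y| < R
    · rw [Set.indicator_of_mem (show |x - y| ∈ Set.Iio R from hlt), ← ENNReal.ofReal_mul hc.le]
      refine le_trans (ENNReal.ofReal_le_ofReal ?_) (le_add_of_nonneg_right (zero_le))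
      gcongr
      exact min_le_left _ _
    · have hge : R ≤ |x - y| := not_lt.1 hlt
      rw [Set.indicator_of_mem (show |x - y| ∈ Set.Ici R from hge), ← ENNReal.ofReal_mul hs.le,
        ← ENNReal.ofReal_mul (p := s ^ (-2 : ℝ)) (by positivity), ← ENNReal.ofReal_add (by have := h0 y; positivity) (by positivity)]
      refine le_trans (ENNReal.ofReal_le_ofReal ?_) (le_add_of_nonneg_left (zero_le))
      have hz : 0 < |x - y| := hR.trans_le hge
      set z := |x - y| with hzd
      have hy := h0 y
      refine le_trans (mul_le_mul_of_nonneg_right (min_le_right c (h y)) (by positivity)) ?_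
      exact young3 hs hz hy
  refine (lintegral_mono pw).trans ?_
  rw [lintegral_add_left, lintegral_add_left, lintegral_const_mul, lintegral_const_mul,
    lintegral_const_mul, e1, e2]
  rotate_left
  · refine Measurable.comp (g := (Set.Ici R).indicator (fun r => ENNReal.ofReal (r ^ (-2 : ℝ)))) ?_ (by fun_prop)
    exact Measurable.indicator (by fun_prop) measurableSet_Ici
  · fun_prop
  · refine Measurable.comp (g := (Set.Iio R).indicator (fun r => ENNReal.ofReal (r ^ (-(2/3) : ℝ)))) ?_ (by fun_prop)
    exact Measurable.indicator (by fun_prop) measurableSet_Iio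
  · fun_prop
  · refine Measurable.const_mul ?_ _
    refine Measurable.comp (g := (Set.Iio R).indicator (fun r => ENNReal.ofReal (r ^ (-(2/3) : ℝ)))) ?_ (by fun_prop)
    exact Measurable.indicator (by fun_prop) measurableSet_Iio
  refine (add_le_add le_rfl (add_le_add (mul_le_mul_right hIn _) le_rfl)).trans ?_
  rw [← ENNReal.ofReal_mul hc.le, ← ENNReal.ofReal_mul hs.le, ← ENNReal.ofReal_mul (by positivity),
    ← ENNReal.ofReal_add (by positivity) (by positivity),
    ← ENNReal.ofReal_add (by positivity) (by positivity)]
  apply ENNReal.ofReal_le_ofReal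
  have t1 : c * (6 * R ^ (1/3 : ℝ)) = 6 * (N ^ (1/3 : ℝ) * c ^ (1/2 : ℝ)) := by
    rw [hRdef, Real.mul_rpow hN.le (by positivity), ← Real.rpow_mul hc.le]
    have : c ^ (1/2 : ℝ) = c * c ^ (-(3/2) * (1/3) : ℝ) := by
      nth_rewrite 2 [← Real.rpow_one c]
      rw [← Real.rpow_add hc]; norm_num
    rw [this]; ring
  have t2 : s * N = N ^ (1/3 : ℝ) * c ^ (1/2 : ℝ) := by
    have : N ^ (1/3 : ℝ) = N ^ (-(2/3) : ℝ) * N := by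
      nth_rewrite 3 [← Real.rpow_one N]
      rw [← Real.rpow_add hN]; norm_num
    rw [this, hsdef]; ring
  have t3 : s ^ (-2 : ℝ) * (2 / R) = 2 * (N ^ (1/3 : ℝ) * c ^ (1/2 : ℝ)) := by
    have hRi : 2 / R = 2 * (N ^ (-1 : ℝ) * c ^ (3/2 : ℝ)) := by
      rw [hRdef, Real.rpow_neg hc.le, Real.rpow_neg_one]; field_simp
    have n1 : N ^ (1/3 : ℝ) = N ^ (-(2/3) * -2 : ℝ) * N ^ (-1 : ℝ) := by
      rw [← Real.rpow_add hN]; norm_num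
    have n2 : c ^ (1/2 : ℝ) = c ^ (1/2 * -2 : ℝ) * c ^ (3/2 : ℝ) := by
      rw [← Real.rpow_add hc]; norm_num
    rw [hRi, n1, n2, hsdef, Real.mul_rpow (by positivity) (by positivity), ← Real.rpow_mul hc.le,
      ← Real.rpow_mul hN.le]
    ring
  rw [t1, t2, t3]
  apply le_of_eq; ring

lemma hls_half {g h : ℝ → ℝ} (g0 : ∀ y, 0 ≤ g y)
    (hm : Measurable h) (h0 : ∀ y, 0 ≤ h y) {N : ℝ} (hN : 0 < N)
    (gint : ∫⁻ y, ENNReal.ofReal (g y ^ (3/2 : ℝ)) ≤ ENNReal.ofReal N)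
    (hIn : ∫⁻ y, ENNReal.ofReal (h y ^ (3/2 : ℝ)) ≤ ENNReal.ofReal N) :
    ∫⁻ x, ∫⁻ y, ENNReal.ofReal (g x * min (g x) (h y) * |x - y| ^ (-(2/3) : ℝ)) ≤
      ENNReal.ofReal (9 * N ^ (4/3 : ℝ)) := by
  have h1 : ∀ x, ∫⁻ y, ENNReal.ofReal (g x * min (g x) (h y) * |x - y| ^ (-(2/3) : ℝ)) ≤
      ENNReal.ofReal (9 * N ^ (1/3 : ℝ)) * ENNReal.ofReal (g x ^ (3/2 : ℝ)) := by
    intro x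
    have := inner_bound hm h0 hN hIn (g0 x) x
    simp_rw [mul_assoc, ENNReal.ofReal_mul (g0 x)]
    rw [lintegral_const_mul' _ _ ENNReal.ofReal_ne_top]
    refine (mul_le_mul_right this _).trans (le_of_eq ?_)
    rw [← ENNReal.ofReal_mul (g0 x), ← ENNReal.ofReal_mul (by positivity)]
    congr 1
    rcases (g0 x).eq_or_lt with h | h
    · rw [← h]; norm_num
    · have : g x ^ (3/2 : ℝ) = g x * g x ^ (1/2 : ℝ) := by
        nth_rewrite 2 [← Real.rpow_one (g x)]
        rw [← Real.rpow_add h]; norm_num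
      rw [this]; ring
  refine (lintegral_mono h1).trans ?_
  rw [lintegral_const_mul' _ _ ENNReal.ofReal_ne_top]
  refine (mul_le_mul_right gint _).trans (le_of_eq ?_)
  rw [← ENNReal.ofReal_mul (by positivity)]
  congr 1
  have : N ^ (4/3 : ℝ) = N ^ (1/3 : ℝ) * N := by
    nth_rewrite 3 [← Real.rpow_one N]
    rw [← Real.rpow_add hN]; norm_num
  rw [this]; ring

lemma hls {g h : ℝ → ℝ} (gm : Measurable g) (g0 : ∀ y, 0 ≤ g y)
    (hm : Measurable h) (h0 : ∀ y, 0 ≤ h y) {N : ℝ} (hN : 0 < N)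
    (gint : ∫⁻ y, ENNReal.ofReal (g y ^ (3/2 : ℝ)) ≤ ENNReal.ofReal N)
    (hIn : ∫⁻ y, ENNReal.ofReal (h y ^ (3/2 : ℝ)) ≤ ENNReal.ofReal N) :
    ∫⁻ x, ∫⁻ y, ENNReal.ofReal (g x * h y * |x - y| ^ (-(2/3) : ℝ)) ≤
      ENNReal.ofReal (18 * N ^ (4/3 : ℝ)) := by
  have A := hls_half g0 hm h0 hN gint hIn
  have B := hls_half h0 gm g0 hN hIn gint
  rw [lintegral_lintegral_swap (by fun_prop)] at B
  have pw : ∀ x y, ENNReal.ofReal (g x * h y * |x - y| ^ (-(2/3) : ℝ)) ≤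
      ENNReal.ofReal (g x * min (g x) (h y) * |x - y| ^ (-(2/3) : ℝ)) +
      ENNReal.ofReal (h y * min (h y) (g x) * |y - x| ^ (-(2/3) : ℝ)) := by
    intro x y
    rw [abs_sub_comm y x]
    rcases le_total (h y) (g x) with hl | hl
    · rw [min_eq_right hl]; exact le_self_add
    · rw [min_eq_right hl, mul_comm (g x) (h y)]; exact le_add_self
  refine (lintegral_mono fun x => lintegral_mono fun y => pw x y).trans ?_
  have : ∀ x, ∫⁻ y, (ENNReal.ofReal (g x * min (g x) (h y) * |x - y| ^ (-(2/3) : ℝ)) +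
      ENNReal.ofReal (h y * min (h y) (g x) * |y - x| ^ (-(2/3) : ℝ))) =
      (∫⁻ y, ENNReal.ofReal (g x * min (g x) (h y) * |x - y| ^ (-(2/3) : ℝ))) +
      ∫⁻ y, ENNReal.ofReal (h y * min (h y) (g x) * |y - x| ^ (-(2/3) : ℝ)) := fun x =>
    lintegral_add_left (by fun_prop) _
  simp_rw [this]
  rw [lintegral_add_left]
  · refine (add_le_add A B).trans (le_of_eq ?_)
    rw [← ENNReal.ofReal_add (by positivity) (by positivity)]
    congr 1; ring
  · refine Measurable.lintegral_prod_right' (f := fun q : ℝ × ℝ => ENNReal.ofReal (g q.1 * min (g q.1) (h q.2) * |q.1 - q.2| ^ (-(2/3) : ℝ))) ?_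
    fun_prop

lemma dbl {f : ℝ → ℝ} (fm : Measurable f) (f0 : ∀ y, 0 ≤ f y) {N : ℝ} (hN : 0 < N)
    (fint : ∫⁻ y, ENNReal.ofReal (f y ^ 2) ≤ ENNReal.ofReal N) :
    ∫⁻ x : ℝ × ℝ, ENNReal.ofReal ((f x.1 * f x.2) ^ (4/3 : ℝ) *
      |3 * (x.1 ^ 2 - x.2 ^ 2)| ^ (-(1/3) : ℝ)) ≤ ENNReal.ofReal (36 * N ^ (4/3 : ℝ)) := by
  set g : ℝ → ℝ := fun y => f y ^ (4/3 : ℝ) with hg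
  have gm : Measurable g := by fun_prop
  have g0 : ∀ y, 0 ≤ g y := fun y => Real.rpow_nonneg (f0 y) _
  have gint : ∫⁻ y, ENNReal.ofReal (g y ^ (3/2 : ℝ)) ≤ ENNReal.ofReal N := by
    refine le_trans (le_of_eq ?_) fint
    congr 1; ext y
    simp only [hg]
    rw [← Real.rpow_mul (f0 y)]; norm_num
  have gint' : ∫⁻ y, ENNReal.ofReal (g (-y) ^ (3/2 : ℝ)) ≤ ENNReal.ofReal N := by
    refine le_trans (le_of_eq ?_) gint
    exact lintegral_neg_eq_self (fun y => ENNReal.ofReal (g y ^ (3/2 : ℝ))) 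
  have A := hls gm g0 gm g0 hN gint gint
  have B := hls gm g0 (h := fun y => g (-y)) (by fun_prop) (fun y => g0 _) hN gint gint'
  have B' : ∫⁻ x, ∫⁻ y, ENNReal.ofReal (g x * g y * |x + y| ^ (-(2/3) : ℝ)) ≤
      ENNReal.ofReal (18 * N ^ (4/3 : ℝ)) := by
    refine le_trans (le_of_eq ?_) B
    congr 1; ext x
    rw [← lintegral_neg_eq_self]
    simp [sub_eq_add_neg]
  have pw : ∀ x y : ℝ, ENNReal.ofReal ((f x * f y) ^ (4/3 : ℝ) *
      |3 * (x ^ 2 - y ^ 2)| ^ (-(1/3) : ℝ)) ≤ 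
      ENNReal.ofReal (g x * g y * |x - y| ^ (-(2/3) : ℝ)) + ENNReal.ofReal (g x * g y * |x + y| ^ (-(2/3) : ℝ)) := by
    intro x y
    have gx := g0 x
    have gy := g0 y
    rw [← ENNReal.ofReal_add (by positivity) (by positivity)]
    apply ENNReal.ofReal_le_ofReal
    rw [Real.mul_rpow (f0 x) (f0 y), ← mul_add]
    refine mul_le_mul_of_nonneg_left ?_ (by positivity)
    have e : |3 * (x ^ 2 - y ^ 2)| = 3 * (|x - y| * |x + y|) := by
      rw [← abs_mul, show 3 * (x ^ 2 - y ^ 2) = 3 * ((x - y) * (x + y)) by ring, abs_mul (3:ℝ),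
        abs_of_pos (show (0:ℝ) < 3 by norm_num)]
    rw [e, Real.mul_rpow (by norm_num) (by positivity), Real.mul_rpow (by positivity) (by positivity)]
    have h3 : (3:ℝ) ^ (-(1/3) : ℝ) ≤ 1 := Real.rpow_le_one_of_one_le_of_nonpos (by norm_num) (by norm_num)
    have sq : ∀ a : ℝ, 0 ≤ a → a ^ (-(2/3) : ℝ) = (a ^ (-(1/3) : ℝ)) ^ 2 := by
      intro a ha
      rw [← Real.rpow_natCast, ← Real.rpow_mul ha]; norm_num
    rw [sq _ (abs_nonneg _), sq _ (abs_nonneg _)]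
    set a := |x - y| ^ (-(1/3) : ℝ)
    set b := |x + y| ^ (-(1/3) : ℝ)
    have ha : 0 ≤ a := by positivity
    have hb : 0 ≤ b := by positivity
    have : 0 ≤ a * b := by positivity
    nlinarith [sq_nonneg (a - b)]
  rw [Measure.volume_eq_prod, lintegral_prod _ (by fun_prop)]
  refine (lintegral_mono fun x => lintegral_mono fun y => pw x y).trans ?_
  have : ∀ x, ∫⁻ y, (ENNReal.ofReal (g x * g y * |x - y| ^ (-(2/3) : ℝ)) +
      ENNReal.ofReal (g x * g y * |x + y| ^ (-(2/3) : ℝ))) =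
      (∫⁻ y, ENNReal.ofReal (g x * g y * |x - y| ^ (-(2/3) : ℝ))) +
      ∫⁻ y, ENNReal.ofReal (g x * g y * |x + y| ^ (-(2/3) : ℝ)) := fun x =>
    lintegral_add_left (by fun_prop) _
  simp_rw [this]
  rw [lintegral_add_left]
  · refine (add_le_add A B').trans (le_of_eq ?_)
    rw [← ENNReal.ofReal_add (by positivity) (by positivity)]
    congr 1; ring
  · refine Measurable.lintegral_prod_right' (f := fun q : ℝ × ℝ => ENNReal.ofReal (g q.1 * g q.2 * |q.1 - q.2| ^ (-(2/3) : ℝ))) ?_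
    fun_prop

/-- The map `(ξ, η) ↦ (ξ + η, ξ³ + η³)`. -/
def Phi (x : ℝ × ℝ) : ℝ × ℝ := (x.1 + x.2, x.1 ^ 3 + x.2 ^ 3)

/-- The inverse of `Phi` on `SS`. -/
noncomputable def Psi (q : ℝ × ℝ) : ℝ × ℝ :=
  ((q.1 + √((4 * q.2 - q.1 ^ 3) / (3 * q.1))) / 2, (q.1 - √((4 * q.2 - q.1 ^ 3) / (3 * q.1))) / 2)

/-- Half plane minus a line. -/
def SS : Set (ℝ × ℝ) := {x | x.2 < x.1 ∧ x.1 + x.2 ≠ 0}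

lemma Phi_cont : Continuous Phi := by unfold Phi; fun_prop
lemma Psi_meas : Measurable Psi := by unfold Psi; fun_prop

lemma SS_meas : MeasurableSet SS := by
  refine (measurableSet_lt measurable_snd measurable_fst).inter ?_
  exact (measurableSet_eq_fun (by fun_prop) measurable_const).compl

lemma Psi_Phi {x : ℝ × ℝ} (hx : x ∈ SS) : Psi (Phi x) = x := by
  obtain ⟨h1, h2⟩ := hx
  have : (4 * (Phi x).2 - (Phi x).1 ^ 3) / (3 * (Phi x).1) = (x.1 - x.2) ^ 2 := by
    simp only [Phi]
    field_simp
    ring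
  unfold Psi
  rw [this, Real.sqrt_sq (by linarith)]
  ext <;> simp [Phi]

/-- The derivative of `Phi`. -/
noncomputable def Phi' (x : ℝ × ℝ) : ℝ × ℝ →L[ℝ] ℝ × ℝ :=
  (Matrix.toLin (.finTwoProd ℝ) (.finTwoProd ℝ)
    !![1, 1; 3 * x.1 ^ 2, 3 * x.2 ^ 2]).toContinuousLinearMap

lemma Phi_deriv (x : ℝ × ℝ) : HasFDerivAt Phi (Phi' x) x := by
  unfold Phi'
  rw [Matrix.toLin_finTwoProd_toContinuousLinearMap]
  convert! HasFDerivAt.prodMk (𝕜 := ℝ) ((hasFDerivAt_fst (p := x)).add hasFDerivAt_snd)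
      (((hasDerivAt_pow 3 x.1).comp_hasFDerivAt x hasFDerivAt_fst).add
        ((hasDerivAt_pow 3 x.2).comp_hasFDerivAt x hasFDerivAt_snd)) using 2 <;> simp

lemma Phi'_det (x : ℝ × ℝ) : |(Phi' x).det| = |3 * (x.1 ^ 2 - x.2 ^ 2)| := by
  unfold Phi'
  rw [LinearMap.det_toContinuousLinearMap, LinearMap.det_toLin, Matrix.det_fin_two_of, abs_sub_comm]
  congr 1; ring

lemma ae_SS : ∀ᵐ x : ℝ × ℝ, x ∈ SS ∪ Prod.swap ⁻¹' SS := by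
  have h1 : ∀ᵐ x : ℝ × ℝ, x.2 ≠ x.1 ∧ x.2 ≠ -x.1 := by
    rw [Measure.volume_eq_prod]
    refine Measure.ae_prod_iff_ae_ae ?_ |>.2 (Filter.Eventually.of_forall fun x => ?_)
    · exact (measurableSet_eq_fun (by fun_prop) (by fun_prop)).compl.inter
        (measurableSet_eq_fun (by fun_prop) (by fun_prop)).compl
    · have a := Measure.ae_ne (volume : Measure ℝ) x
      have b := Measure.ae_ne (volume : Measure ℝ) (-x)
      filter_upwards [a, b] with y ha hb using ⟨ha, hb⟩
  filter_upwards [h1] with x hx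
  rcases lt_or_gt_of_ne hx.1 with h | h
  · left; exact ⟨h, fun h' => hx.2 (by linarith)⟩
  · right; exact ⟨h, fun h' => hx.2 (by simp at h'; linarith)⟩

lemma density {f : ℝ → ℝ} (fm : Measurable f) (f0 : ∀ y, 0 ≤ f y) :
    ∃ G : ℝ × ℝ → ENNReal, Measurable G ∧
    (∀ ψ : ℝ × ℝ → ENNReal, Measurable ψ →
      ∫⁻ x : ℝ × ℝ, ENNReal.ofReal (f x.1 * f x.2) * ψ (Phi x) ≤ 2 * ∫⁻ q, G q * ψ q) ∧
    ∫⁻ q, G q ^ (4/3 : ℝ) ≤ ∫⁻ x : ℝ × ℝ, ENNReal.ofReal ((f x.1 * f x.2) ^ (4/3 : ℝ) *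
      |3 * (x.1 ^ 2 - x.2 ^ 2)| ^ (-(1/3) : ℝ)) := by
  set F : ℝ × ℝ → ℝ := fun x => f x.1 * f x.2 / |3 * (x.1 ^ 2 - x.2 ^ 2)| with hF
  have F0 : ∀ x, 0 ≤ F x := fun x => div_nonneg (mul_nonneg (f0 _) (f0 _)) (abs_nonneg _)
  have inj : Set.InjOn Phi SS := fun x hx y hy h => by
    rw [← Psi_Phi hx, h, Psi_Phi hy]
  have der : ∀ x ∈ SS, HasFDerivWithinAt Phi (Phi' x) SS x := fun x _ => (Phi_deriv x).hasFDerivWithinAt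
  have im : MeasurableSet (Phi '' SS) := measurable_image_of_fderivWithin SS_meas der inj
  have cov := fun g => lintegral_image_eq_lintegral_abs_det_fderiv_mul volume SS_meas der inj g
  have Fm : Measurable F := by fun_prop
  have Dpos : ∀ x ∈ SS, 0 < |3 * (x.1 ^ 2 - x.2 ^ 2)| := by
    intro x hx
    rw [abs_pos, sq_sub_sq]
    exact mul_ne_zero (by norm_num) (mul_ne_zero hx.2 (sub_ne_zero.2 hx.1.ne'))
  refine ⟨(Phi '' SS).indicator fun q => ENNReal.ofReal (F (Psi q)), ?_, ?_, ?_⟩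
  · exact (Fm.comp Psi_meas).ennreal_ofReal.indicator im
  · intro ψ hψ
    have e1 : ∫⁻ q, (Phi '' SS).indicator (fun q => ENNReal.ofReal (F (Psi q))) q * ψ q =
        ∫⁻ x in SS, ENNReal.ofReal (f x.1 * f x.2) * ψ (Phi x) := by
      have : ∀ q, (Phi '' SS).indicator (fun q => ENNReal.ofReal (F (Psi q))) q * ψ q =
          (Phi '' SS).indicator (fun q => ENNReal.ofReal (F (Psi q)) * ψ q) q := fun q => by
        rw [Set.indicator_mul_left]
      simp_rw [this]
      rw [lintegral_indicator im, cov]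
      refine setLIntegral_congr_fun SS_meas fun x hx => ?_
      rw [Psi_Phi hx, Phi'_det, ← mul_assoc, ← ENNReal.ofReal_mul (abs_nonneg _)]
      congr 2
      simp only [hF]
      have := (Dpos x hx).ne'
      field_simp
    have e2 : ∫⁻ x in Prod.swap ⁻¹' SS, ENNReal.ofReal (f x.1 * f x.2) * ψ (Phi x) =
        ∫⁻ x in SS, ENNReal.ofReal (f x.1 * f x.2) * ψ (Phi x) := by
      have := (Measure.measurePreserving_swap (μ := (volume : Measure ℝ)) (ν := (volume : Measure ℝ))).setLIntegral_comp_preimage_emb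
        MeasurableEquiv.prodComm.measurableEmbedding (fun x => ENNReal.ofReal (f x.1 * f x.2) * ψ (Phi x)) SS
      rw [Measure.volume_eq_prod, ← this]
      congr 1; ext x
      simp [Phi, mul_comm, add_comm]
    rw [e1, ← setLIntegral_univ, setLIntegral_congr (t := SS ∪ Prod.swap ⁻¹' SS), two_mul]
    · refine (lintegral_union_le _ _ _).trans ?_
      rw [e2]
    · filter_upwards [ae_SS] with x hx
      exact propext ⟨fun _ => hx, fun _ => trivial⟩
  · have : ∀ q, (Phi '' SS).indicator (fun q => ENNReal.ofReal (F (Psi q))) q ^ (4/3 : ℝ) =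
        (Phi '' SS).indicator (fun q => ENNReal.ofReal (F (Psi q)) ^ (4/3 : ℝ)) q := by
      intro q
      by_cases hq : q ∈ Phi '' SS
      · simp only [Set.indicator_of_mem hq]
      · simp only [Set.indicator_of_notMem hq]; norm_num
    simp_rw [this]
    rw [lintegral_indicator im, cov]
    refine le_trans (le_of_eq ?_) (setLIntegral_le_lintegral SS _)
    refine setLIntegral_congr_fun SS_meas fun x hx => ?_
    rw [Psi_Phi hx, Phi'_det, ENNReal.ofReal_rpow_of_nonneg (F0 x) (by norm_num),
      ← ENNReal.ofReal_mul (abs_nonneg _)]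
    congr 1
    simp only [hF]
    have hD := Dpos x hx
    set D := |3 * (x.1 ^ 2 - x.2 ^ 2)|
    rw [Real.div_rpow (mul_nonneg (f0 _) (f0 _)) hD.le, div_eq_mul_inv, ← Real.rpow_neg hD.le]
    have : D ^ (-(1/3) : ℝ) = D * D ^ (-(4/3) : ℝ) := by
      nth_rewrite 2 [← Real.rpow_one D]
      rw [← Real.rpow_add hD]; norm_num
    rw [this]; ring

lemma quad_le (a b c d : ENNReal) : a * b * (c * d) ≤
    (a ^ (4/3 : ℝ) * b ^ (4/3 : ℝ)) * (c ^ (4/3 : ℝ) + d ^ (4/3 : ℝ)) +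
    (c ^ (4/3 : ℝ) * d ^ (4/3 : ℝ)) * (a ^ (4/3 : ℝ) + b ^ (4/3 : ℝ)) := by
  have key : ∀ x y z w : ENNReal, w ≤ x → w ≤ y → w ≤ z →
      x * y * z * w ≤ x ^ (4/3 : ℝ) * y ^ (4/3 : ℝ) * z ^ (4/3 : ℝ) := by
    intro x y z w h1 h2 h3
    have e : w ≤ (x * y * z) ^ (1/3 : ℝ) := by
      calc w = (w * w * w) ^ (1/3 : ℝ) := by
            rw [show w * w * w = w ^ (3 : ℝ) by
              rw [show (3:ℝ) = ((3:ℕ) : ℝ) by norm_num, ENNReal.rpow_natCast]; ring,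
              ← ENNReal.rpow_mul]; norm_num
        _ ≤ _ := by gcongr
    rw [← ENNReal.mul_rpow_of_nonneg _ _ (by norm_num), ← ENNReal.mul_rpow_of_nonneg _ _ (by norm_num),
      show (4/3 : ℝ) = 1 + 1/3 by norm_num, ENNReal.rpow_add_of_nonneg _ _ (by norm_num) (by norm_num),
      ENNReal.rpow_one]
    gcongr
  rcases le_total a b with hab | hab <;> rcases le_total c d with hcd | hcd
  · rcases le_total a c with h | h
    · calc _ = b * c * d * a := by ring
        _ ≤ _ := key _ _ _ _ hab h (h.trans hcd)
        _ = (c ^ (4/3 : ℝ) * d ^ (4/3 : ℝ)) * (b ^ (4/3 : ℝ)) := by ring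
        _ ≤ _ := le_add_left (mul_le_mul_right le_add_self _)
    · calc _ = a * b * d * c := by ring
        _ ≤ _ := key _ _ _ _ h (h.trans hab) hcd
        _ = (a ^ (4/3 : ℝ) * b ^ (4/3 : ℝ)) * (d ^ (4/3 : ℝ)) := by ring
        _ ≤ _ := le_add_right (mul_le_mul_right le_add_self _)
  · rcases le_total a d with h | h
    · calc _ = b * c * d * a := by ring
        _ ≤ _ := key _ _ _ _ hab (h.trans hcd) h
        _ = (c ^ (4/3 : ℝ) * d ^ (4/3 : ℝ)) * (b ^ (4/3 : ℝ)) := by ring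
        _ ≤ _ := le_add_left (mul_le_mul_right le_add_self _)
    · calc _ = a * b * c * d := by ring
        _ ≤ _ := key _ _ _ _ h (h.trans hab) hcd
        _ = (a ^ (4/3 : ℝ) * b ^ (4/3 : ℝ)) * (c ^ (4/3 : ℝ)) := by ring
        _ ≤ _ := le_add_right (mul_le_mul_right le_self_add _)
  · rcases le_total b c with h | h
    · calc _ = a * c * d * b := by ring
        _ ≤ _ := key _ _ _ _ hab h (h.trans hcd)
        _ = (c ^ (4/3 : ℝ) * d ^ (4/3 : ℝ)) * (a ^ (4/3 : ℝ)) := by ring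
        _ ≤ _ := le_add_left (mul_le_mul_right le_self_add _)
    · calc _ = a * b * d * c := by ring
        _ ≤ _ := key _ _ _ _ (h.trans hab) h hcd
        _ = (a ^ (4/3 : ℝ) * b ^ (4/3 : ℝ)) * (d ^ (4/3 : ℝ)) := by ring
        _ ≤ _ := le_add_right (mul_le_mul_right le_add_self _)
  · rcases le_total b d with h | h
    · calc _ = a * c * d * b := by ring
        _ ≤ _ := key _ _ _ _ hab (h.trans hcd) h
        _ = (c ^ (4/3 : ℝ) * d ^ (4/3 : ℝ)) * (a ^ (4/3 : ℝ)) := by ring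
        _ ≤ _ := le_add_left (mul_le_mul_right le_self_add _)
    · calc _ = a * b * c * d := by ring
        _ ≤ _ := key _ _ _ _ (h.trans hab) h hcd
        _ = (a ^ (4/3 : ℝ) * b ^ (4/3 : ℝ)) * (c ^ (4/3 : ℝ)) := by ring
        _ ≤ _ := le_add_right (mul_le_mul_right le_self_add _)

lemma young_half {H K : ℝ × ℝ → ENNReal} (Hm : Measurable H) (Km : Measurable K) (e : ℝ × ℝ) :
    ∫⁻ q : (ℝ × ℝ) × (ℝ × ℝ), (H q.1 + H q.2) * K (e - (q.1 + q.2)) =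
      2 * ((∫⁻ q, H q) * ∫⁻ q, K q) := by
  have t : ∀ c, ∫⁻ d, K (e - (c + d)) = ∫⁻ q, K q := fun c => by
    have : ∀ d, K (e - (c + d)) = K ((e - c) - d) := fun d => by congr 1; abel
    simp_rw [this]
    exact lintegral_sub_left_eq_self K (e - c)
  simp_rw [add_mul]
  rw [lintegral_add_left (by fun_prop), two_mul, Measure.volume_eq_prod]
  congr 1
  · rw [lintegral_prod _ (by fun_prop)]
    simp only
    have : ∀ c, ∫⁻ d, H c * K (e - (c + d)) = H c * ∫⁻ q, K q := fun c => by
      rw [lintegral_const_mul _ (by fun_prop), t]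
    simp_rw [this]
    rw [lintegral_mul_const _ Hm]
  · rw [lintegral_prod_symm _ (by fun_prop)]
    simp only
    have : ∀ c, ∫⁻ d, H c * K (e - (d + c)) = H c * ∫⁻ q, K q := fun c => by
      simp_rw [add_comm _ c]
      rw [lintegral_const_mul _ (by fun_prop), t]
    simp_rw [this]
    rw [lintegral_mul_const _ Hm]

lemma young4 {G K : ℝ × ℝ → ENNReal} (Gm : Measurable G) (Km : Measurable K) :
    ∫⁻ p : (ℝ × ℝ) × (ℝ × ℝ), ∫⁻ q : (ℝ × ℝ) × (ℝ × ℝ),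
      G p.1 * G p.2 * (G q.1 * G q.2 * K (p.1 + p.2 - (q.1 + q.2))) ≤
    4 * ((∫⁻ q, G q ^ (4/3 : ℝ)) ^ 3 * ∫⁻ q, K q) := by
  set H : ℝ × ℝ → ENNReal := fun q => G q ^ (4/3 : ℝ) with hH
  have Hm : Measurable H := by fun_prop
  have pw : ∀ p q : (ℝ × ℝ) × (ℝ × ℝ), 
      G p.1 * G p.2 * (G q.1 * G q.2 * K (p.1 + p.2 - (q.1 + q.2))) ≤
      (H p.1 * H p.2) * ((H q.1 + H q.2) * K (p.1 + p.2 - (q.1 + q.2))) +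
      (H q.1 * H q.2) * ((H p.1 + H p.2) * K (p.1 + p.2 - (q.1 + q.2))) := by
    intro p q
    calc _ = (G p.1 * G p.2 * (G q.1 * G q.2)) * K (p.1 + p.2 - (q.1 + q.2)) := by ring
      _ ≤ _ := mul_le_mul_left (quad_le _ _ _ _) _
      _ = _ := by simp only [hH]; ring
  have hp : ∫⁻ p : (ℝ × ℝ) × (ℝ × ℝ), H p.1 * H p.2 = (∫⁻ q, H q) ^ 2 := by
    rw [Measure.volume_eq_prod, lintegral_prod_mul Hm.aemeasurable Hm.aemeasurable, sq]
  have A : ∫⁻ p : (ℝ × ℝ) × (ℝ × ℝ), ∫⁻ q : (ℝ × ℝ) × (ℝ × ℝ),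
      (H p.1 * H p.2) * ((H q.1 + H q.2) * K (p.1 + p.2 - (q.1 + q.2))) = 
      2 * ((∫⁻ q, H q) ^ 3 * ∫⁻ q, K q) := by
    have : ∀ p : (ℝ × ℝ) × (ℝ × ℝ), ∫⁻ q : (ℝ × ℝ) × (ℝ × ℝ),
      (H p.1 * H p.2) * ((H q.1 + H q.2) * K (p.1 + p.2 - (q.1 + q.2))) =
      (H p.1 * H p.2) * (2 * ((∫⁻ q, H q) * ∫⁻ q, K q)) := fun p => by
        rw [lintegral_const_mul _ (by fun_prop), young_half Hm Km]
    simp_rw [this]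
    rw [lintegral_mul_const _ (by fun_prop), hp]; ring
  have B : ∫⁻ p : (ℝ × ℝ) × (ℝ × ℝ), ∫⁻ q : (ℝ × ℝ) × (ℝ × ℝ),
      (H q.1 * H q.2) * ((H p.1 + H p.2) * K (p.1 + p.2 - (q.1 + q.2))) = 
      2 * ((∫⁻ q, H q) ^ 3 * ∫⁻ q, K q) := by
    rw [lintegral_lintegral_swap (by fun_prop)]
    have : ∀ q : (ℝ × ℝ) × (ℝ × ℝ), ∫⁻ p : (ℝ × ℝ) × (ℝ × ℝ),
      (H q.1 * H q.2) * ((H p.1 + H p.2) * K (p.1 + p.2 - (q.1 + q.2))) =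
      (H q.1 * H q.2) * (2 * ((∫⁻ q, H q) * ∫⁻ q, K q)) := fun q => by
        rw [lintegral_const_mul _ (by fun_prop)]
        congr 1
        have e := young_half Hm (K := fun z => K (-z)) (by fun_prop) (q.1 + q.2)
        simp only [neg_sub] at e
        rw [e, lintegral_neg_eq_self K]
    simp_rw [this]
    rw [lintegral_mul_const _ (by fun_prop), hp]; ring
  refine (lintegral_mono fun p => lintegral_mono fun q => pw p q).trans (le_of_eq ?_)
  have : ∀ p : (ℝ × ℝ) × (ℝ × ℝ), ∫⁻ q : (ℝ × ℝ) × (ℝ × ℝ), 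
      ((H p.1 * H p.2) * ((H q.1 + H q.2) * K (p.1 + p.2 - (q.1 + q.2))) +
      (H q.1 * H q.2) * ((H p.1 + H p.2) * K (p.1 + p.2 - (q.1 + q.2)))) =
      (∫⁻ q : (ℝ × ℝ) × (ℝ × ℝ), (H p.1 * H p.2) * ((H q.1 + H q.2) * K (p.1 + p.2 - (q.1 + q.2)))) +
      ∫⁻ q : (ℝ × ℝ) × (ℝ × ℝ), (H q.1 * H q.2) * ((H p.1 + H p.2) * K (p.1 + p.2 - (q.1 + q.2))) :=
    fun p => lintegral_add_left (by fun_prop) _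
  simp_rw [this]
  rw [lintegral_add_left, A, B]
  · ring
  · refine Measurable.lintegral_prod_right' (f := fun r : ((ℝ × ℝ) × (ℝ × ℝ)) × ((ℝ × ℝ) × (ℝ × ℝ)) =>
      (H r.1.1 * H r.1.2) * ((H r.2.1 + H r.2.2) * K (r.1.1 + r.1.2 - (r.2.1 + r.2.2)))) ?_
    fun_prop

lemma dens2 {P G : ℝ × ℝ → ENNReal} (Pm : Measurable P) (Gm : Measurable G)
    (h : ∀ ψ : ℝ × ℝ → ENNReal, Measurable ψ → ∫⁻ x : ℝ × ℝ, P x * ψ (Phi x) ≤ 2 * ∫⁻ q, G q * ψ q)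
    {ψ : ℝ × ℝ → ENNReal} (ψm : Measurable ψ) :
    ∫⁻ p : (ℝ × ℝ) × (ℝ × ℝ), P p.1 * P p.2 * ψ (Phi p.1 + Phi p.2) ≤
      4 * ∫⁻ p : (ℝ × ℝ) × (ℝ × ℝ), G p.1 * G p.2 * ψ (p.1 + p.2) := by
  have Pc : Measurable Phi := Phi_cont.measurable
  rw [Measure.volume_eq_prod, lintegral_prod _ (by fun_prop), lintegral_prod _ (by fun_prop)]
  simp only [mul_assoc]
  have e1 : ∀ x, ∫⁻ y, P x * (P y * ψ (Phi x + Phi y)) ≤ P x * (2 * ∫⁻ y, G y * ψ (Phi x + y)) := by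
    intro x
    rw [lintegral_const_mul _ (by fun_prop)]
    exact mul_le_mul_right (h (fun y => ψ (Phi x + y)) (by fun_prop)) _
  refine (lintegral_mono e1).trans ?_
  have mm : Measurable fun x : ℝ × ℝ => ∫⁻ y, G y * ψ (x + y) := by
    refine Measurable.lintegral_prod_right' (f := fun r : ((ℝ × ℝ) × (ℝ × ℝ)) => G r.2 * ψ (r.1 + r.2)) ?_
    fun_prop
  refine (h (fun x => 2 * ∫⁻ y, G y * ψ (x + y)) (by fun_prop)).trans (le_of_eq ?_)
  have e2 : ∀ x, ∫⁻ y, G x * (G y * ψ (x + y)) = G x * ∫⁻ y, G y * ψ (x + y) := fun x =>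
    lintegral_const_mul _ (by fun_prop)
  simp_rw [e2, ← mul_assoc, mul_comm _ (2 : ENNReal), mul_assoc]
  rw [lintegral_const_mul _ (by fun_prop), ← mul_assoc]
  norm_num

/-- The extension operator of the cubic curve. -/
noncomputable def ext (f : ℝ → ℂ) (z : ℝ × ℝ) : ℂ := ∫ ξ, f ξ * ph z (ξ, ξ ^ 3)

lemma ext_sq (f : ℝ → ℂ) (z : ℝ × ℝ) :
    ext f z ^ 2 = ∫ x : ℝ × ℝ, (f x.1 * f x.2) * ph z (Phi x) := by
  rw [sq, ext, ← integral_prod_mul, ← Measure.volume_eq_prod]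
  congr 1; ext x
  have : Phi x = (x.1, x.1 ^ 3) + (x.2, x.2 ^ 3) := by simp [Phi]
  rw [this, ph_add]; ring

lemma ext_four (f : ℝ → ℂ) (z : ℝ × ℝ) :
    ext f z ^ 4 = ∫ p : (ℝ × ℝ) × (ℝ × ℝ), ((f p.1.1 * f p.1.2) * (f p.2.1 * f p.2.2)) *
      ph z (Phi p.1 + Phi p.2) := by
  rw [show ext f z ^ 4 = ext f z ^ 2 * ext f z ^ 2 by ring, ext_sq, ← integral_prod_mul,
    ← Measure.volume_eq_prod]
  congr 1; ext x
  rw [ph_add]; ring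

lemma ext_meas {f : ℝ → ℂ} (fm : Measurable f) : Measurable (ext f) := by
  have hphm : Measurable (fun q : (ℝ × ℝ) × (ℝ × ℝ) => ph q.1 q.2) := ph_cont.measurable
  have : StronglyMeasurable (fun r : (ℝ × ℝ) × ℝ => f r.2 * ph r.1 (r.2, r.2 ^ 3)) := by
    refine Measurable.stronglyMeasurable ?_
    exact (fm.comp measurable_snd).mul
      (hphm.comp (f := fun r : (ℝ × ℝ) × ℝ => (r.1, ((r.2, r.2 ^ 3) : ℝ × ℝ))) (by fun_prop))
  exact this.integral_prod_right'.measurable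

lemma conv8 {P G K : ℝ × ℝ → ENNReal} (Pm : Measurable P) (Gm : Measurable G) (Km : Measurable K)
    (hG : ∀ ψ : ℝ × ℝ → ENNReal, Measurable ψ → ∫⁻ x : ℝ × ℝ, P x * ψ (Phi x) ≤ 2 * ∫⁻ q, G q * ψ q) :
    ∫⁻ ω : ((ℝ × ℝ) × (ℝ × ℝ)) × ((ℝ × ℝ) × (ℝ × ℝ)),
      P ω.1.1 * P ω.1.2 * (P ω.2.1 * P ω.2.2) *
        K (Phi ω.1.1 + Phi ω.1.2 - (Phi ω.2.1 + Phi ω.2.2)) ∂(volume.prod volume) ≤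
      4 * (4 * (4 * ((∫⁻ q, G q ^ (4/3 : ℝ)) ^ 3 * ∫⁻ q, K q))) := by
  have Pc : Measurable Phi := Phi_cont.measurable
  have hm : Measurable fun ω : ((ℝ × ℝ) × (ℝ × ℝ)) × ((ℝ × ℝ) × (ℝ × ℝ)) =>
      P ω.1.1 * P ω.1.2 * (P ω.2.1 * P ω.2.2) *
        K (Phi ω.1.1 + Phi ω.1.2 - (Phi ω.2.1 + Phi ω.2.2)) := by
    have a1 : Measurable fun ω : ((ℝ × ℝ) × (ℝ × ℝ)) × ((ℝ × ℝ) × (ℝ × ℝ)) => ω.1.1 := by fun_prop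
    have a2 : Measurable fun ω : ((ℝ × ℝ) × (ℝ × ℝ)) × ((ℝ × ℝ) × (ℝ × ℝ)) => ω.1.2 := by fun_prop
    have a3 : Measurable fun ω : ((ℝ × ℝ) × (ℝ × ℝ)) × ((ℝ × ℝ) × (ℝ × ℝ)) => ω.2.1 := by fun_prop
    have a4 : Measurable fun ω : ((ℝ × ℝ) × (ℝ × ℝ)) × ((ℝ × ℝ) × (ℝ × ℝ)) => ω.2.2 := by fun_prop
    exact (((Pm.comp a1).mul (Pm.comp a2)).mul ((Pm.comp a3).mul (Pm.comp a4))).mul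
      (Km.comp (((Pc.comp a1).add (Pc.comp a2)).sub ((Pc.comp a3).add (Pc.comp a4))))
  rw [lintegral_prod _ hm.aemeasurable]
  have e1 : ∀ p : (ℝ × ℝ) × (ℝ × ℝ), ∫⁻ q : (ℝ × ℝ) × (ℝ × ℝ),
      P p.1 * P p.2 * (P q.1 * P q.2) * K (Phi p.1 + Phi p.2 - (Phi q.1 + Phi q.2)) ≤
      P p.1 * P p.2 * (4 * ∫⁻ q : (ℝ × ℝ) × (ℝ × ℝ), G q.1 * G q.2 * K (Phi p.1 + Phi p.2 - (q.1 + q.2))) := by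
    intro p
    simp_rw [mul_assoc (P p.1 * P p.2)]
    rw [lintegral_const_mul _ (by fun_prop)]
    exact mul_le_mul_right (dens2 Pm Gm hG (ψ := fun e => K (Phi p.1 + Phi p.2 - e)) (by fun_prop)) _
  refine (lintegral_mono e1).trans ?_
  have mm : Measurable fun x : ℝ × ℝ => ∫⁻ q : (ℝ × ℝ) × (ℝ × ℝ), G q.1 * G q.2 * K (x - (q.1 + q.2)) := by
    refine Measurable.lintegral_prod_right' (f := fun r : (ℝ × ℝ) × ((ℝ × ℝ) × (ℝ × ℝ)) =>
      G r.2.1 * G r.2.2 * K (r.1 - (r.2.1 + r.2.2))) ?_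
    fun_prop
  refine (dens2 Pm Gm hG (ψ := fun e => 4 * ∫⁻ q : (ℝ × ℝ) × (ℝ × ℝ), G q.1 * G q.2 * K (e - (q.1 + q.2)))
    (by fun_prop)).trans ?_
  have e2 : ∀ p : (ℝ × ℝ) × (ℝ × ℝ), G p.1 * G p.2 * (4 * ∫⁻ q : (ℝ × ℝ) × (ℝ × ℝ), G q.1 * G q.2 * K (p.1 + p.2 - (q.1 + q.2))) =
      4 * ∫⁻ q : (ℝ × ℝ) × (ℝ × ℝ), G p.1 * G p.2 * (G q.1 * G q.2 * K (p.1 + p.2 - (q.1 + q.2))) := by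
    intro p
    rw [lintegral_const_mul (G p.1 * G p.2) (by fun_prop)]; ring
  simp_rw [e2]
  rw [lintegral_const_mul' _ _ (by norm_num)]
  exact mul_le_mul_right (mul_le_mul_right (young4 Gm Km) _) _

lemma ext_weighted {f : ℝ → ℂ} (fm : Measurable f) (fi : Integrable f) {N : ℝ} (hN : 0 < N)
    (fint : ∫⁻ y, ‖f y‖ₑ ^ 2 ≤ ENNReal.ofReal N) {ε : ℝ} (hε : 0 < ε) :
    ∫⁻ z, ‖ext f z‖ₑ ^ 8 * ENNReal.ofReal (gw ε z) ≤
      ENNReal.ofReal (64 * 36 ^ 3 * (2 * Real.pi) ^ 2 * N ^ 4) := by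
  have Pc : Measurable Phi := Phi_cont.measurable
  set fr : ℝ → ℝ := fun x => ‖f x‖ with hfr
  have frm : Measurable fr := fm.norm
  have fr0 : ∀ y, 0 ≤ fr y := fun y => norm_nonneg _
  have frint : ∫⁻ y, ENNReal.ofReal (fr y ^ 2) ≤ ENNReal.ofReal N := by
    refine le_trans (le_of_eq ?_) fint
    congr 1; ext y
    rw [ENNReal.ofReal_pow (fr0 y), ofReal_norm]
  obtain ⟨G, Gm, hG, hGi⟩ := density frm fr0
  have hGi2 := hGi.trans (dbl frm fr0 hN frint)
  set P : ℝ × ℝ → ENNReal := fun x => ENNReal.ofReal (fr x.1 * fr x.2) with hP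
  have Pm : Measurable P := by fun_prop
  set K : ℝ × ℝ → ENNReal := fun z => ENNReal.ofReal (gk ε z) with hK
  have Km : Measurable K := (gk_meas ε).ennreal_ofReal
  have hi : Integrable (fun p : (ℝ × ℝ) × (ℝ × ℝ) => (f p.1.1 * f p.1.2) * (f p.2.1 * f p.2.2)) :=
    (fi.mul_prod fi).mul_prod (fi.mul_prod fi)
  have h1 := l2bound volume hi (Φ := fun p => Phi p.1 + Phi p.2) (by fun_prop) hε
  simp_rw [← ext_four, enorm_pow, ← pow_mul] at h1
  refine h1.trans ?_
  have hen : ∀ x : ℝ × ℝ, ‖f x.1 * f x.2‖ₑ = P x := fun x => by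
    rw [hP, ← ofReal_norm, norm_mul]
  simp_rw [enorm_mul (_ * _) (_ * _), hen]
  refine (conv8 Pm Gm Km hG).trans ?_
  rw [gk_lintegral hε]
  refine (mul_le_mul_right (mul_le_mul_right (mul_le_mul_right (mul_le_mul_left (pow_le_pow_left' hGi2 3) _) _) _) _).trans (le_of_eq ?_)
  rw [← ENNReal.ofReal_pow (by positivity), show (4 : ENNReal) = ENNReal.ofReal 4 by norm_num,
    ← ENNReal.ofReal_mul (by positivity), ← ENNReal.ofReal_mul (by positivity),
    ← ENNReal.ofReal_mul (by positivity), ← ENNReal.ofReal_mul (by positivity)]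
  congr 1
  have : (N ^ (4/3 : ℝ)) ^ 3 = N ^ 4 := by
    rw [← Real.rpow_natCast, ← Real.rpow_mul hN.le, ← Real.rpow_natCast]; norm_num
  rw [mul_pow, this]; ring

lemma ext_bound {f : ℝ → ℂ} (fm : Measurable f) (fi : Integrable f) {N : ℝ} (hN : 0 < N)
    (fint : ∫⁻ y, ‖f y‖ₑ ^ 2 ≤ ENNReal.ofReal N) :
    ∫⁻ z, ‖ext f z‖ₑ ^ 8 ≤ ENNReal.ofReal (64 * 36 ^ 3 * (2 * Real.pi) ^ 2 * N ^ 4) := by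
  have hlim : ∀ z, Filter.liminf (fun n : ℕ => ‖ext f z‖ₑ ^ 8 * ENNReal.ofReal (gw (1 / ((n : ℝ) + 1)) z))
      Filter.atTop = ‖ext f z‖ₑ ^ 8 := by
    intro z
    refine Filter.Tendsto.liminf_eq ?_
    have h1 : Filter.Tendsto (fun n : ℕ => gw (1 / ((n : ℝ) + 1)) z) Filter.atTop (nhds (gw 0 z)) := by
      have hc : Continuous fun ε => gw ε z := by unfold gw; fun_prop
      exact (hc.tendsto 0).comp tendsto_one_div_add_atTop_nhds_zero_nat
    have h2 : gw 0 z = 1 := by simp [gw]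
    rw [h2] at h1
    have h3 := ENNReal.tendsto_ofReal h1
    have h4 := ENNReal.Tendsto.const_mul (a := ‖ext f z‖ₑ ^ 8) h3 (Or.inl (by simp))
    simpa using h4
  have em := ext_meas fm
  have gm : ∀ ε, Measurable (gw ε) := fun ε => by unfold gw; fun_prop
  have F := lintegral_liminf_le (μ := volume) (u := Filter.atTop) (f := fun (n : ℕ) z => ‖ext f z‖ₑ ^ 8 * ENNReal.ofReal (gw (1 / ((n : ℝ) + 1)) z))
    (fun n => (em.enorm.pow_const 8).mul (gm _).ennreal_ofReal)
  simp_rw [hlim] at F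
  refine F.trans ?_
  refine Filter.liminf_le_of_frequently_le' (Filter.Frequently.of_forall fun n => ?_)
  exact ext_weighted fm fi hN fint (by positivity)

lemma ext_bound' {f : ℝ → ℂ} (fm : Measurable f) (fi : Integrable f) :
    ∫⁻ z, ‖ext f z‖ₑ ^ 8 ≤ ENNReal.ofReal (64 * 36 ^ 3 * (2 * Real.pi) ^ 2) * (∫⁻ y, ‖f y‖ₑ ^ 2) ^ 4 := by
  by_cases h0 : ∫⁻ y, ‖f y‖ₑ ^ 2 = 0
  · have : f =ᵐ[volume] 0 := by
      rw [lintegral_eq_zero_iff (by fun_prop)] at h0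
      filter_upwards [h0] with x hx
      simpa using hx
    have h1 : ∀ z, ext f z = 0 := fun z => by
      unfold ext
      rw [integral_eq_zero_of_ae]
      filter_upwards [this] with x hx
      simp [hx]
    simp [h1]
  by_cases ht : ∫⁻ y, ‖f y‖ₑ ^ 2 = ⊤
  · rw [ht, ENNReal.top_pow (by norm_num), ENNReal.mul_top]
    · exact le_top
    · simp
  · have := ext_bound fm fi (ENNReal.toReal_pos h0 ht) (by rw [ENNReal.ofReal_toReal ht])
    rwa [ENNReal.ofReal_mul (by positivity), ENNReal.ofReal_pow (by positivity), ENNReal.ofReal_toReal ht] at this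

/-- The shear straightening the cubic. -/
def shear (p : ℝ × ℝ) : ℝ × ℝ := (p.1, p.1 ^ 3 + p.2)

lemma shear_mp : MeasurePreserving shear (volume : Measure (ℝ × ℝ)) volume := by
  have := MeasurePreserving.skew_product (μa := (volume : Measure ℝ)) (μc := (volume : Measure ℝ))
    (μd := (volume : Measure ℝ)) (MeasurePreserving.id volume) (g := fun x y => x ^ 3 + y)
    (by unfold Function.uncurry; fun_prop)
    (Filter.Eventually.of_forall fun a => map_add_left_eq_self volume (a ^ 3))
  exact this

/-- The shear as a measurable equivalence. -/
def shearE : (ℝ × ℝ) ≃ᵐ (ℝ × ℝ) where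
  toFun := shear
  invFun p := (p.1, p.2 - p.1 ^ 3)
  left_inv p := by simp [shear]
  right_inv p := by simp [shear]
  measurable_toFun := by unfold shear; simp only [Equiv.coe_fn_mk]; fun_prop
  measurable_invFun := by simp only [Equiv.coe_fn_symm_mk]; fun_prop

lemma shear_lint (F : ℝ × ℝ → ENNReal) : ∫⁻ p, F (shear p) = ∫⁻ p, F p :=
  shear_mp.lintegral_comp_emb shearE.measurableEmbedding F

/-- Slices of the transform. -/
noncomputable def slice (W : SchwartzMap (ℝ × ℝ) ℂ) (l : ℝ) (x : ℝ) : ℂ := W (shear (x, l))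

lemma sl_meas (W : SchwartzMap (ℝ × ℝ) ℂ) : Measurable fun r : ℝ × ℝ => slice W r.1 r.2 := by
  unfold slice shear
  exact (W.continuous.comp (by fun_prop)).measurable

lemma sl_meas' (W : SchwartzMap (ℝ × ℝ) ℂ) (l : ℝ) : Measurable (slice W l) :=
  (sl_meas W).comp (by fun_prop : Measurable fun x : ℝ => (l, x))

lemma W_shear_int (W : SchwartzMap (ℝ × ℝ) ℂ) : Integrable (fun p => W (shear p)) :=
  (shear_mp.integrable_comp_emb shearE.measurableEmbedding).2 W.integrable

lemma sl_int (W : SchwartzMap (ℝ × ℝ) ℂ) : ∀ᵐ l, Integrable (slice W l) := by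
  have := W_shear_int W
  rw [Measure.volume_eq_prod] at this
  exact this.prod_left_ae

lemma pt_bound (W : SchwartzMap (ℝ × ℝ) ℂ) (z : ℝ × ℝ) :
    ‖∫ p, ph z p * W p‖ₑ ≤ ∫⁻ l, ‖ext (slice W l) z‖ₑ := by
  have hphc : Continuous (fun p : ℝ × ℝ => ph z p) :=
    ph_cont.comp (by fun_prop : Continuous fun p : ℝ × ℝ => (z, p))
  have e1 : ∫ p, ph z p * W p = ∫ p, ph z (shear p) * W (shear p) :=
    (shear_mp.integral_comp shearE.measurableEmbedding (fun p => ph z p * W p)).symm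
  have hi : Integrable (fun p => ph z p * W p) :=
    W.integrable.bdd_mul hphc.aestronglyMeasurable (c := 1)
      (Filter.Eventually.of_forall fun p => (ph_norm z p).le)
  have hi2 : Integrable (fun p => ph z (shear p) * W (shear p)) :=
    (shear_mp.integrable_comp_emb shearE.measurableEmbedding).2 hi
  have e2 : ∫ p, ph z (shear p) * W (shear p) =
      ∫ l, ph z (0, l) * ext (slice W l) z := by
    rw [Measure.volume_eq_prod] at hi2 ⊢
    rw [integral_prod_symm _ hi2]
    congr 1; ext l
    unfold ext
    rw [← integral_const_mul]
    congr 1; ext x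
    have : shear (x, l) = (0, l) + (x, x ^ 3) := by simp [shear, add_comm]
    rw [slice, this, ph_add]; ring
  rw [e1, e2]
  refine (enorm_integral_le_lintegral_enorm _).trans (le_of_eq ?_)
  congr 1; ext l
  rw [enorm_mul, ← ofReal_norm (ph z _), ph_norm]; simp

lemma ext_sl_meas (W : SchwartzMap (ℝ × ℝ) ℂ) :
    Measurable fun r : (ℝ × ℝ) × ℝ => ext (slice W r.2) r.1 := by
  have hphm : Measurable (fun q : (ℝ × ℝ) × (ℝ × ℝ) => ph q.1 q.2) := ph_cont.measurable
  have : StronglyMeasurable (fun r : ((ℝ × ℝ) × ℝ) × ℝ =>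
      slice W r.1.2 r.2 * ph r.1.1 (r.2, r.2 ^ 3)) := by
    refine Measurable.stronglyMeasurable ?_
    exact ((sl_meas W).comp (f := fun r : ((ℝ × ℝ) × ℝ) × ℝ => (r.1.2, r.2)) (by fun_prop)).mul
      (hphm.comp (f := fun r : ((ℝ × ℝ) × ℝ) × ℝ => (r.1.1, ((r.2, r.2 ^ 3) : ℝ × ℝ))) (by fun_prop))
  exact this.integral_prod_right'.measurable

lemma cs_step (W : SchwartzMap (ℝ × ℝ) ℂ) (b : ℝ) :
    ∫⁻ l, (∫⁻ x, ‖slice W l x‖ₑ ^ 2) ^ (1/2 : ℝ) ≤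
      (∫⁻ l : ℝ, ENNReal.ofReal ((1 + ‖l‖) ^ (-(2 * b)))) ^ (1/2 : ℝ) *
      (∫⁻ p : ℝ × ℝ, ENNReal.ofReal ((1 + |p.2 - p.1 ^ 3|) ^ (2 * b) * ‖W p‖ ^ 2)) ^ (1/2 : ℝ) := by
  have sm := sl_meas W
  have am : Measurable fun l => ∫⁻ x, ‖slice W l x‖ₑ ^ 2 :=
    Measurable.lintegral_prod_right' (f := fun r : ℝ × ℝ => ‖slice W r.1 r.2‖ₑ ^ 2) (by fun_prop)
  have e1 : ∫⁻ p : ℝ × ℝ, ENNReal.ofReal ((1 + |p.2 - p.1 ^ 3|) ^ (2 * b) * ‖W p‖ ^ 2) =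
      ∫⁻ l : ℝ, ENNReal.ofReal ((1 + ‖l‖) ^ (2 * b)) * ∫⁻ x, ‖slice W l x‖ₑ ^ 2 := by
    rw [← shear_lint, Measure.volume_eq_prod, lintegral_prod_symm]
    · congr 1; ext l
      rw [← lintegral_const_mul]
      · congr 1; ext x
        rw [ENNReal.ofReal_mul (by positivity), ENNReal.ofReal_pow (norm_nonneg _), ofReal_norm]
        simp [slice, shear]
      · have := sl_meas' W l
        fun_prop
    · refine Measurable.aemeasurable ?_
      have h1 : Measurable fun p => ‖W (shear p)‖ := by
        have := W.continuous.measurable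
        exact (this.comp shear_mp.measurable).norm
      have h2 := shear_mp.measurable
      fun_prop
  have H := ENNReal.lintegral_mul_le_Lp_mul_Lq (volume : Measure ℝ) Real.HolderConjugate.two_two
    (f := fun l => ENNReal.ofReal ((1 + ‖l‖) ^ (-b)))
    (g := fun l => ENNReal.ofReal ((1 + ‖l‖) ^ b) * (∫⁻ x, ‖slice W l x‖ₑ ^ 2) ^ (1/2 : ℝ))
    (by fun_prop) (by fun_prop)
  have p1 : ∀ l : ℝ, 0 < 1 + ‖l‖ := fun l => by positivity
  have e2 : ∀ l : ℝ, ENNReal.ofReal ((1 + ‖l‖) ^ (-b)) ^ (2 : ℝ) =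
      ENNReal.ofReal ((1 + ‖l‖) ^ (-(2 * b))) := fun l => by
    rw [ENNReal.ofReal_rpow_of_nonneg (Real.rpow_nonneg (p1 l).le _) (by norm_num),
      ← Real.rpow_mul (p1 l).le]; ring_nf
  have e3 : ∀ l : ℝ, (ENNReal.ofReal ((1 + ‖l‖) ^ b) * (∫⁻ x, ‖slice W l x‖ₑ ^ 2) ^ (1/2 : ℝ)) ^ (2 : ℝ) =
      ENNReal.ofReal ((1 + ‖l‖) ^ (2 * b)) * ∫⁻ x, ‖slice W l x‖ₑ ^ 2 := fun l => by
    rw [ENNReal.mul_rpow_of_nonneg _ _ (by norm_num),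
      ENNReal.ofReal_rpow_of_nonneg (Real.rpow_nonneg (p1 l).le _) (by norm_num),
      ← Real.rpow_mul (p1 l).le, ← ENNReal.rpow_mul, mul_comm b 2]; norm_num
  have e4 : ∀ l : ℝ, ENNReal.ofReal ((1 + ‖l‖) ^ (-b)) *
      (ENNReal.ofReal ((1 + ‖l‖) ^ b) * (∫⁻ x, ‖slice W l x‖ₑ ^ 2) ^ (1/2 : ℝ)) =
      (∫⁻ x, ‖slice W l x‖ₑ ^ 2) ^ (1/2 : ℝ) := fun l => by
    rw [← mul_assoc, ← ENNReal.ofReal_mul (Real.rpow_nonneg (p1 l).le _), ← Real.rpow_add (p1 l)]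
    simp
  simp_rw [Pi.mul_apply, e2, e3, e4] at H
  rw [e1]
  exact H

lemma dual_step (u W : SchwartzMap (ℝ × ℝ) ℂ) (c : ENNReal)
    (h : ∀ z, ‖u z‖ₑ ≤ c * ∫⁻ l, ‖ext (slice W l) z‖ₑ) :
    (∫⁻ z, ‖u z‖ₑ ^ 8) ^ (1/8 : ℝ) ≤
      c * (ENNReal.ofReal (64 * 36 ^ 3 * (2 * Real.pi) ^ 2) ^ (1/8 : ℝ) *
        ∫⁻ l, (∫⁻ x, ‖slice W l x‖ₑ ^ 2) ^ (1/2 : ℝ)) := by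
  have em := ext_sl_meas W
  have um : Measurable u := u.continuous.measurable
  set A := ∫⁻ z, ‖u z‖ₑ ^ 8 with hA
  set D := ENNReal.ofReal (64 * 36 ^ 3 * (2 * Real.pi) ^ 2) with hD
  set S := ∫⁻ l, (∫⁻ x, ‖slice W l x‖ₑ ^ 2) ^ (1/2 : ℝ) with hS
  have Afin : A ≠ ⊤ := by
    have := (u.memLp 8 volume).eLpNorm_lt_top
    rw [eLpNorm_eq_lintegral_rpow_enorm_toReal (by norm_num) (by norm_num)] at this
    have h8 : (8 : ENNReal).toReal = ((8 : ℕ) : ℝ) := by norm_num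
    simp_rw [h8, ENNReal.rpow_natCast] at this
    intro ht
    rw [← hA, ht, ENNReal.top_rpow_of_pos (by norm_num)] at this
    exact lt_irrefl _ this
  have hol : ∀ᵐ l, ∫⁻ z, ‖u z‖ₑ ^ 7 * ‖ext (slice W l) z‖ₑ ≤
      A ^ (7/8 : ℝ) * (D ^ (1/8 : ℝ) * (∫⁻ x, ‖slice W l x‖ₑ ^ 2) ^ (1/2 : ℝ)) := by
    filter_upwards [sl_int W] with l hl
    have eb := ext_bound' (sl_meas' W l) hl
    rw [← hD] at eb
    have em' := ext_meas (sl_meas' W l)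
    have hc : (8/7 : ℝ).HolderConjugate 8 := by
      rw [Real.holderConjugate_iff]; norm_num
    have H := ENNReal.lintegral_mul_le_Lp_mul_Lq (volume : Measure (ℝ × ℝ)) hc
      (f := fun z => ‖u z‖ₑ ^ 7) (g := fun z => ‖ext (slice W l) z‖ₑ) (by fun_prop) (by fun_prop)
    have e1 : ∀ x : ENNReal, (x ^ 7) ^ (8/7 : ℝ) = x ^ 8 := fun x => by
      rw [← ENNReal.rpow_natCast, ← ENNReal.rpow_mul, ← ENNReal.rpow_natCast]; norm_num
    have e2 : ∀ x : ENNReal, x ^ (8 : ℝ) = x ^ 8 := fun x => by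
      rw [← ENNReal.rpow_natCast]; norm_num
    simp_rw [Pi.mul_apply, e1, e2] at H
    rw [show (1 / (8/7) : ℝ) = 7/8 by norm_num] at H
    refine H.trans ?_
    refine mul_le_mul_right ?_ _
    refine (ENNReal.rpow_le_rpow eb (by norm_num)).trans (le_of_eq ?_)
    rw [ENNReal.mul_rpow_of_nonneg _ _ (by norm_num), ← ENNReal.rpow_natCast, ← ENNReal.rpow_mul]
    norm_num
  have main : A ≤ A ^ (7/8 : ℝ) * (c * (D ^ (1/8 : ℝ) * S)) := by
    have m1 : Measurable fun z => ∫⁻ l, ‖ext (slice W l) z‖ₑ :=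
      Measurable.lintegral_prod_right' (f := fun r : (ℝ × ℝ) × ℝ => ‖ext (slice W r.2) r.1‖ₑ) em.enorm
    have sm := sl_meas W
    have am : Measurable fun l => ∫⁻ x, ‖slice W l x‖ₑ ^ 2 :=
      Measurable.lintegral_prod_right' (f := fun r : ℝ × ℝ => ‖slice W r.1 r.2‖ₑ ^ 2) (by fun_prop)
    calc A = ∫⁻ z, ‖u z‖ₑ ^ 7 * ‖u z‖ₑ := by simp_rw [hA, ← pow_succ]
      _ ≤ ∫⁻ z, ‖u z‖ₑ ^ 7 * (c * ∫⁻ l, ‖ext (slice W l) z‖ₑ) :=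
        lintegral_mono fun z => mul_le_mul_right (h z) _
      _ = ∫⁻ z, c * ∫⁻ l, ‖u z‖ₑ ^ 7 * ‖ext (slice W l) z‖ₑ := by
        congr 1; ext z
        rw [lintegral_const_mul' _ _ (by simp)]; ring
      _ = c * ∫⁻ z, ∫⁻ l, ‖u z‖ₑ ^ 7 * ‖ext (slice W l) z‖ₑ := by
        rw [lintegral_const_mul]
        refine Measurable.lintegral_prod_right' (f := fun r : (ℝ × ℝ) × ℝ => ‖u r.1‖ₑ ^ 7 * ‖ext (slice W r.2) r.1‖ₑ) ?_
        exact ((um.comp measurable_fst).enorm.pow_const 7).mul em.enorm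
      _ = c * ∫⁻ l, ∫⁻ z, ‖u z‖ₑ ^ 7 * ‖ext (slice W l) z‖ₑ := by
        rw [lintegral_lintegral_swap]
        exact (((um.comp measurable_fst).enorm.pow_const 7).mul em.enorm).aemeasurable
      _ ≤ c * ∫⁻ l, A ^ (7/8 : ℝ) * (D ^ (1/8 : ℝ) * (∫⁻ x, ‖slice W l x‖ₑ ^ 2) ^ (1/2 : ℝ)) :=
        mul_le_mul_right (lintegral_mono_ae hol) _
      _ = A ^ (7/8 : ℝ) * (c * (D ^ (1/8 : ℝ) * S)) := by
        rw [lintegral_const_mul _ (by fun_prop), lintegral_const_mul _ (by fun_prop)]; ring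
  by_cases A0 : A = 0
  · rw [A0, ENNReal.zero_rpow_of_pos (by norm_num)]; exact zero_le
  have hA7 : A ^ (7/8 : ℝ) ≠ 0 := by simp [A0, Afin]
  have hA7t : A ^ (7/8 : ℝ) ≠ ⊤ := by simp [A0, Afin]
  rw [← ENNReal.mul_le_mul_iff_right hA7 hA7t]
  refine le_trans (le_of_eq ?_) main
  rw [← ENNReal.rpow_add _ _ A0 Afin]; norm_num

lemma W_weight_int (W : SchwartzMap (ℝ × ℝ) ℂ) {b : ℝ} (hb : 0 ≤ b) :
    Integrable fun p : ℝ × ℝ => (1 + |p.2 - p.1 ^ 3|) ^ (2 * b) * ‖W p‖ ^ 2 := by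
  obtain ⟨n, hn⟩ := exists_nat_ge (2 * b)
  have hw : ∀ p : ℝ × ℝ, (1 + |p.2 - p.1 ^ 3|) ^ (2 * b) ≤ (1 + ‖p‖) ^ (3 * n) := by
    intro p
    have h1 : 1 + |p.2 - p.1 ^ 3| ≤ (1 + ‖p‖) ^ 3 := by
      have a1 : |p.1| ≤ ‖p‖ := norm_fst_le p
      have a2 : |p.2| ≤ ‖p‖ := norm_snd_le p
      have a3 : |p.2 - p.1 ^ 3| ≤ |p.2| + |p.1| ^ 3 := by
        rw [← abs_pow]; exact abs_sub _ _
      have a4 : |p.1| ^ 3 ≤ ‖p‖ ^ 3 := pow_le_pow_left₀ (abs_nonneg _) a1 3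
      nlinarith [norm_nonneg p, sq_nonneg ‖p‖]
    calc (1 + |p.2 - p.1 ^ 3|) ^ (2 * b) ≤ (1 + |p.2 - p.1 ^ 3|) ^ (n : ℝ) :=
        Real.rpow_le_rpow_of_exponent_le (by linarith [abs_nonneg (p.2 - p.1 ^ 3)]) hn
      _ = (1 + |p.2 - p.1 ^ 3|) ^ n := Real.rpow_natCast _ _
      _ ≤ ((1 + ‖p‖) ^ 3) ^ n := pow_le_pow_left₀ (by positivity) h1 n
      _ = _ := by rw [pow_mul]
  have hb' := fun p => SchwartzMap.one_add_le_sup_seminorm_apply (𝕜 := ℝ) (m := (3 * n, 0)) (k := 3 * n) (n := 0)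
    le_rfl le_rfl W p
  simp_rw [norm_iteratedFDeriv_zero] at hb'
  set M := 2 ^ (3 * n, 0).1 * ((Finset.Iic (3 * n, 0)).sup fun m => SchwartzMap.seminorm ℝ m.1 m.2) W with hM
  refine (W.integrable.norm.const_mul M).mono' ?_ (Filter.Eventually.of_forall fun p => ?_)
  · have := W.continuous
    refine Measurable.aestronglyMeasurable ?_
    have h1 := this.measurable
    fun_prop
  · rw [Real.norm_of_nonneg (by positivity)]
    calc _ ≤ (1 + ‖p‖) ^ (3 * n) * ‖W p‖ ^ 2 := by gcongr; exact hw p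
      _ = ((1 + ‖p‖) ^ (3 * n) * ‖W p‖) * ‖W p‖ := by ring
      _ ≤ _ := by gcongr; exact hb' p

end Airy8

/-- Strichartz-type estimate for the Airy Bourgain norm, case `p = 8`:
`‖u‖_{L⁸(ℝ²)} ≤ C ‖u‖_{X^{0,b}}` for `b > 1/2`. -/
theorem strichartz_L8 (b : ℝ) (hb : 1 / 2 < b) :
    ∃ C > 0, ∀ u : SchwartzMap (ℝ × ℝ) ℂ,
      eLpNorm (fun p : ℝ × ℝ => u p) 8 volume ≤
        ENNReal.ofReal (C *
          (∫ p : ℝ × ℝ, (1 + |p.2 - p.1 ^ 3|) ^ (2 * b) *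
            ‖∫ q : ℝ × ℝ, Complex.exp (-Complex.I * (q.1 * p.1 + q.2 * p.2)) * u q‖ ^ 2) ^
          ((1 : ℝ) / 2)) := by
  have hIn : Integrable (fun l : ℝ => (1 + ‖l‖) ^ (-(2 * b))) :=
    integrable_one_add_norm (by simp; linarith)
  set J := ∫ l : ℝ, (1 + ‖l‖) ^ (-(2 * b)) with hJ
  have J0 : 0 ≤ J := integral_nonneg fun l => by positivity
  set c : ℝ := ((2 * Real.pi) ^ 2)⁻¹ with hc
  have c0 : 0 ≤ c := by positivity
  set D : ℝ := 64 * 36 ^ 3 * (2 * Real.pi) ^ 2 with hD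
  have D0 : 0 ≤ D := by positivity
  refine ⟨c * (D ^ (1/8 : ℝ) * J ^ (1/2 : ℝ)) + 1, by positivity, fun u => ?_⟩
  obtain ⟨W, hW, hu⟩ := Airy8.schwartz_fourier u
  simp_rw [← hW]
  have hi := Airy8.W_weight_int W (b := b) (by linarith)
  set B := ∫ p : ℝ × ℝ, (1 + |p.2 - p.1 ^ 3|) ^ (2 * b) * ‖W p‖ ^ 2 with hB
  have B0 : 0 ≤ B := integral_nonneg fun l => by positivity
  have hpt : ∀ z, ‖u z‖ₑ ≤ ENNReal.ofReal c * ∫⁻ l, ‖Airy8.ext (Airy8.slice W l) z‖ₑ := by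
    intro z
    rw [hu z, enorm_smul]
    refine mul_le_mul' (le_of_eq ?_) (Airy8.pt_bound W z)
    rw [← ofReal_norm, Real.norm_of_nonneg c0]
  have h1 := Airy8.dual_step u W _ hpt
  have h2 := Airy8.cs_step W b
  rw [← ofReal_integral_eq_lintegral_ofReal hIn (Filter.Eventually.of_forall fun l => by positivity),
    ← ofReal_integral_eq_lintegral_ofReal hi (Filter.Eventually.of_forall fun l => by positivity),
    ENNReal.ofReal_rpow_of_nonneg J0 (by norm_num), ENNReal.ofReal_rpow_of_nonneg B0 (by norm_num)] at h2
  rw [ENNReal.ofReal_rpow_of_nonneg D0 (by norm_num)] at h1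
  have h8 : (8 : ENNReal).toReal = ((8 : ℕ) : ℝ) := by norm_num
  rw [eLpNorm_eq_lintegral_rpow_enorm_toReal (by norm_num) (by norm_num)]
  simp_rw [h8, ENNReal.rpow_natCast]
  push_cast
  refine h1.trans ?_
  refine (mul_le_mul_right (mul_le_mul_right h2 _) _).trans ?_
  rw [← ENNReal.ofReal_mul (by positivity), ← ENNReal.ofReal_mul (by positivity),
    ← ENNReal.ofReal_mul (by positivity)]
  refine ENNReal.ofReal_le_ofReal ?_
  have : 0 ≤ B ^ (1/2 : ℝ) := by positivity
  nlinarith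
end

section
/- For every b > 1/2 there exists a constant C > 0 such that for every Schwartz function u : ℝ² → ℂ one has ‖u‖_{L^6(ℝ²)} ≤ C · ( ∫_{ℝ²} (1+|τ−ξ³|)^{2b} |û(ξ,τ)|² dξ dτ )^{1/2}. -/
open MeasureTheory

namespace Airy

noncomputable def phi (x : ℝ) : ℝ := (|x| ^ (3/4 : ℝ) * max 1 |x| ^ (1/2 : ℝ))⁻¹

noncomputable def Phi (x : ℝ) : ENNReal := ENNReal.ofReal (phi x)

lemma measurable_phi : Measurable phi := by unfold phi; fun_prop

lemma measurable_Phi : Measurable Phi := measurable_phi.ennreal_ofReal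

lemma phi_nonneg (x : ℝ) : 0 ≤ phi x := by unfold phi; positivity

lemma phi_neg (x : ℝ) : phi (-x) = phi x := by simp [phi]

lemma Phi_lt_top_pos : ∫⁻ x in Set.Ioi (0:ℝ), Phi x < ⊤ := by
  have h1 : IntegrableOn phi (Set.Ioc 0 1) := by
    have := (intervalIntegral.intervalIntegrable_rpow' (a := 0) (b := 1) (r := -(3/4:ℝ)) (by norm_num))
    rw [intervalIntegrable_iff_integrableOn_Ioc_of_le zero_le_one] at this
    refine this.congr_fun (fun x hx => ?_) measurableSet_Ioc
    simp only [phi]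
    rw [abs_of_pos hx.1, max_eq_left hx.2, Real.rpow_neg hx.1.le]; simp
  have h2 : IntegrableOn phi (Set.Ioi 1) := by
    refine (integrableOn_Ioi_rpow_of_lt (a := -(5/4:ℝ)) (c := 1) (by norm_num) one_pos).congr_fun
      (fun x hx => ?_) measurableSet_Ioi
    have hx1 : (1:ℝ) < x := hx
    have hx0 : 0 < x := by linarith
    simp only [phi]
    rw [abs_of_pos hx0, max_eq_right hx1.le, Real.rpow_neg hx0.le, ← Real.rpow_add hx0]; norm_num
  have h3 : IntegrableOn phi (Set.Ioi 0) := by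
    rw [← Set.Ioc_union_Ioi_eq_Ioi zero_le_one]; exact h1.union h2
  have := h3.2
  rw [hasFiniteIntegral_iff_ofReal (ae_of_all _ phi_nonneg)] at this
  exact this

lemma lint_abs_le (F : ℝ → ENNReal) (hF : Measurable F) :
    ∫⁻ x, F |x| ≤ 2 * ∫⁻ x, F x := by
  calc ∫⁻ x, F |x| ≤ ∫⁻ x, (F x + F (-x)) := by
        refine lintegral_mono fun x => ?_
        rcases abs_choice x with h | h <;> rw [h]
        · exact le_self_add
        · exact le_add_self
    _ = 2 * ∫⁻ x, F x := by
        rw [lintegral_add_left hF, lintegral_neg_eq_self F, two_mul]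

noncomputable def B0 : ENNReal := ∫⁻ x, Phi x

lemma B0_lt_top : B0 < ⊤ := by
  have : B0 ≤ 2 * ∫⁻ x in Set.Ioi (0:ℝ), Phi x := by
    rw [← lintegral_indicator measurableSet_Ioi]
    refine le_trans (le_of_eq ?_) (lint_abs_le _ (measurable_Phi.indicator measurableSet_Ioi))
    refine lintegral_congr_ae ?_
    have : ∀ᵐ x : ℝ, x ≠ 0 := by simp [ae_iff]
    filter_upwards [this] with x hx
    have : |x| ∈ Set.Ioi (0:ℝ) := abs_pos.2 hx
    rw [Set.indicator_of_mem this]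
    simp [Phi, phi]
  exact this.trans_lt (ENNReal.mul_lt_top (by simp) Phi_lt_top_pos)

/-- pointwise bounds -/
lemma pt1 {x y : ℝ} (hx : x ≠ 0) (hy : x ^ 2 ≤ y) : (1 + y)⁻¹ ≤ phi x := by
  unfold phi
  have h0 : 0 < |x| := abs_pos.2 hx
  apply inv_anti₀ (by positivity)
  rw [← sq_abs] at hy
  refine le_trans ?_ (add_le_add_right hy 1)
  rcases le_total |x| 1 with h | h
  · rw [max_eq_left h, Real.one_rpow, mul_one]
    have := Real.rpow_le_one h0.le h (z := 3/4) (by norm_num)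
    nlinarith
  · rw [max_eq_right h, ← Real.rpow_add h0]
    have := Real.rpow_le_rpow_of_exponent_le h (y := (3/4 : ℝ)+1/2) (z := (2 : ℝ)) (by norm_num)
    rw [Real.rpow_two] at this
    linarith

lemma pt2 {x y μ : ℝ} (hx : x ≠ 0) (hμ : 0 ≤ μ) (hy : x ^ 2 ≤ y) (hy2 : μ * |x| ≤ y) :
    √μ * (1 + y)⁻¹ ≤ phi x := by
  unfold phi
  have h0 : 0 < |x| := abs_pos.2 hx
  have hy0 : 0 ≤ y := le_trans (sq_nonneg _) hy
  have hkey : |x| ^ (3/4 : ℝ) * max 1 |x| ^ (1/2 : ℝ) ≤ √|x| * max 1 |x| := by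
    rw [Real.sqrt_eq_rpow]
    rcases le_total |x| 1 with h | h
    · rw [max_eq_left h, Real.one_rpow, mul_one, mul_one]
      exact Real.rpow_le_rpow_of_exponent_ge h0 h (by norm_num)
    · rw [max_eq_right h, ← Real.rpow_add h0]
      nth_rewrite 3 [← Real.rpow_one |x|]
      rw [← Real.rpow_add h0]
      exact Real.rpow_le_rpow_of_exponent_le h (by norm_num)
  rw [← div_eq_mul_inv, div_le_iff₀ (by positivity), inv_mul_eq_div, le_div_iff₀ (by positivity)]
  have h1 : √μ * √|x| ≤ √y := by
    rw [← Real.sqrt_mul hμ]; exact Real.sqrt_le_sqrt hy2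
  have h2 : max 1 |x| ≤ max 1 √y := by
    apply max_le_max le_rfl
    exact Real.abs_le_sqrt hy
  have h3 : √y * max 1 √y ≤ 1 + y := by
    have := Real.sq_sqrt hy0
    rcases le_total √y 1 with h | h
    · rw [max_eq_left h]; nlinarith
    · rw [max_eq_right h]; nlinarith
  calc √μ * (|x| ^ (3/4 : ℝ) * max 1 |x| ^ (1/2 : ℝ)) ≤ √μ * (√|x| * max 1 |x|) := by gcongr
    _ = (√μ * √|x|) * max 1 |x| := by ring
    _ ≤ √y * max 1 √y := by gcongr
    _ ≤ _ := h3

lemma ae_ne (c : ℝ) : ∀ᵐ x : ℝ, x ≠ c := by simp [ae_iff]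

/-- The basic one dimensional estimate. -/
lemma J_est (A : ℝ) : (∫⁻ n : ℝ, ENNReal.ofReal (1 + |A - n ^ 2|)⁻¹) ≤ 2 * B0 ∧
    ENNReal.ofReal √√|A| * (∫⁻ n : ℝ, ENNReal.ofReal (1 + |A - n ^ 2|)⁻¹) ≤ 2 * B0 := by
  set μ := √|A| with hμdef
  have hμ : 0 ≤ μ := Real.sqrt_nonneg _
  have hμ2 : μ ^ 2 = |A| := Real.sq_sqrt (abs_nonneg _)
  obtain ⟨X, hXm, hXae, hX1, hX2, hXint⟩ : ∃ X : ℝ → ℝ, Measurable X ∧ (∀ᵐ n, X n ≠ 0) ∧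
      (∀ n, X n ^ 2 ≤ |A - n ^ 2|) ∧ (∀ n, μ * |X n| ≤ |A - n ^ 2|) ∧
      ∫⁻ n, Phi (X n) ≤ 2 * B0 := by
    rcases le_total 0 A with hA | hA
    · rw [abs_of_nonneg hA] at hμ2
      have hfac : ∀ n, |A - n ^ 2| = |(|n| - μ)| * (|n| + μ) := by
        intro n
        rw [← abs_of_nonneg (add_nonneg (abs_nonneg n) hμ), ← abs_mul, ← hμ2, ← sq_abs n,
          abs_sub_comm]
        congr 1; simp; linear_combination -(sq_abs n)
      refine ⟨fun n => |n| - μ, by fun_prop, ?_, ?_, ?_, ?_⟩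
      · filter_upwards [ae_ne μ, ae_ne (-μ)] with n h1 h2 h3
        rcases abs_choice n with h | h
        · apply h1; linarith
        · apply h2; linarith
      · intro n
        rw [hfac, ← sq_abs, sq]
        gcongr
        rw [abs_le]; constructor <;> linarith [abs_nonneg n]
      · intro n
        rw [hfac, mul_comm]
        gcongr
        linarith [abs_nonneg n]
      · refine (lint_abs_le (fun n => Phi (n - μ)) (measurable_Phi.comp (by fun_prop))).trans ?_
        rw [lintegral_sub_right_eq_self (fun n => Phi n)]; rfl
    · rw [abs_of_nonpos hA] at hμ2
      have hfac : ∀ n, |A - n ^ 2| = μ ^ 2 + n ^ 2 := by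
        intro n
        rw [abs_of_nonpos (by nlinarith [sq_nonneg n])]; linarith
      refine ⟨fun n => n, by fun_prop, ae_ne 0, ?_, ?_, ?_⟩
      · intro n; rw [hfac]; nlinarith
      · intro n; rw [hfac, ← sq_abs n]; nlinarith [sq_nonneg (μ - |n|), sq_nonneg (μ + |n|)]
      · rw [two_mul]; exact le_self_add
  constructor
  · refine le_trans (lintegral_mono_ae ?_) hXint
    filter_upwards [hXae] with n hn
    exact ENNReal.ofReal_le_ofReal (pt1 hn (hX1 n))
  · rw [← lintegral_const_mul _ (by fun_prop)]
    refine le_trans (lintegral_mono_ae ?_) hXint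
    filter_upwards [hXae] with n hn
    rw [← ENNReal.ofReal_mul (by positivity)]
    exact ENNReal.ofReal_le_ofReal (pt2 hn hμ (hX1 n) (hX2 n))

lemma lint_scale (f : ℝ → ENNReal) {c : ℝ} (hc : c ≠ 0) :
    ∫⁻ x, f (c * x) = ENNReal.ofReal |c⁻¹| * ∫⁻ x, f x := by
  have := Real.map_volume_mul_left hc
  rw [← smul_eq_mul, ← lintegral_smul_measure, ← this]
  exact ((Homeomorph.mulLeft₀ c hc).measurableEmbedding.lintegral_map f).symm

/-- With `a`-dependence. -/
lemma J_est2 (A a : ℝ) (ha : a ≠ 0) :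
    (∫⁻ m : ℝ, ENNReal.ofReal (1 + |A - 3 * a * m ^ 2|)⁻¹) ≤ ENNReal.ofReal (√|a|)⁻¹ * (2 * B0) ∧
    ENNReal.ofReal √√|A| * (∫⁻ m : ℝ, ENNReal.ofReal (1 + |A - 3 * a * m ^ 2|)⁻¹) ≤
      ENNReal.ofReal (√|a|)⁻¹ * (2 * B0) := by
  obtain ⟨A', hA', hphase⟩ : ∃ A', |A'| = |A| ∧
      ∀ m : ℝ, |A - 3 * a * m ^ 2| = |A' - (√(3 * |a|) * m) ^ 2| := by
    have h3 : √(3 * |a|) ^ 2 = 3 * |a| := Real.sq_sqrt (by positivity)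
    rcases le_total 0 a with h | h
    · refine ⟨A, rfl, fun m => ?_⟩
      rw [mul_pow, h3, abs_of_nonneg h]
    · refine ⟨-A, abs_neg _, fun m => ?_⟩
      rw [mul_pow, h3, abs_of_nonpos h, ← abs_neg]; congr 1; ring
  have hc : √(3 * |a|) ≠ 0 := by
    have := abs_pos.2 ha
    positivity
  have heq : (∫⁻ m : ℝ, ENNReal.ofReal (1 + |A - 3 * a * m ^ 2|)⁻¹) =
      ENNReal.ofReal |(√(3 * |a|))⁻¹| * ∫⁻ n : ℝ, ENNReal.ofReal (1 + |A' - n ^ 2|)⁻¹ := by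
    rw [← lint_scale _ hc]; simp_rw [hphase]
  have hle : ENNReal.ofReal |(√(3 * |a|))⁻¹| ≤ ENNReal.ofReal (√|a|)⁻¹ := by
    apply ENNReal.ofReal_le_ofReal
    rw [abs_of_nonneg (by positivity)]
    have := abs_pos.2 ha
    apply inv_anti₀ (by positivity)
    apply Real.sqrt_le_sqrt; linarith
  obtain ⟨h1, h2⟩ := J_est A'
  rw [hA'] at h2
  rw [heq]
  constructor
  · gcongr
  · rw [mul_left_comm]; gcongr

end Airy

namespace Airy

lemma cubic_lower (p q r : ℝ) : ∃ ρ₁ ρ₂ ρ₃ : ℝ, ∀ a : ℝ,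
    |a - ρ₁| * |a - ρ₂| * |a - ρ₃| ≤ |a ^ 3 + p * a ^ 2 + q * a + r| := by
  let P : Cubic ℝ := ⟨1, p, q, r⟩
  have ha : P.a ≠ 0 := one_ne_zero
  obtain ⟨x, y, z, h3⟩ := (Cubic.splits_iff_roots_eq_three (φ := Complex.ofRealHom) ha).1
    (IsAlgClosed.splits _)
  have h := Cubic.eq_prod_three_roots ha h3
  refine ⟨x.re, y.re, z.re, fun a => ?_⟩
  have he := congrArg (Polynomial.eval (a : ℂ)) h
  simp [P, Cubic.toPoly, Cubic.map] at he
  have hn : |a ^ 3 + p * a ^ 2 + q * a + r| = ‖(a : ℂ) - x‖ * ‖(a : ℂ) - y‖ * ‖(a : ℂ) - z‖ := by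
    rw [← norm_mul, ← norm_mul, ← he, ← Real.norm_eq_abs, ← Complex.norm_real]
    push_cast; rfl
  rw [hn]
  have hre : ∀ w : ℂ, |a - w.re| ≤ ‖(a : ℂ) - w‖ := fun w => by
    simpa using Complex.abs_re_le_norm ((a : ℂ) - w)
  gcongr <;> exact hre _

lemma pt3 {a d : ℝ} (ha : 1 ≤ |a|) (hd : d ≠ 0) :
    (√|a|)⁻¹ * (|d| ^ (3/4 : ℝ))⁻¹ ≤ phi a + phi d := by
  have hd0 : 0 < |d| := abs_pos.2 hd
  have ha0 : 0 < |a| := by linarith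
  rcases le_total |d| |a| with h | h
  · have : (√|a|)⁻¹ * (|d| ^ (3/4 : ℝ))⁻¹ ≤ phi d := by
      unfold phi
      rw [← mul_inv, mul_comm (√|a|), Real.sqrt_eq_rpow]
      apply inv_anti₀ (by positivity)
      gcongr
      exact max_le ha h
    linarith [phi_nonneg a]
  · have : (√|a|)⁻¹ * (|d| ^ (3/4 : ℝ))⁻¹ ≤ phi a := by
      unfold phi
      rw [← mul_inv, mul_comm (√|a|), Real.sqrt_eq_rpow, max_eq_right ha]
      apply inv_anti₀ (by positivity)
      gcongr
    linarith [phi_nonneg d]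

lemma pt4 {A D : ℝ} (hD : 0 < D) (h : 3/4 * D ^ 3 ≤ |A|) :
    1 / 2 * D ^ (3/4 : ℝ) ≤ √√|A| := by
  apply Real.le_sqrt_of_sq_le
  apply Real.le_sqrt_of_sq_le
  have h1 : (D ^ (3/4 : ℝ)) ^ 4 = D ^ 3 := by
    rw [← Real.rpow_natCast, ← Real.rpow_mul hD.le, ← Real.rpow_natCast]; norm_num
  calc ((1 / 2 * D ^ (3/4 : ℝ)) ^ 2) ^ 2 = 1 / 16 * (D ^ (3/4 : ℝ)) ^ 4 := by ring
    _ = 1 / 16 * D ^ 3 := by rw [h1]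
    _ ≤ 3/4 * D ^ 3 := by
      have : 0 < D ^ 3 := by positivity
      linarith
    _ ≤ _ := h

lemma exists_min {A d₁ d₂ d₃ : ℝ} (h1 : 0 ≤ d₁) (h2 : 0 ≤ d₂) (h3 : 0 ≤ d₃)
    (h : 3/4 * (d₁ * d₂ * d₃) ≤ A) :
    3/4 * d₁ ^ 3 ≤ A ∨ 3/4 * d₂ ^ 3 ≤ A ∨ 3/4 * d₃ ^ 3 ≤ A := by
  have key : ∀ d, 0 ≤ d → d ≤ d₁ → d ≤ d₂ → d ≤ d₃ → 3/4 * d ^ 3 ≤ A := by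
    intro d hd e1 e2 e3
    have : d * d * d ≤ d₁ * d₂ * d₃ := by gcongr
    nlinarith
  rcases le_total d₁ d₂ with a | a <;> rcases le_total d₂ d₃ with b | b <;>
    rcases le_total d₁ d₃ with c | c
  · exact Or.inl (key _ h1 le_rfl a c)
  · exact Or.inl (key _ h1 le_rfl a (a.trans b))
  · exact Or.inl (key _ h1 le_rfl a c)
  · exact Or.inr (Or.inr (key _ h3 c b le_rfl))
  · exact Or.inr (Or.inl (key _ h2 a le_rfl b))
  · exact Or.inr (Or.inl (key _ h2 a le_rfl b))
  · exact Or.inr (Or.inr (key _ h3 (b.trans a) b le_rfl))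
  · exact Or.inr (Or.inr (key _ h3 c b le_rfl))

lemma pt5 {I B : ENNReal} {a d A' : ℝ} (ha : 1 ≤ |a|) (hd : d ≠ 0) (hA : 3/4 * |d| ^ 3 ≤ |A'|)
    (h : ENNReal.ofReal √√|A'| * I ≤ ENNReal.ofReal (√|a|)⁻¹ * B) :
    I ≤ B * (2 * (Phi a + Phi d)) := by
  have hd0 : 0 < |d| := abs_pos.2 hd
  have hk := pt4 hd0 hA
  have hpos : 0 < √√|A'| := lt_of_lt_of_le (by positivity) hk
  have h1 : I ≤ ENNReal.ofReal (√√|A'|)⁻¹ * (ENNReal.ofReal (√|a|)⁻¹ * B) := by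
    calc I = ENNReal.ofReal (√√|A'|)⁻¹ * (ENNReal.ofReal √√|A'| * I) := by
          rw [← mul_assoc, ← ENNReal.ofReal_mul (by positivity), inv_mul_cancel₀ hpos.ne']; simp
      _ ≤ _ := by gcongr
  refine h1.trans ?_
  rw [← mul_assoc, mul_comm _ B]
  refine mul_le_mul' le_rfl ?_
  rw [← ENNReal.ofReal_mul (by positivity)]
  have h2 : (2 : ENNReal) = ENNReal.ofReal 2 := by simp
  rw [Phi, Phi, ← ENNReal.ofReal_add (phi_nonneg _) (phi_nonneg _), h2,
    ← ENNReal.ofReal_mul (by norm_num)]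
  apply ENNReal.ofReal_le_ofReal
  have h3 := pt3 ha hd
  have h4 : (√√|A'|)⁻¹ ≤ 2 * (|d| ^ (3/4 : ℝ))⁻¹ := by
    calc (√√|A'|)⁻¹ ≤ (1 / 2 * |d| ^ (3/4 : ℝ))⁻¹ := inv_anti₀ (by positivity) hk
      _ = _ := by rw [mul_inv]; norm_num
  calc (√√|A'|)⁻¹ * (√|a|)⁻¹ ≤ (2 * (|d| ^ (3/4 : ℝ))⁻¹) * (√|a|)⁻¹ := by gcongr
    _ = 2 * ((√|a|)⁻¹ * (|d| ^ (3/4 : ℝ))⁻¹) := by ring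
    _ ≤ _ := by gcongr

lemma pt6 {a : ℝ} (ha0 : a ≠ 0) (ha : |a| ≤ 1) : (√|a|)⁻¹ ≤ phi a := by
  unfold phi
  have := abs_pos.2 ha0
  rw [max_eq_left ha, Real.one_rpow, mul_one, Real.sqrt_eq_rpow]
  apply inv_anti₀ (by positivity)
  exact Real.rpow_le_rpow_of_exponent_ge this ha (by norm_num)

/-- The uniform two dimensional estimate. -/
lemma K2 (ξ s : ℝ) :
    ∫⁻ a : ℝ, ∫⁻ x : ℝ, ENNReal.ofReal (1 + |s - x ^ 3 - (a - x) ^ 3 - (ξ - a) ^ 3|)⁻¹ ≤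
      24 * B0 ^ 2 := by
  obtain ⟨ρ₁, ρ₂, ρ₃, hρ⟩ := cubic_lower (-4 * ξ) (4 * ξ ^ 2) (4/3 * (s - ξ ^ 3))
  let T : ℝ → ENNReal := fun a => (2 * B0) * (2 * (Phi a + Phi (a - ρ₁)) +
    2 * (Phi a + Phi (a - ρ₂)) + 2 * (Phi a + Phi (a - ρ₃)))
  have hT : ∫⁻ a, T a = 24 * B0 ^ 2 := by
    have hP := measurable_Phi
    have hs : ∀ ρ, ∫⁻ a, 2 * (Phi a + Phi (a - ρ)) = 4 * B0 := fun ρ => by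
      rw [lintegral_const_mul _ (by fun_prop), lintegral_add_left hP,
        lintegral_sub_right_eq_self (fun n => Phi n)]
      change 2 * (B0 + B0) = _
      ring
    simp only [T]
    rw [lintegral_const_mul _ (by fun_prop), lintegral_add_left (by fun_prop),
      lintegral_add_left (by fun_prop), hs, hs, hs]
    ring
  rw [← hT]
  refine lintegral_mono_ae ?_
  filter_upwards [ae_ne 0, ae_ne ρ₁, ae_ne ρ₂, ae_ne ρ₃] with a h0 h1 h2 h3
  set A := s - a ^ 3 / 4 - (ξ - a) ^ 3 with hA
  have hI : ∫⁻ x : ℝ, ENNReal.ofReal (1 + |s - x ^ 3 - (a - x) ^ 3 - (ξ - a) ^ 3|)⁻¹ =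
      ∫⁻ m : ℝ, ENNReal.ofReal (1 + |A - 3 * a * m ^ 2|)⁻¹ := by
    rw [← lintegral_add_right_eq_self _ (a / 2)]
    congr with m
    congr 4
    rw [hA]; ring
  obtain ⟨e1, e2⟩ := J_est2 A a h0
  rw [hI]
  have hAl : 3/4 * (|a - ρ₁| * |a - ρ₂| * |a - ρ₃|) ≤ |A| := by
    have : A = 3/4 * (a ^ 3 + (-4 * ξ) * a ^ 2 + (4 * ξ ^ 2) * a + 4/3 * (s - ξ ^ 3)) := by
      rw [hA]; ring
    rw [this, abs_mul, abs_of_pos (by norm_num : (0:ℝ) < 3/4)]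
    have := hρ a
    gcongr
  rcases le_total |a| 1 with h | h
  · refine e1.trans ?_
    rw [mul_comm]
    simp only [T]
    gcongr
    have : ENNReal.ofReal (√|a|)⁻¹ ≤ Phi a := ENNReal.ofReal_le_ofReal (pt6 h0 h)
    refine this.trans ?_
    calc Phi a ≤ 2 * (Phi a + Phi (a - ρ₁)) := by
          rw [two_mul]; exact le_self_add.trans le_self_add
      _ ≤ _ := le_self_add.trans le_self_add
  · rcases exists_min (abs_nonneg _) (abs_nonneg _) (abs_nonneg _) hAl with g | g | g
    · refine (pt5 h (sub_ne_zero.2 h1) g e2).trans ?_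
      simp only [T]; gcongr
      exact le_self_add.trans le_self_add
    · refine (pt5 h (sub_ne_zero.2 h2) g e2).trans ?_
      simp only [T]; gcongr
      exact le_add_self.trans le_self_add
    · refine (pt5 h (sub_ne_zero.2 h3) g e2).trans ?_
      simp only [T]; gcongr
      exact le_add_self

noncomputable def w (b : ℝ) (y : ℝ) : ENNReal := ENNReal.ofReal ((1 + |y|) ^ (-(2 * b)))

lemma measurable_w (b : ℝ) : Measurable (w b) := by unfold w; fun_prop

lemma w_le {b : ℝ} (hb : 1 / 2 < b) (y : ℝ) : w b y ≤ ENNReal.ofReal (1 + |y|)⁻¹ := by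
  apply ENNReal.ofReal_le_ofReal
  rw [← Real.rpow_neg_one]
  apply Real.rpow_le_rpow_of_exponent_le (by linarith [abs_nonneg y]) (by linarith)

noncomputable def B1 (b : ℝ) : ENNReal := ∫⁻ y, w b y

lemma B1_lt_top {b : ℝ} (hb : 1 / 2 < b) : B1 b < ⊤ := by
  have := finite_integral_one_add_norm (E := ℝ) (μ := volume) (r := 2 * b) (by simp; linarith)
  simpa [B1, w] using this

/-- The kernel bound. -/
lemma kernel_bound {b : ℝ} (hb : 1 / 2 < b) (z : ℝ × ℝ) :
    ∫⁻ s : ℝ × ℝ, ∫⁻ t : ℝ × ℝ, w b (t.2 - t.1 ^ 3) * w b ((s - t).2 - (s - t).1 ^ 3) *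
      w b ((z - s).2 - (z - s).1 ^ 3) ≤ B1 b ^ 2 * (24 * B0 ^ 2) := by
  have hw := measurable_w b
  obtain ⟨ξ, τ⟩ := z
  let G : ℝ → ℝ → ℝ → ℝ → ENNReal := fun a x α β =>
    w b α * w b β * w b (τ - α - β - x ^ 3 - (a - x) ^ 3 - (ξ - a) ^ 3)
  have step1 : ∫⁻ s : ℝ × ℝ, ∫⁻ t : ℝ × ℝ, w b (t.2 - t.1 ^ 3) * w b ((s - t).2 - (s - t).1 ^ 3) *
      w b (((ξ, τ) - s).2 - ((ξ, τ) - s).1 ^ 3) = ∫⁻ a, ∫⁻ x, ∫⁻ α, ∫⁻ β, G a x α β := by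
    rw [Measure.volume_eq_prod, lintegral_prod _ (by
      apply Measurable.aemeasurable
      apply Measurable.lintegral_prod_right
      fun_prop)]
    congr with a
    rw [lintegral_lintegral_swap (by fun_prop), lintegral_prod _ (by
      apply Measurable.aemeasurable
      apply Measurable.lintegral_prod_right
      fun_prop)]
    congr with x
    rw [← lintegral_add_right_eq_self _ (x ^ 3)]
    congr with α
    rw [← lintegral_add_right_eq_self _ (α + x ^ 3 + (a - x) ^ 3)]
    congr with β
    simp only [G, Prod.fst_sub, Prod.snd_sub]
    congr 2
    · congr 1; ring
    · congr 1; ring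
    · ring
  rw [step1]
  have step2 : ∫⁻ a, ∫⁻ x, ∫⁻ α, ∫⁻ β, G a x α β =
      ∫⁻ p : ℝ × ℝ, ∫⁻ q : ℝ × ℝ, G q.1 q.2 p.1 p.2 := by
    symm
    rw [lintegral_lintegral_swap (by fun_prop), Measure.volume_eq_prod, lintegral_prod _ (by
      apply Measurable.aemeasurable
      apply Measurable.lintegral_prod_right
      fun_prop)]
    congr with a
    congr with x
    rw [lintegral_prod _ (by fun_prop)]
  rw [step2]
  have step3 : ∀ p : ℝ × ℝ, ∫⁻ q : ℝ × ℝ, G q.1 q.2 p.1 p.2 ≤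
      w b p.1 * w b p.2 * (24 * B0 ^ 2) := by
    intro p
    simp only [G]
    rw [lintegral_const_mul _ (by fun_prop)]
    gcongr
    rw [Measure.volume_eq_prod, lintegral_prod _ (by fun_prop)]
    refine le_trans ?_ (K2 ξ (τ - p.1 - p.2))
    gcongr with a x
    exact w_le hb _
  refine (lintegral_mono step3).trans ?_
  rw [lintegral_mul_const _ (by fun_prop), Measure.volume_eq_prod,
    lintegral_prod_mul (by fun_prop) (by fun_prop), sq (B1 b)]
  rfl

end Airy

namespace Airy

lemma cs {α : Type*} [MeasurableSpace α] (μ : Measure α) {f K H : α → ENNReal}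
    (hK : Measurable K) (hH : Measurable H) (h : ∀ x, f x ^ 2 = K x * H x) :
    (∫⁻ x, f x ∂μ) ^ 2 ≤ (∫⁻ x, K x ∂μ) * ∫⁻ x, H x ∂μ := by
  have h2 : ∀ y : ENNReal, (y ^ (1/2 : ℝ)) ^ (2:ℝ) = y := fun y => by
    rw [← ENNReal.rpow_mul]; norm_num
  have h2' : ∀ y : ENNReal, (y ^ 2) ^ (1/2 : ℝ) = y := fun y => by
    rw [← ENNReal.rpow_natCast, ← ENNReal.rpow_mul]; norm_num
  have hf : ∀ x, f x = ((fun x => K x ^ (1/2 : ℝ)) * (fun x => H x ^ (1/2 : ℝ))) x := fun x => by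
    simp only [Pi.mul_apply]
    rw [← ENNReal.mul_rpow_of_nonneg _ _ (by norm_num), ← h, h2']
  have := ENNReal.lintegral_mul_le_Lp_mul_Lq μ (p := 2) (q := 2)
    Real.HolderConjugate.two_two (f := fun x => K x ^ (1/2 : ℝ)) (g := fun x => H x ^ (1/2 : ℝ))
    (by fun_prop) (by fun_prop)
  simp only [h2] at this
  rw [lintegral_congr hf]
  calc _ ≤ ((∫⁻ x, K x ∂μ) ^ (1/2 : ℝ) * (∫⁻ x, H x ∂μ) ^ (1/2 : ℝ)) ^ 2 := by gcongr
    _ = _ := by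
      have h3 : ∀ y : ENNReal, (y ^ (1/2 : ℝ)) ^ (2 : ℕ) = y := fun y => by
        rw [← ENNReal.rpow_natCast]; exact_mod_cast h2 y
      rw [mul_pow, h3, h3]

noncomputable def W (b : ℝ) (p : ℝ × ℝ) : ENNReal :=
  ENNReal.ofReal ((1 + |p.2 - p.1 ^ 3|) ^ (2 * b))

lemma measurable_W (b : ℝ) : Measurable (W b) := by unfold W; fun_prop

lemma w_mul_W (b : ℝ) (p : ℝ × ℝ) : w b (p.2 - p.1 ^ 3) * W b p = 1 := by
  unfold w W
  rw [← ENNReal.ofReal_mul (by positivity), ← Real.rpow_add (by positivity)]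
  simp

lemma tri {b : ℝ} (hb : 1 / 2 < b) {h : ℝ × ℝ → ENNReal} (hm : Measurable h) :
    ∫⁻ z, (∫⁻ s, ∫⁻ t, h t * h (s - t) * h (z - s)) ^ 2 ≤
      (B1 b ^ 2 * (24 * B0 ^ 2)) * (∫⁻ p, W b p * h p ^ 2) ^ 3 := by
  have hw := measurable_w b
  have hW := measurable_W b
  set M := B1 b ^ 2 * (24 * B0 ^ 2)
  set H : ℝ × ℝ → ENNReal := fun p => W b p * h p ^ 2 with hH
  have hHm : Measurable H := by fun_prop
  have h1 : ∀ z, (∫⁻ s, ∫⁻ t, h t * h (s - t) * h (z - s)) ^ 2 ≤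
      M * ∫⁻ s, ∫⁻ t, H t * H (s - t) * H (z - s) := by
    intro z
    have := cs (volume.prod volume : Measure ((ℝ × ℝ) × (ℝ × ℝ)))
      (f := fun q => h q.2 * h (q.1 - q.2) * h (z - q.1))
      (K := fun q => w b (q.2.2 - q.2.1 ^ 3) * w b ((q.1 - q.2).2 - (q.1 - q.2).1 ^ 3) *
        w b ((z - q.1).2 - (z - q.1).1 ^ 3))
      (H := fun q => H q.2 * H (q.1 - q.2) * H (z - q.1)) (by fun_prop) (by fun_prop) (by
        intro q
        have e1 := w_mul_W b q.2
        have e2 := w_mul_W b (q.1 - q.2)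
        have e3 := w_mul_W b (z - q.1)
        simp only [hH]
        generalize w b (q.2.2 - q.2.1 ^ 3) = k1 at *
        generalize w b ((q.1 - q.2).2 - (q.1 - q.2).1 ^ 3) = k2 at *
        generalize w b ((z - q.1).2 - (z - q.1).1 ^ 3) = k3 at *
        calc _ = (1 * h q.2 ^ 2) * (1 * h (q.1 - q.2) ^ 2) * (1 * h (z - q.1) ^ 2) := by ring
          _ = ((k1 * W b q.2) * h q.2 ^ 2) * ((k2 * W b (q.1 - q.2)) * h (q.1 - q.2) ^ 2)
                * ((k3 * W b (z - q.1)) * h (z - q.1) ^ 2) := by rw [e1, e2, e3]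
          _ = _ := by ring)
    rw [lintegral_prod _ (by fun_prop), lintegral_prod _ (by fun_prop),
      lintegral_prod _ (by fun_prop)] at this
    refine this.trans ?_
    gcongr
    exact kernel_bound hb z
  refine (lintegral_mono h1).trans ?_
  rw [lintegral_const_mul _ (by
    apply Measurable.lintegral_prod_right (f := fun z s =>
      ∫⁻ t, H t * H (s - t) * H (z - s))
    apply Measurable.lintegral_prod_right
    fun_prop)]
  gcongr
  rw [lintegral_lintegral_swap (by
    apply Measurable.aemeasurable
    apply Measurable.lintegral_prod_right
    fun_prop)]
  have h2 : ∀ s, ∫⁻ z, ∫⁻ t, H t * H (s - t) * H (z - s) =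
      (∫⁻ t, H t * H (s - t)) * ∫⁻ p, H p := by
    intro s
    simp_rw [lintegral_mul_const _ (show Measurable (fun t => H t * H (s - t)) by fun_prop)]
    rw [lintegral_const_mul _ (by fun_prop), lintegral_sub_right_eq_self (fun z => H z)]
  simp_rw [h2]
  rw [lintegral_mul_const _ (by
    apply Measurable.lintegral_prod_right
    fun_prop), lintegral_lintegral_swap (by fun_prop)]
  have h3 : ∀ t, ∫⁻ s, H t * H (s - t) = H t * ∫⁻ p, H p := by
    intro t
    rw [lintegral_const_mul _ (by fun_prop), lintegral_sub_right_eq_self (fun z => H z)]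
  simp_rw [h3]
  rw [lintegral_mul_const _ hHm]
  apply le_of_eq; ring

end Airy

namespace Airy
open SchwartzMap FourierTransform
open scoped SchwartzMap

lemma integrable_weight (b : ℝ) (hb : 1 / 2 < b) (G : 𝓢(ℝ × ℝ, ℂ)) :
    Integrable (fun p : ℝ × ℝ => (1 + |p.2 - p.1 ^ 3|) ^ (2 * b) * ‖G p‖ ^ 2) := by
  obtain ⟨N, hN⟩ := exists_nat_ge (2 * b)
  obtain ⟨C, hC⟩ : ∃ C, ∀ p : ℝ × ℝ, (1 + ‖p‖) ^ (3 * N) * ‖G p‖ ≤ C := by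
    refine ⟨2 ^ (3 * N) * (Finset.Iic ((3 * N, 0) : ℕ × ℕ)).sup
      (fun m => SchwartzMap.seminorm ℝ m.1 m.2) G, fun p => ?_⟩
    have := one_add_le_sup_seminorm_apply (𝕜 := ℝ) (m := (3 * N, 0)) (k := 3 * N) (n := 0)
      le_rfl le_rfl G p
    simpa using this
  refine Integrable.mono' (G.integrable.norm.const_mul C) (by
    apply Measurable.aestronglyMeasurable
    have := G.continuous.measurable
    fun_prop) (ae_of_all _ fun p => ?_)
  rw [Real.norm_of_nonneg (by positivity)]
  have h1 : |p.1| ≤ ‖p‖ := norm_fst_le p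
  have h2 : |p.2| ≤ ‖p‖ := norm_snd_le p
  have hp := norm_nonneg p
  have h3 : 1 + |p.2 - p.1 ^ 3| ≤ (1 + ‖p‖) ^ 3 := by
    have e1 : |p.2 - p.1 ^ 3| ≤ |p.2| + |p.1| ^ 3 := by
      rw [← abs_pow]; exact abs_sub _ _
    have e2 : |p.1| ^ 3 ≤ ‖p‖ ^ 3 := by gcongr
    nlinarith [sq_nonneg ‖p‖]
  have h4 : (1 + |p.2 - p.1 ^ 3|) ^ (2 * b) ≤ (1 + ‖p‖) ^ (3 * N) := by
    calc (1 + |p.2 - p.1 ^ 3|) ^ (2 * b) ≤ (1 + |p.2 - p.1 ^ 3|) ^ (N : ℝ) :=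
          Real.rpow_le_rpow_of_exponent_le (by linarith [abs_nonneg (p.2 - p.1 ^ 3)]) hN
      _ = (1 + |p.2 - p.1 ^ 3|) ^ N := Real.rpow_natCast _ _
      _ ≤ ((1 + ‖p‖) ^ 3) ^ N := by gcongr
      _ = _ := by rw [← pow_mul]
  calc (1 + |p.2 - p.1 ^ 3|) ^ (2 * b) * ‖G p‖ ^ 2
      ≤ (1 + ‖p‖) ^ (3 * N) * ‖G p‖ ^ 2 := by gcongr
    _ = ((1 + ‖p‖) ^ (3 * N) * ‖G p‖) * ‖G p‖ := by ring
    _ ≤ C * ‖G p‖ := by gcongr; exact hC p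

abbrev E := WithLp 2 (ℝ × ℝ)

noncomputable def L : E ≃L[ℝ] ℝ × ℝ :=
  (WithLp.prodContinuousLinearEquiv 2 ℝ ℝ ℝ).trans
    (ContinuousLinearEquiv.smulLeft (Units.mk0 (-(2 * Real.pi)) (by simp [Real.pi_ne_zero])))

lemma L_fst (q : E) : (L q).1 = -(2 * Real.pi) * q.fst := by
  simp [L, Units.smul_def]

lemma L_snd (q : E) : (L q).2 = -(2 * Real.pi) * q.snd := by
  simp [L, Units.smul_def]

lemma exists_map : ∃ c : NNReal, c ≠ 0 ∧ (volume : Measure E).map L = c • (volume : Measure (ℝ × ℝ)) := by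
  have : ((volume : Measure E).map L).IsAddHaarMeasure := L.isAddHaarMeasure_map _
  refine ⟨_, ?_, Measure.isAddLeftInvariant_eq_smul _ _⟩
  exact (Measure.addHaarScalarFactor_pos_of_isAddHaarMeasure _ _).ne'

lemma lint_E (F : E → ENNReal) : ∫⁻ q, F q = ∫⁻ p : ℝ × ℝ, F (WithLp.toLp 2 p) :=
  ((WithLp.volume_preserving_toLp ℝ ℝ).lintegral_comp_emb
    (MeasurableEquiv.toLp 2 (ℝ × ℝ)).measurableEmbedding F).symm

lemma eLpNorm_fourier (f : 𝓢(E, ℂ)) : eLpNorm (⇑(𝓕 f : 𝓢(E, ℂ))) 2 volume = eLpNorm (⇑f) 2 volume := by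
  have := norm_fourier_toL2_eq f
  rw [norm_toLp, norm_toLp] at this
  have h1 : eLpNorm (⇑(𝓕 f : 𝓢(E, ℂ))) 2 volume ≠ ⊤ := ((𝓕 f : 𝓢(E, ℂ)).memLp 2 volume).2.ne
  have h2 : eLpNorm (⇑f) 2 volume ≠ ⊤ := (f.memLp 2 volume).2.ne
  exact (ENNReal.toReal_eq_toReal_iff' h1 h2).1 this

lemma lint_sq_fourier (f : 𝓢(E, ℂ)) : ∫⁻ x, ‖𝓕 f x‖ₑ ^ 2 = ∫⁻ x, ‖f x‖ₑ ^ 2 := by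
  have h := eLpNorm_fourier f
  have key : ∀ f : 𝓢(E, ℂ), ∫⁻ x, ‖f x‖ₑ ^ 2 = eLpNorm f 2 volume ^ 2 := fun f => by
    have := eLpNorm_nnreal_pow_eq_lintegral (f := f) (μ := volume) (p := 2) (by norm_num)
    simp at this
    exact_mod_cast this.symm
  rw [key, key, h]

lemma main_E {b : ℝ} (hb : 1 / 2 < b) (g : 𝓢(E, ℂ)) :
    ∫⁻ x, ‖𝓕 g x‖ₑ ^ 6 ≤
      (B1 b ^ 2 * (24 * B0 ^ 2)) * (∫⁻ p, W b p * ‖g (WithLp.toLp 2 p)‖ₑ ^ 2) ^ 3 := by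
  let mulC := ContinuousLinearMap.mul ℂ ℂ
  let g2 := SchwartzMap.convolution mulC g g
  let g3 := SchwartzMap.convolution mulC g2 g
  have h3 : ∀ x, 𝓕 g3 x = 𝓕 g x ^ 3 := fun x => by
    simp only [g3, g2, fourier_convolution, pairing_apply_apply, mulC, ContinuousLinearMap.mul_apply']
    ring
  have h6 : ∫⁻ x, ‖𝓕 g x‖ₑ ^ 6 = ∫⁻ x, ‖g3 x‖ₑ ^ 2 := by
    rw [← lint_sq_fourier]
    congr with x
    rw [h3, enorm_pow, ← pow_mul]
  rw [h6, lint_E]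
  refine le_trans ?_ (tri hb (h := fun p => ‖g (WithLp.toLp 2 p)‖ₑ) (by
    have := g.continuous
    have : Continuous (fun p : ℝ × ℝ => g (WithLp.toLp 2 p)) := by fun_prop
    exact this.measurable.enorm))
  gcongr with z
  have hg3 : g3 (WithLp.toLp 2 z) = ∫ s : E, (∫ t : E, g t * g (s - t)) * g (WithLp.toLp 2 z - s) := by
    simp only [g3, g2]
    rw [SchwartzMap.convolution_apply]
    simp only [MeasureTheory.convolution, mulC, SchwartzMap.convolution_apply, ContinuousLinearMap.mul_apply']
  rw [hg3]
  refine (enorm_integral_le_lintegral_enorm _).trans ?_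
  rw [lint_E]
  gcongr with s
  rw [enorm_mul, lintegral_mul_const _ (by
    have := g.continuous
    have : Continuous (fun p : ℝ × ℝ => g (WithLp.toLp 2 p)) := by fun_prop
    have hm := this.measurable.enorm
    exact hm.mul (hm.comp (by fun_prop : Measurable (fun t : ℝ × ℝ => s - t))))]
  refine mul_le_mul' ?_ le_rfl
  refine (enorm_integral_le_lintegral_enorm _).trans ?_
  rw [lint_E]
  simp [enorm_mul]

end Airy

open Airy
/-- Strichartz-type estimate for the Airy Bourgain norm, case `p = 6`:
`‖u‖_{L⁶(ℝ²)} ≤ C ‖u‖_{X^{0,b}}` for `b > 1/2`. -/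
theorem strichartz_L6 (b : ℝ) (hb : 1 / 2 < b) :
    ∃ C > 0, ∀ u : SchwartzMap (ℝ × ℝ) ℂ,
      eLpNorm (fun p : ℝ × ℝ => u p) 6 volume ≤
        ENNReal.ofReal (C *
          (∫ p : ℝ × ℝ, (1 + |p.2 - p.1 ^ 3|) ^ (2 * b) *
            ‖∫ q : ℝ × ℝ, Complex.exp (-Complex.I * (q.1 * p.1 + q.2 * p.2)) * u q‖ ^ 2) ^
          ((1 : ℝ) / 2)) := by
  obtain ⟨c, hc0, hc⟩ := exists_map
  set M : ENNReal := B1 b ^ 2 * (24 * B0 ^ 2) with hM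
  have hMtop : M ≠ ⊤ := by
    refine ENNReal.mul_ne_top (ENNReal.pow_ne_top (B1_lt_top hb).ne) ?_
    exact ENNReal.mul_ne_top (by simp) (ENNReal.pow_ne_top B0_lt_top.ne)
  set D : ℝ := c ^ 5 * M.toReal with hD
  have hD0 : 0 ≤ D := by positivity
  refine ⟨D ^ ((1:ℝ)/6) + 1, by positivity, fun u => ?_⟩
  set U : ℝ × ℝ → ℂ := fun p =>
    ∫ q : ℝ × ℝ, Complex.exp (-Complex.I * (q.1 * p.1 + q.2 * p.2)) * u q with hU
  let v : SchwartzMap E ℂ := SchwartzMap.compCLMOfContinuousLinearEquiv ℂ L u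
  let g : SchwartzMap E ℂ := FourierTransform.fourierInv v
  have hv : FourierTransform.fourier g = v := FourierTransform.fourier_fourierInv_eq v
  have hLemb : MeasurableEmbedding L := L.toHomeomorph.measurableEmbedding
  have hgU : ∀ p : ℝ × ℝ, g (WithLp.toLp 2 p) = c * U p := by
    intro p
    have h1 : g (WithLp.toLp 2 p) = ∫ q : E, (fun y : ℝ × ℝ =>
        Complex.exp (-Complex.I * (y.1 * p.1 + y.2 * p.2)) * u y) (L q) := by
      simp only [g]
      rw [SchwartzMap.fourierInv_coe, Real.fourierInv_eq']
      congr with q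
      simp only [smul_eq_mul, L_fst, L_snd]
      have hvq : v q = u (L q) := rfl
      rw [hvq]
      congr 1
      congr 1
      rw [WithLp.prod_inner_apply]
      simp
      ring
    have h2 := hLemb.integral_map (μ := volume) (fun y : ℝ × ℝ =>
        Complex.exp (-Complex.I * (y.1 * p.1 + y.2 * p.2)) * u y)
    rw [h1]
    refine h2.symm.trans ?_
    rw [hc, integral_smul_nnreal_measure]
    simp [hU, NNReal.smul_def]
  have h6 : (c : ENNReal) * ∫⁻ x, ‖u x‖ₑ ^ 6 = ∫⁻ x, ‖v x‖ₑ ^ 6 := by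
    have : ∫⁻ x, ‖v x‖ₑ ^ 6 = ∫⁻ q, (fun y => ‖u y‖ₑ ^ 6) (L q) := rfl
    have h2 := hLemb.lintegral_map (μ := volume) (fun y => ‖u y‖ₑ ^ 6)
    rw [this, ← h2, hc]
    rw [lintegral_smul_measure]; rfl
  have hUint : Integrable (fun p : ℝ × ℝ => (1 + |p.2 - p.1 ^ 3|) ^ (2 * b) * ‖U p‖ ^ 2) := by
    have := integrable_weight b hb (SchwartzMap.compCLMOfContinuousLinearEquiv ℂ
      (WithLp.prodContinuousLinearEquiv 2 ℝ ℝ ℝ).symm g)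
    refine (this.const_mul (((c : ℝ) ^ 2)⁻¹)).congr (ae_of_all _ fun p => ?_)
    have e : (SchwartzMap.compCLMOfContinuousLinearEquiv ℂ
      (WithLp.prodContinuousLinearEquiv 2 ℝ ℝ ℝ).symm g) p = c * U p := hgU p
    have hcr : (c : ℝ) ≠ 0 := by exact_mod_cast hc0
    simp only [e, norm_mul, mul_pow]
    simp
    field_simp
  set I : ℝ := ∫ p : ℝ × ℝ, (1 + |p.2 - p.1 ^ 3|) ^ (2 * b) * ‖U p‖ ^ 2 with hI
  have hI0 : 0 ≤ I := integral_nonneg fun p => by positivity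
  have hX : ∫⁻ p, W b p * ‖g (WithLp.toLp 2 p)‖ₑ ^ 2 = (c : ENNReal) ^ 2 * ENNReal.ofReal I := by
    rw [hI, ofReal_integral_eq_lintegral_ofReal hUint (ae_of_all _ fun p => by positivity),
      ← lintegral_const_mul' _ _ (by simp)]
    congr with p
    rw [hgU, ENNReal.ofReal_mul (by positivity), enorm_mul, mul_pow,
      ENNReal.ofReal_pow (by positivity), ofReal_norm, W]
    have : ‖((c : ℝ) : ℂ)‖ₑ = c := by
      rw [← ofReal_norm]; simp
    rw [show ((c : NNReal) : ℂ) = ((c : ℝ) : ℂ) from rfl, this]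
    ring
  have hmain := main_E hb g
  rw [hv, ← h6, hX, ← hM] at hmain
  have hcE : (c : ENNReal) ≠ 0 := by exact_mod_cast hc0
  have hfin : ∫⁻ x, ‖u x‖ₑ ^ 6 ≤ ENNReal.ofReal (D * I ^ 3) := by
    have : (c : ENNReal) * ∫⁻ x, ‖u x‖ₑ ^ 6 ≤ c * ENNReal.ofReal (D * I ^ 3) := by
      refine hmain.trans (le_of_eq ?_)
      rw [hD, ENNReal.ofReal_mul (by positivity), ENNReal.ofReal_mul (by positivity),
        ENNReal.ofReal_toReal hMtop, ENNReal.ofReal_pow hI0, ENNReal.ofReal_pow (by positivity),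
        ENNReal.ofReal_coe_nnreal]
      ring
    exact (ENNReal.mul_le_mul_iff_right hcE (by simp)).1 this
  have hnorm : eLpNorm (fun p : ℝ × ℝ => u p) 6 volume = (∫⁻ x, ‖u x‖ₑ ^ 6) ^ ((1:ℝ)/6) := by
    rw [eLpNorm_eq_lintegral_rpow_enorm_toReal (by norm_num) (by norm_num)]
    simp
  rw [hnorm]
  refine (ENNReal.rpow_le_rpow hfin (by norm_num)).trans ?_
  rw [ENNReal.ofReal_rpow_of_nonneg (by positivity) (by norm_num)]
  apply ENNReal.ofReal_le_ofReal
  rw [Real.mul_rpow hD0 (by positivity), ← Real.rpow_natCast, ← Real.rpow_mul hI0]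
  norm_num
  gcongr
  linarith
end

section
/- For every b > 1/2 there exists a constant C > 0 such that for all Schwartz functions U₁, U₂, U₃ : ℝ² → ℂ one has ‖U₁U₂U₃‖_{L²(ℝ²)} ≤ C · ∏_{i=1}^{3} ( ∫_{ℝ²} (1+|τ−ξ³|)^{2b} |Û_i(ξ,τ)|² dξ dτ )^{1/2}. -/
open MeasureTheory

namespace Tri
open scoped ENNReal

noncomputable def J (γ : ℝ) (x : ℝ) : ℝ≥0∞ := ENNReal.ofReal ((1 + |x|) ^ (-γ))

lemma measurable_J (γ : ℝ) : Measurable (J γ) := by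
  unfold J; fun_prop

lemma J_neg (γ x : ℝ) : J γ (-x) = J γ x := by simp [J]

lemma J_abs (γ x : ℝ) : J γ (|x|) = J γ x := by simp [J]

lemma J_anti {γ : ℝ} (hγ : 0 ≤ γ) {x y : ℝ} (h : |x| ≤ |y|) : J γ y ≤ J γ x := by
  unfold J
  apply ENNReal.ofReal_le_ofReal
  apply Real.rpow_le_rpow_of_nonpos (by positivity) (by linarith) (by linarith)

lemma J_fin {γ : ℝ} (hγ : 1 < γ) : ∫⁻ x, J γ x < ∞ := by
  have h := integrable_one_add_norm (E := ℝ) (μ := volume) (r := γ) (by simpa using hγ)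
  simpa [J] using h.lintegral_lt_top

lemma scale {E : Type*} [NormedAddCommGroup E] [NormedSpace ℝ E] [MeasurableSpace E] [BorelSpace E]
    [FiniteDimensional ℝ E] (μ : Measure E) [μ.IsAddHaarMeasure] {c : ℝ} (hc : c ≠ 0)
    (f : E → ℝ≥0∞) :
    ∫⁻ x, f (c • x) ∂μ = ENNReal.ofReal |(c ^ Module.finrank ℝ E)⁻¹| * ∫⁻ x, f x ∂μ := by
  have h := Measure.map_addHaar_smul μ hc
  have h2 : ∫⁻ x, f x ∂(Measure.map (c • ·) μ) = ∫⁻ x, f (c • x) ∂μ :=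
    lintegral_map_equiv f (Homeomorph.smulOfNeZero c hc).toMeasurableEquiv
  rw [← h2, h, lintegral_smul_measure, smul_eq_mul]

lemma scale1 {c : ℝ} (hc : 0 < c) (f : ℝ → ℝ≥0∞) :
    ∫⁻ x, f (c * x) = ENNReal.ofReal c⁻¹ * ∫⁻ x, f x := by
  have := scale volume hc.ne' f
  simpa [abs_of_pos hc] using this

lemma J_mul {γ : ℝ} (hγ : 0 ≤ γ) (x y : ℝ) :
    J γ x * J γ y ≤ ENNReal.ofReal (2 ^ γ) * J γ (x - y) * (J γ x + J γ y) := by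
  wlog h : |x| ≤ |y| generalizing x y with H
  · have := H y x (le_of_not_ge h)
    rw [mul_comm, add_comm (J γ x), ← J_neg γ (x - y), neg_sub]; exact this
  have h1 : J γ y ≤ ENNReal.ofReal (2 ^ γ) * J γ (x - y) := by
    unfold J
    rw [← ENNReal.ofReal_mul (by positivity)]
    apply ENNReal.ofReal_le_ofReal
    have : (2:ℝ) ^ γ = (2⁻¹) ^ (-γ) := by
      rw [Real.rpow_neg (by norm_num), Real.inv_rpow (by norm_num), inv_inv]
    rw [this, ← Real.mul_rpow (by norm_num) (by positivity)]
    apply Real.rpow_le_rpow_of_nonpos (by positivity) _ (by linarith)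
    have := abs_sub x y
    linarith
  calc J γ x * J γ y ≤ J γ x * (ENNReal.ofReal (2 ^ γ) * J γ (x - y)) := by gcongr
    _ = ENNReal.ofReal (2 ^ γ) * J γ (x - y) * J γ x := by ring
    _ ≤ _ := by gcongr; exact le_self_add

/-- constant -/
noncomputable def CJ (γ : ℝ) : ℝ≥0∞ := ENNReal.ofReal (2 ^ γ) * (2 * ∫⁻ x, J γ x)

lemma CJ_lt {γ : ℝ} (hγ : 1 < γ) : CJ γ < ∞ :=
  ENNReal.mul_lt_top ENNReal.ofReal_lt_top (ENNReal.mul_lt_top (by simp) (J_fin hγ))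

lemma J_conv {γ : ℝ} (hγ : 0 ≤ γ) (α β : ℝ) :
    ∫⁻ s, J γ (s - α) * J γ (β - s) ≤ CJ γ * J γ (β - α) := by
  calc ∫⁻ s, J γ (s - α) * J γ (β - s)
      ≤ ∫⁻ s, ENNReal.ofReal (2 ^ γ) * J γ (β - α) * (J γ (s - α) + J γ (β - s)) := by
        apply lintegral_mono; intro s
        have := J_mul hγ (s - α) (-(β - s))
        rw [J_neg] at this
        convert this using 3
        congr 1; ring
    _ = _ := by
        have := measurable_J γ
        rw [lintegral_const_mul _ (by fun_prop), lintegral_add_left (by fun_prop),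
          lintegral_sub_right_eq_self (fun x => J γ x) α, lintegral_sub_left_eq_self (fun x => J γ x) β, CJ]
        ring

noncomputable def T (x : ℝ) : ℝ≥0∞ := ENNReal.ofReal ((1 + x ^ 2)⁻¹)

lemma measurable_T : Measurable T := by unfold T; fun_prop

lemma T_fin : ∫⁻ x, T x < ∞ := integrable_inv_one_add_sq.lintegral_lt_top

lemma L1 {γ : ℝ} (hγ : 1 < γ) {k : ℝ} (hk : 0 < k) (B : ℝ) :
    ∫⁻ u, J γ (k * (B - u ^ 2)) ≤ ENNReal.ofReal (√k)⁻¹ * (2 * ∫⁻ x, T x) := by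
  have hs : 0 < √k := Real.sqrt_pos.2 hk
  have key : ∀ u, J γ (k * (B - u ^ 2)) ≤ T (√k * (u - √B)) + T (√k * (u + √B)) := by
    intro u
    have h0 : (|u| - √B) ^ 2 ≤ |B - u ^ 2| := by
      rcases le_total B 0 with h | h
      · rw [Real.sqrt_eq_zero_of_nonpos h, abs_of_nonpos (a := B - u ^ 2) (by nlinarith [sq_nonneg u]), sub_zero, sq_abs]
        linarith
      · have h1 := Real.sq_sqrt h
        have h2 := Real.sqrt_nonneg B
        have h3 := sq_abs u
        have h4 := abs_nonneg u
        rcases le_total (|u|) (√B) with h5 | h5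
        · rw [abs_of_nonneg (a := B - u ^ 2) (by nlinarith)]; nlinarith
        · rw [abs_of_nonpos (a := B - u ^ 2) (by nlinarith)]; nlinarith
    have h1 : J γ (k * (B - u ^ 2)) ≤ T (√k * (|u| - √B)) := by
      unfold J T
      apply ENNReal.ofReal_le_ofReal
      rw [← Real.rpow_neg_one, abs_mul, abs_of_pos hk, mul_pow, Real.sq_sqrt hk.le]
      calc (1 + k * |B - u ^ 2|) ^ (-γ) ≤ (1 + k * |B - u ^ 2|) ^ (-1 : ℝ) :=
            Real.rpow_le_rpow_of_exponent_le (by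
              have : 0 ≤ k * |B - u ^ 2| := by positivity
              linarith) (by linarith)
        _ ≤ _ := by
            apply Real.rpow_le_rpow_of_nonpos (by positivity) _ (by norm_num)
            gcongr
    refine h1.trans ?_
    rcases abs_choice u with h | h <;> rw [h]
    · exact le_self_add
    · have : T (√k * (-u - √B)) = T (√k * (u + √B)) := by
        unfold T; congr 3; ring
      rw [this]; exact le_add_self
  have := measurable_T
  refine (lintegral_mono key).trans ?_
  rw [lintegral_add_left (by fun_prop), lintegral_sub_right_eq_self (fun x => T (√k * x)) (√B),
    lintegral_add_right_eq_self (fun x => T (√k * x)) (√B), scale1 hs]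
  apply le_of_eq; ring

lemma L2 {γ : ℝ} (hγ : 1 < γ) {k : ℝ} (hk : 0 < k) (B : ℝ) :
    ∫⁻ u, ENNReal.ofReal |2 * u| * J γ (k * (B - u ^ 2)) ≤
      ENNReal.ofReal k⁻¹ * (2 * ∫⁻ x, J γ x) := by
  have hJ := measurable_J γ
  have hinj : Set.InjOn (fun u : ℝ => u * |u|) {0}ᶜ := by
    intro x hx y hy h
    beta_reduce at h
    rcases abs_cases x with ⟨h1, h2⟩ | ⟨h1, h2⟩ <;> rcases abs_cases y with ⟨h3, h4⟩ | ⟨h3, h4⟩ <;>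
      rw [h1, h3] at h <;> nlinarith
  have hder : ∀ x ∈ ({0}ᶜ : Set ℝ), HasDerivWithinAt (fun u : ℝ => u * |u|) (2 * |x|) {0}ᶜ x := by
    intro x hx
    have h := (hasDerivAt_id x).mul (hasDerivAt_abs hx)
    have e : (2 * |x| : ℝ) = 1 * |x| + id x * (SignType.sign x : ℝ) := by
      rw [id, self_mul_sign]; ring
    rw [e]
    exact h.hasDerivWithinAt
  have h := lintegral_image_eq_lintegral_abs_deriv_mul (measurableSet_singleton (0:ℝ)).compl hder hinj
    (fun v => J γ (k * (B - |v|)))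
  have e : ∫⁻ u, ENNReal.ofReal |2 * u| * J γ (k * (B - u ^ 2)) =
      ∫⁻ x in {0}ᶜ, ENNReal.ofReal |2 * (|x|)| * J γ (k * (B - |x * (|x|)|)) := by
    rw [← lintegral_add_compl _ (measurableSet_singleton (0:ℝ))]
    simp [abs_mul, sq]
  rw [e, ← h]
  refine (setLIntegral_le_lintegral _ _).trans ?_
  calc ∫⁻ v, J γ (k * (B - |v|)) ≤ ∫⁻ v, (J γ (k * (B - v)) + J γ (k * (v + B))) := by
        apply lintegral_mono; intro v
        simp only
        rcases abs_choice v with h | h <;> rw [h]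
        · exact le_self_add
        · rw [show B - -v = v + B by ring]; exact le_add_self
    _ = _ := by
        rw [lintegral_add_left (by fun_prop), lintegral_sub_left_eq_self (fun x => J γ (k * x)) B,
          lintegral_add_right_eq_self (fun x => J γ (k * x)) B, scale1 hk]
        ring
end Tri

namespace Tri
open scoped ENNReal

/-- good pairs: frozen variable `w`, gap `g` of the two others -/
def S (P : ℝ) : Set (ℝ × ℝ) :=
  {q | |q.1| ≤ 1 ∨ (1 ≤ |q.1| ∧ ((3 * q.1 - P) ^ 4 ≤ 16 * |q.1| ∨ |q.1| ≤ (P - q.1 - 2 * q.2) ^ 4))}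

lemma measurableSet_S (P : ℝ) : MeasurableSet (S P) := by
  have e : S P = {q | |q.1| ≤ 1} ∪ ({q | 1 ≤ |q.1|} ∩ ({q | (3 * q.1 - P) ^ 4 ≤ 16 * |q.1|} ∪
    {q | |q.1| ≤ (P - q.1 - 2 * q.2) ^ 4})) := by
    ext q; simp [S]
  rw [e]
  refine .union ?_ (.inter ?_ (.union ?_ ?_)) <;>
  exact measurableSet_le (by fun_prop) (by fun_prop)

lemma cover_max (P x y z : ℝ) (hP : x + y + z = P) (hx : |x| ≤ |z|) (hy : |y| ≤ |z|) :
    (x, y) ∈ S P ∨ (y, x) ∈ S P ∨ (z, x) ∈ S P := by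
  by_cases h1 : |z| ≤ 1
  · right; right; left; exact h1
  by_cases h2 : |x| ≤ 1
  · left; left; exact h2
  by_cases h3 : |y| ≤ 1
  · right; left; left; exact h3
  push Not at h1 h2 h3
  by_cases h4 : |x| ≤ (P - x - 2 * y) ^ 4
  · left; right; exact ⟨h2.le, .inr h4⟩
  by_cases h5 : |y| ≤ (P - y - 2 * x) ^ 4
  · right; left; right; exact ⟨h3.le, .inr h5⟩
  right; right; right
  refine ⟨h1.le, .inl ?_⟩
  push Not at h4 h5
  have e1 : P - x - 2 * y = z - y := by linarith
  have e2 : P - y - 2 * x = z - x := by linarith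
  have e3 : 3 * z - P = (z - y) + (z - x) := by linarith
  rw [e1] at h4; rw [e2] at h5
  simp only [e3]
  have : ((z - y) + (z - x)) ^ 4 ≤ 8 * ((z - y) ^ 4 + (z - x) ^ 4) := by
    generalize z - y = a
    generalize z - x = b
    nlinarith [sq_nonneg (a - b), sq_nonneg (a + b), sq_nonneg (a^2 - b^2), mul_nonneg (sq_nonneg (a-b)) (sq_nonneg (a+b)), mul_nonneg (sq_nonneg (a-b)) (sq_nonneg (a-b)), mul_nonneg (sq_nonneg (a-b)) (sq_nonneg a), mul_nonneg (sq_nonneg (a-b)) (sq_nonneg b)]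
  linarith

lemma cover (P y z : ℝ) :
    (y, z) ∈ S P ∨ (z, y) ∈ S P ∨ (P - y - z, y) ∈ S P := by
  have sw : ∀ a b : ℝ, (a, b) ∈ S P → (a, P - a - b) ∈ S P := by
    intro a b h
    rcases h with h | ⟨h, h'⟩
    · exact .inl h
    · refine .inr ⟨h, h'.imp id ?_⟩
      intro h
      have : (P - a - 2 * (P - a - b)) ^ 4 = (P - a - 2 * b) ^ 4 := by ring
      simpa only [this] using h
  set a := P - y - z with ha
  rcases le_total |y| |z| with h1 | h1
  · rcases le_total |z| |a| with h2 | h2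
    · exact cover_max P y z a (by rw [ha]; ring) (h1.trans h2) h2
    · rcases cover_max P y a z (by rw [ha]; ring) h1 h2 with h | h | h
      · left; simpa [ha] using sw _ _ h
      · exact .inr (.inr h)
      · exact .inr (.inl h)
  · rcases le_total |y| |a| with h2 | h2
    · exact cover_max P y z a (by rw [ha]; ring) h2 (h1.trans h2)
    · rcases cover_max P z a y (by rw [ha]; ring) h1 h2 with h | h | h
      · right; left; simpa [ha] using sw _ _ h
      · right; right
        have h' := sw _ _ h
        rwa [show P - a - z = y by rw [ha]; ring] at h'
      · exact .inl h

noncomputable def Psi (γ m P w v : ℝ) : ℝ≥0∞ :=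
  (S P).indicator (fun q => J γ (m + 3 * q.1 * q.2 * (P - q.1 - q.2))) (w, v)

lemma measurable_Psi (γ m P : ℝ) : Measurable (fun q : ℝ × ℝ => Psi γ m P q.1 q.2) := by
  unfold Psi
  have := measurable_J γ
  exact Measurable.indicator (by fun_prop) (measurableSet_S P)

lemma J_le_Psi (γ m P y z : ℝ) : J γ (m + 3 * y * z * (P - y - z)) ≤
    Psi γ m P y z + Psi γ m P z y + Psi γ m P (P - y - z) y := by
  rcases cover P y z with h | h | h
  · rw [add_assoc]
    refine le_trans (le_of_eq ?_) le_self_add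
    unfold Psi; rw [Set.indicator_of_mem h]
  · refine le_trans (le_trans (le_of_eq ?_) le_add_self) le_self_add
    unfold Psi; rw [Set.indicator_of_mem h]
    congr 1; ring
  · refine le_trans (le_of_eq ?_) le_add_self
    unfold Psi; rw [Set.indicator_of_mem h]
    congr 1; ring

lemma J_int_le (γ m P : ℝ) : ∫⁻ y, ∫⁻ z, J γ (m + 3 * y * z * (P - y - z)) ≤
    3 * ∫⁻ w, ∫⁻ v, Psi γ m P w v := by
  have hm := measurable_Psi γ m P
  have hm1 : Measurable (fun q : ℝ × ℝ => Psi γ m P q.2 q.1) := hm.comp measurable_swap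
  have hm3 : Measurable (fun q : ℝ × ℝ => Psi γ m P (P - q.1 - q.2) q.1) :=
    hm.comp (f := fun q : ℝ × ℝ => (P - q.1 - q.2, q.1)) (by fun_prop)
  have s (y : ℝ) : Measurable (fun z => Psi γ m P y z) := hm.comp (f := fun z => (y, z)) (by fun_prop)
  have s1 (y : ℝ) : Measurable (fun z => Psi γ m P z y) := hm.comp (f := fun z => (z, y)) (by fun_prop)
  calc _ ≤ ∫⁻ y, ∫⁻ z, (Psi γ m P y z + Psi γ m P z y + Psi γ m P (P - y - z) y) :=
        lintegral_mono fun y => lintegral_mono fun z => J_le_Psi γ m P y z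
    _ = ∫⁻ y, (∫⁻ z, Psi γ m P y z) + (∫⁻ z, Psi γ m P z y) + (∫⁻ z, Psi γ m P z y) := by
        congr 1; ext y
        rw [lintegral_add_left (f := fun z => Psi γ m P y z + Psi γ m P z y) ((s y).add (s1 y)), lintegral_add_left (s y),
          lintegral_sub_left_eq_self (fun z => Psi γ m P z y) (P - y)]
    _ = (∫⁻ y, ∫⁻ z, Psi γ m P y z) + (∫⁻ y, ∫⁻ z, Psi γ m P z y) + (∫⁻ y, ∫⁻ z, Psi γ m P z y) := by
        rw [lintegral_add_left, lintegral_add_left]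
        · exact hm.lintegral_prod_right'
        · exact hm.lintegral_prod_right'.add hm1.lintegral_prod_right'
    _ = _ := by
        rw [lintegral_lintegral_swap (f := fun y z => Psi γ m P z y) hm1.aemeasurable]
        ring

/-- majorant in the frozen variable -/
noncomputable def Maj (P w : ℝ) : ℝ≥0∞ :=
  (Set.Icc (-1) 1).indicator (fun w => ENNReal.ofReal (|w| ^ (-(1/2) : ℝ))) w + T (3 * w - P) + J (5/4) w

lemma Psi_slice {γ : ℝ} (hγ : 1 < γ) : ∃ C < ∞, ∀ m P w, w ≠ 0 → 
    ∫⁻ v, Psi γ m P w v ≤ C * Maj P w := by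
  have hT := T_fin
  have hJ := J_fin hγ
  refine ⟨5 * (2 * ∫⁻ x, T x) + 4 * (2 * ∫⁻ x, J γ x), ?_, ?_⟩
  · exact ENNReal.add_lt_top.2 ⟨ENNReal.mul_lt_top (by simp) (ENNReal.mul_lt_top (by simp) hT),
      ENNReal.mul_lt_top (by simp) (ENNReal.mul_lt_top (by simp) hJ)⟩
  intro m P w hw
  have hw' : 0 < |w| := abs_pos.2 hw
  set k := 3 * |w| with hk
  have hk0 : 0 < k := by positivity
  set q := (P - w) / 2 with hq
  set B := q ^ 2 + m / (3 * w) with hB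
  have hJeq (u : ℝ) : J γ (m + 3 * w * (u + q) * (P - w - (u + q))) = J γ (k * (B - u ^ 2)) := by
    have : m + 3 * w * (u + q) * (P - w - (u + q)) = 3 * w * (B - u ^ 2) := by
      rw [hB, hq]; field_simp; ring
    rw [this, ← J_abs γ (3 * w * (B - u ^ 2)), ← J_abs γ (k * _), abs_mul, abs_mul k, abs_mul, hk, abs_mul, abs_abs]
  have hle (u : ℝ) : Psi γ m P w (u + q) ≤ J γ (k * (B - u ^ 2)) := by
    rw [← hJeq]; unfold Psi
    exact Set.indicator_le_self _ (fun q : ℝ × ℝ => J γ (m + 3 * q.1 * q.2 * (P - q.1 - q.2))) _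
  rw [← lintegral_add_right_eq_self _ q]
  have hsq : (√k)⁻¹ ≤ (√|w|)⁻¹ := by
    apply inv_anti₀ (Real.sqrt_pos.2 hw') (Real.sqrt_le_sqrt (by rw [hk]; linarith))
  have hgen : ∫⁻ u, Psi γ m P w (u + q) ≤ ENNReal.ofReal (√|w|)⁻¹ * (2 * ∫⁻ x, T x) := by
    refine ((lintegral_mono hle).trans (L1 hγ hk0 B)).trans ?_
    gcongr
  by_cases h1 : |w| ≤ 1
  · refine hgen.trans ?_
    rw [mul_comm]
    gcongr
    · refine le_trans ?_ le_self_add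
      exact le_mul_of_one_le_left (by simp) (by norm_num)
    · unfold Maj
      rw [add_assoc]
      refine le_trans ?_ le_self_add
      rw [Set.indicator_of_mem (Set.mem_Icc.2 (abs_le.1 h1))]
      apply ENNReal.ofReal_le_ofReal
      rw [Real.rpow_neg hw'.le, Real.sqrt_eq_rpow]
  push Not at h1
  by_cases h2 : (3 * w - P) ^ 4 ≤ 16 * |w|
  · refine hgen.trans ?_
    have h3 : (√|w|)⁻¹ ≤ 5 * (1 + (3 * w - P) ^ 2)⁻¹ := by
      have hs : 1 ≤ √|w| := by rw [Real.one_le_sqrt]; exact h1.le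
      rw [← div_eq_mul_inv, inv_eq_one_div, div_le_div_iff₀ (by linarith) (by positivity)]
      have : (3 * w - P) ^ 2 ≤ 4 * √|w| := by
        refine (sq_le_sq₀ (by positivity) (by positivity)).1 ?_
        rw [mul_pow, Real.sq_sqrt hw'.le]
        linarith
      linarith
    calc _ ≤ ENNReal.ofReal (5 * (1 + (3 * w - P) ^ 2)⁻¹) * (2 * ∫⁻ x, T x) := by gcongr
      _ = (5 * (2 * ∫⁻ x, T x)) * T (3 * w - P) := by
          rw [ENNReal.ofReal_mul (by norm_num), T]
          simp only [ENNReal.ofReal_ofNat]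
          ring
      _ ≤ _ := by
          unfold Maj
          gcongr
          · exact le_self_add
          · exact le_trans le_add_self le_self_add
  · have h4 (u : ℝ) : Psi γ m P w (u + q) ≤
        ENNReal.ofReal (|w| ^ (-(1/4) : ℝ)) * (ENNReal.ofReal |2 * u| * J γ (k * (B - u ^ 2))) := by
      by_cases h5 : |w| ≤ (2 * u) ^ 4
      · refine (hle u).trans ?_
        rw [← mul_assoc, ← ENNReal.ofReal_mul (by positivity)]
        refine le_mul_of_one_le_left (by simp) ?_
        rw [ENNReal.one_le_ofReal, Real.rpow_neg hw'.le, inv_mul_eq_div, one_le_div (by positivity)]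
        calc |w| ^ (1/4 : ℝ) ≤ ((|2 * u|) ^ (4:ℕ)) ^ (1/4 : ℝ) := by
              apply Real.rpow_le_rpow hw'.le _ (by norm_num)
              rw [Even.pow_abs (by decide)]; exact h5
          _ = |2 * u| := by
              rw [← Real.rpow_natCast, ← Real.rpow_mul (by positivity)]; norm_num
      · unfold Psi
        rw [Set.indicator_of_notMem]
        · simp
        · rintro (h | ⟨_, h | h⟩)
          · exact absurd h (not_le.2 h1)
          · exact h2 h
          · apply h5
            have : (P - w - 2 * (u + q)) ^ 4 = (2 * u) ^ 4 := by rw [hq]; ring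
            simpa only [this] using h
    calc _ ≤ ∫⁻ u, ENNReal.ofReal (|w| ^ (-(1/4) : ℝ)) * (ENNReal.ofReal |2 * u| * J γ (k * (B - u ^ 2))) :=
          lintegral_mono h4
      _ = ENNReal.ofReal (|w| ^ (-(1/4) : ℝ)) * ∫⁻ u, ENNReal.ofReal |2 * u| * J γ (k * (B - u ^ 2)) :=
          lintegral_const_mul' _ _ ENNReal.ofReal_ne_top
      _ ≤ ENNReal.ofReal (|w| ^ (-(1/4) : ℝ)) * (ENNReal.ofReal k⁻¹ * (2 * ∫⁻ x, J γ x)) := by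
          gcongr; exact L2 hγ hk0 B
      _ = ENNReal.ofReal (|w| ^ (-(1/4) : ℝ) * k⁻¹) * (2 * ∫⁻ x, J γ x) := by
          rw [ENNReal.ofReal_mul (by positivity)]; ring
      _ ≤ ENNReal.ofReal (4 * (1 + |w|) ^ (-(5/4) : ℝ)) * (2 * ∫⁻ x, J γ x) := by
          refine mul_le_mul_left (ENNReal.ofReal_le_ofReal ?_) _
          calc |w| ^ (-(1/4) : ℝ) * k⁻¹ ≤ |w| ^ (-(1/4) : ℝ) * |w|⁻¹ := by
                gcongr; rw [hk]; linarith
            _ = |w| ^ (-(5/4) : ℝ) := by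
                rw [← Real.rpow_neg_one, ← Real.rpow_add hw']; norm_num
            _ ≤ (2⁻¹ * (1 + |w|)) ^ (-(5/4) : ℝ) := by
                apply Real.rpow_le_rpow_of_nonpos (by positivity) (by linarith) (by norm_num)
            _ = (2⁻¹ : ℝ) ^ (-(5/4) : ℝ) * (1 + |w|) ^ (-(5/4) : ℝ) := by
                rw [Real.mul_rpow (by norm_num) (by positivity)]
            _ ≤ _ := by
                gcongr
                rw [Real.rpow_neg (by norm_num), Real.inv_rpow (by norm_num), inv_inv]
                calc (2:ℝ) ^ (5/4 : ℝ) ≤ 2 ^ (2:ℝ) :=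
                      Real.rpow_le_rpow_of_exponent_le (by norm_num) (by norm_num)
                  _ = 4 := by norm_num
      _ = (4 * (2 * ∫⁻ x, J γ x)) * J (5/4) w := by
          rw [ENNReal.ofReal_mul (by norm_num), J]
          simp only [ENNReal.ofReal_ofNat]
          ring
      _ ≤ _ := by
          unfold Maj
          gcongr
          · exact le_add_self
          · exact le_add_self

lemma Maj_fin : ∃ C < ∞, ∀ P, ∫⁻ w, Maj P w ≤ C := by
  have h1 : ∫⁻ w, (Set.Icc (-1) 1).indicator (fun w => ENNReal.ofReal (|w| ^ (-(1/2) : ℝ))) w < ∞ := by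
    rw [lintegral_indicator measurableSet_Icc]
    have h0 : IntervalIntegrable (fun x : ℝ => |x| ^ (-(1/2) : ℝ)) volume (-1) 1 := by
      have hp : IntervalIntegrable (fun x : ℝ => |x| ^ (-(1/2) : ℝ)) volume 0 1 := by
        refine (intervalIntegral.intervalIntegrable_rpow' (r := -(1/2)) (by norm_num)).congr ?_
        intro x hx
        rw [Set.uIoc_of_le zero_le_one] at hx
        simp [abs_of_pos hx.1]
      have hn : IntervalIntegrable (fun x : ℝ => |x| ^ (-(1/2) : ℝ)) volume (-1) 0 := by
        have := (hp.comp_mul_left (c := -1)).symm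
        simpa using this
      exact hn.trans hp
    have h2 := ((intervalIntegrable_iff_integrableOn_Icc_of_le (by norm_num)).1 h0).lintegral_lt_top
    exact h2
  refine ⟨_, ENNReal.add_lt_top.2 ⟨ENNReal.add_lt_top.2 ⟨h1,
    ENNReal.mul_lt_top (a := ENNReal.ofReal 3⁻¹) (by simp) T_fin⟩, J_fin (γ := 5/4) (by norm_num)⟩, fun P => ?_⟩
  unfold Maj
  have hT := measurable_T
  have hm : Measurable (Set.indicator (Set.Icc (-1:ℝ) 1) (fun w => ENNReal.ofReal (|w| ^ (-(1/2) : ℝ)))) :=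
    Measurable.indicator (by fun_prop) measurableSet_Icc
  rw [lintegral_add_right _ (measurable_J _), lintegral_add_left hm, ← scale1 (by norm_num),
    ← lintegral_sub_right_eq_self (fun w => T (3 * w)) (P / 3)]
  apply le_of_eq
  congr 3
  ext w
  congr 1; ring

lemma K_bound {γ : ℝ} (hγ : 1 < γ) : ∃ C < ∞, ∀ m P,
    ∫⁻ y, ∫⁻ z, J γ (m + 3 * y * z * (P - y - z)) ≤ C := by
  obtain ⟨C, hC, h⟩ := Psi_slice hγ
  obtain ⟨D, hD, h'⟩ := Maj_fin
  refine ⟨3 * (C * D), ENNReal.mul_lt_top (by simp) (ENNReal.mul_lt_top hC hD), fun m P => ?_⟩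
  refine (J_int_le γ m P).trans ?_
  gcongr
  calc _ ≤ ∫⁻ w, C * Maj P w := by
        apply lintegral_mono_ae
        have : ∀ᵐ w : ℝ, w ≠ 0 := by simp [ae_iff]
        filter_upwards [this] with w hw using h m P w hw
    _ = C * ∫⁻ w, Maj P w := lintegral_const_mul' _ _ hC.ne
    _ ≤ _ := by gcongr; exact h' P
end Tri

namespace Tri
open scoped ENNReal

/-- the weight `(1+|τ-ξ³|)^a` -/
noncomputable def R (a : ℝ) (p : ℝ × ℝ) : ℝ≥0∞ := ENNReal.ofReal ((1 + |p.2 - p.1 ^ 3|) ^ a)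

lemma measurable_R (a : ℝ) : Measurable (R a) := by unfold R; fun_prop

lemma R_mul_neg (a : ℝ) (p : ℝ × ℝ) : R a p * R (-a) p = 1 := by
  have : 0 < 1 + |p.2 - p.1 ^ 3| := by positivity
  unfold R
  rw [← ENNReal.ofReal_mul (by positivity), ← Real.rpow_add this]
  simp

lemma R_sq (a : ℝ) (p : ℝ × ℝ) : R a p ^ 2 = R (2 * a) p := by
  have : 0 < 1 + |p.2 - p.1 ^ 3| := by positivity
  unfold R
  rw [← ENNReal.ofReal_pow (by positivity), ← Real.rpow_natCast, ← Real.rpow_mul this.le]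
  congr 2; push_cast; ring

lemma R_J (γ : ℝ) (p : ℝ × ℝ) : R (-γ) p = J γ (p.2 - p.1 ^ 3) := rfl

lemma kernel_bound {γ : ℝ} (hγ : 1 < γ) : ∃ C < ∞, ∀ p : ℝ × ℝ,
    ∫⁻ t : ℝ × ℝ, ∫⁻ s : ℝ × ℝ, R (-γ) t * R (-γ) s * R (-γ) (p - t - s) ≤ C := by
  obtain ⟨K, hK, h⟩ := K_bound hγ
  have hg : 0 ≤ γ := by linarith
  have hJ := measurable_J γ
  refine ⟨CJ γ * CJ γ * K, ENNReal.mul_lt_top (ENNReal.mul_lt_top (CJ_lt hγ) (CJ_lt hγ)) hK, ?_⟩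
  rintro ⟨ξ, τ⟩
  have hR := measurable_R (-γ)
  -- inner integral
  have inner (t : ℝ × ℝ) : ∫⁻ s : ℝ × ℝ, R (-γ) t * R (-γ) s * R (-γ) ((ξ, τ) - t - s) ≤
      ∫⁻ y, R (-γ) t * (CJ γ * J γ ((τ - t.2) - (ξ - t.1 - y) ^ 3 - y ^ 3)) := by
    rw [Measure.volume_eq_prod, lintegral_prod _ (by fun_prop)]
    apply lintegral_mono
    intro y
    simp only [mul_assoc]
    rw [lintegral_const_mul _ (by fun_prop)]
    gcongr
    refine le_trans (le_of_eq ?_) (J_conv hg (y ^ 3) ((τ - t.2) - (ξ - t.1 - y) ^ 3))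
    congr 1; ext s
    simp only [R_J, Prod.fst_sub, Prod.snd_sub]
    congr 2; ring
  refine (lintegral_mono inner).trans ?_
  have hmeas : Measurable (fun q : (ℝ × ℝ) × ℝ =>
    R (-γ) q.1 * (CJ γ * J γ ((τ - q.1.2) - (ξ - q.1.1 - q.2) ^ 3 - q.2 ^ 3))) := by fun_prop
  rw [Measure.volume_eq_prod, lintegral_prod _ (hmeas.lintegral_prod_right').aemeasurable]
  calc _ = ∫⁻ x, ∫⁻ y, ∫⁻ r, R (-γ) (x, r) * (CJ γ * J γ ((τ - r) - (ξ - x - y) ^ 3 - y ^ 3)) := by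
        congr 1; ext x
        rw [lintegral_lintegral_swap]
        fun_prop
    _ ≤ ∫⁻ x, ∫⁻ y, CJ γ * CJ γ * J γ (τ - (ξ - x - y) ^ 3 - y ^ 3 - x ^ 3) := by
        apply lintegral_mono; intro x
        apply lintegral_mono; intro y
        simp only [R_J]
        calc _ = ∫⁻ r, CJ γ * (J γ (r - x ^ 3) * J γ ((τ - (ξ - x - y) ^ 3 - y ^ 3) - r)) := by
              congr 1; ext r
              rw [mul_left_comm]
              congr 3; ring
          _ = CJ γ * ∫⁻ r, (J γ (r - x ^ 3) * J γ ((τ - (ξ - x - y) ^ 3 - y ^ 3) - r)) :=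
              lintegral_const_mul' _ _ (CJ_lt hγ).ne
          _ ≤ _ := by
              rw [mul_assoc]
              gcongr
              exact J_conv hg _ _
    _ = CJ γ * CJ γ * ∫⁻ x, ∫⁻ y, J γ (τ - (ξ - x - y) ^ 3 - y ^ 3 - x ^ 3) := by
        have hne : CJ γ * CJ γ ≠ ∞ := (ENNReal.mul_lt_top (CJ_lt hγ) (CJ_lt hγ)).ne
        simp_rw [lintegral_const_mul' _ _ hne]
    _ ≤ _ := by
        gcongr
        refine le_trans (le_of_eq ?_) (h (τ - ξ ^ 3) (2 * ξ))
        rw [← lintegral_sub_left_eq_self _ ξ]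
        congr 1; ext x
        rw [← lintegral_sub_left_eq_self _ ξ]
        congr 1; ext y
        congr 1; ring

lemma cs {α : Type*} [MeasurableSpace α] (μ : Measure α) {f g : α → ℝ≥0∞}
    (hf : AEMeasurable f μ) (hg : AEMeasurable g μ) :
    (∫⁻ a, f a * g a ∂μ) ^ 2 ≤ (∫⁻ a, f a ^ 2 ∂μ) * ∫⁻ a, g a ^ 2 ∂μ := by
  have h := ENNReal.lintegral_mul_le_Lp_mul_Lq μ (p := 2) (q := 2)
    (by constructor <;> norm_num) hf hg
  refine (pow_le_pow_left' h 2).trans (le_of_eq ?_)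
  rw [mul_pow, ← ENNReal.rpow_natCast, ← ENNReal.rpow_mul, ← ENNReal.rpow_natCast, ← ENNReal.rpow_mul]
  norm_num

lemma conv_bound {b : ℝ} (hb : 1 / 2 < b) : ∃ C < ∞, ∀ F₁ F₂ F₃ : ℝ × ℝ → ℝ≥0∞,
    Measurable F₁ → Measurable F₂ → Measurable F₃ →
    ∫⁻ p : ℝ × ℝ, (∫⁻ t : ℝ × ℝ, ∫⁻ s : ℝ × ℝ, F₁ t * F₂ s * F₃ (p - t - s)) ^ 2 ≤
      C * ((∫⁻ p, R (2 * b) p * F₁ p ^ 2) * (∫⁻ p, R (2 * b) p * F₂ p ^ 2) *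
        ∫⁻ p, R (2 * b) p * F₃ p ^ 2) := by
  obtain ⟨C, hC, h⟩ := kernel_bound (γ := 2 * b) (by linarith)
  refine ⟨C, hC, fun F₁ F₂ F₃ h1 h2 h3 => ?_⟩
  have hR := measurable_R
  set G₁ : ℝ × ℝ → ℝ≥0∞ := fun p => R (2 * b) p * F₁ p ^ 2 with hG1
  set G₂ : ℝ × ℝ → ℝ≥0∞ := fun p => R (2 * b) p * F₂ p ^ 2 with hG2
  set G₃ : ℝ × ℝ → ℝ≥0∞ := fun p => R (2 * b) p * F₃ p ^ 2 with hG3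
  have m1 : Measurable G₁ := ((hR _).mul (h1.pow_const 2))
  have m2 : Measurable G₂ := ((hR _).mul (h2.pow_const 2))
  have m3 : Measurable G₃ := ((hR _).mul (h3.pow_const 2))
  have point (p : ℝ × ℝ) : (∫⁻ t : ℝ × ℝ, ∫⁻ s : ℝ × ℝ, F₁ t * F₂ s * F₃ (p - t - s)) ^ 2 ≤
      C * ∫⁻ t : ℝ × ℝ, ∫⁻ s : ℝ × ℝ, G₁ t * G₂ s * G₃ (p - t - s) := by
    set μ : Measure ((ℝ × ℝ) × (ℝ × ℝ)) := (volume : Measure (ℝ × ℝ)).prod volume with hμ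
    set f : (ℝ × ℝ) × (ℝ × ℝ) → ℝ≥0∞ := fun q =>
      (R b q.1 * F₁ q.1) * (R b q.2 * F₂ q.2) * (R b (p - q.1 - q.2) * F₃ (p - q.1 - q.2)) with hf
    set g : (ℝ × ℝ) × (ℝ × ℝ) → ℝ≥0∞ := fun q =>
      R (-b) q.1 * R (-b) q.2 * R (-b) (p - q.1 - q.2) with hg
    have hRb := hR b
    have hRb' := hR (-b)
    have hRb2 := hR (-(2 * b))
    have mf : Measurable f := by fun_prop
    have mg : Measurable g := by fun_prop
    have e1 : ∫⁻ t : ℝ × ℝ, ∫⁻ s : ℝ × ℝ, F₁ t * F₂ s * F₃ (p - t - s) = ∫⁻ q, f q * g q ∂μ := by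
      rw [hμ, lintegral_prod _ (by fun_prop)]
      congr 1; ext t; congr 1; ext s
      simp only [hf, hg]
      calc _ = (R b t * R (-b) t) * (R b s * R (-b) s) * (R b (p - t - s) * R (-b) (p - t - s)) *
            (F₁ t * F₂ s * F₃ (p - t - s)) := by simp only [R_mul_neg, one_mul]
        _ = _ := by ring
    have e2 : ∫⁻ q, f q ^ 2 ∂μ = ∫⁻ t : ℝ × ℝ, ∫⁻ s : ℝ × ℝ, G₁ t * G₂ s * G₃ (p - t - s) := by
      rw [hμ, lintegral_prod _ (by fun_prop)]
      congr 1; ext t; congr 1; ext s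
      simp only [hf, hG1, hG2, hG3, mul_pow, R_sq]
    have e3 : ∫⁻ q, g q ^ 2 ∂μ ≤ C := by
      refine le_trans (le_of_eq ?_) (h p)
      rw [hμ, lintegral_prod _ (by fun_prop)]
      congr 1; ext t; congr 1; ext s
      simp only [hg, mul_pow, R_sq]
      ring_nf
    rw [e1]
    refine (cs μ mf.aemeasurable mg.aemeasurable).trans ?_
    rw [e2, mul_comm]
    gcongr
  refine (lintegral_mono point).trans ?_
  rw [lintegral_const_mul' _ _ hC.ne]
  gcongr
  apply le_of_eq
  have A : Measurable (fun q : (ℝ × ℝ) × (ℝ × ℝ) => ∫⁻ s : ℝ × ℝ, G₁ q.2 * G₂ s * G₃ (q.1 - q.2 - s)) := by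
    apply Measurable.lintegral_prod_right'
      (f := fun x : ((ℝ × ℝ) × (ℝ × ℝ)) × (ℝ × ℝ) => G₁ x.1.2 * G₂ x.2 * G₃ (x.1.1 - x.1.2 - x.2))
    fun_prop
  rw [lintegral_lintegral_swap A.aemeasurable]
  calc _ = ∫⁻ t, ∫⁻ s, ∫⁻ p, G₁ t * G₂ s * G₃ (p - t - s) := by
        congr 1; ext t
        rw [lintegral_lintegral_swap]
        fun_prop
    _ = ∫⁻ t, ∫⁻ s, G₁ t * G₂ s * ∫⁻ p, G₃ p := by
        congr 1; ext t; congr 1; ext s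
        rw [lintegral_const_mul _ (by fun_prop)]
        simp_rw [sub_sub]
        rw [lintegral_sub_right_eq_self]
    _ = _ := by
        simp_rw [mul_assoc]
        calc _ = ∫⁻ t, G₁ t * ∫⁻ s, G₂ s * ∫⁻ p, G₃ p := by
              congr 1; ext t; rw [lintegral_const_mul _ (by fun_prop)]
          _ = _ := by
              rw [lintegral_mul_const _ m1, lintegral_mul_const _ m2]
end Tri

namespace Tri
open scoped ENNReal SchwartzMap FourierTransform

abbrev E2 := WithLp 2 (ℝ × ℝ)

/-- transport to the Euclidean plane -/
noncomputable def tr (U : 𝓢(ℝ × ℝ, ℂ)) : 𝓢(E2, ℂ) :=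
  SchwartzMap.compCLMOfContinuousLinearEquiv ℂ (WithLp.prodContinuousLinearEquiv 2 ℝ ℝ ℝ) U

lemma tr_apply (U : 𝓢(ℝ × ℝ, ℂ)) (p : ℝ × ℝ) : tr U (WithLp.toLp 2 p) = U p := rfl

/-- the Fourier transform of the statement -/
noncomputable def hat (U : 𝓢(ℝ × ℝ, ℂ)) (p : ℝ × ℝ) : ℂ :=
  ∫ q : ℝ × ℝ, Complex.exp (-Complex.I * (q.1 * p.1 + q.2 * p.2)) * U q

lemma lint_toLp (f : E2 → ℝ≥0∞) : ∫⁻ x, f x = ∫⁻ p : ℝ × ℝ, f (WithLp.toLp 2 p) :=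
  ((WithLp.volume_preserving_toLp ℝ ℝ).lintegral_comp_emb
    (MeasurableEquiv.toLp 2 (ℝ × ℝ)).measurableEmbedding f).symm

lemma int_toLp (f : E2 → ℂ) : ∫ x, f x = ∫ p : ℝ × ℝ, f (WithLp.toLp 2 p) :=
  ((WithLp.volume_preserving_toLp ℝ ℝ).integral_comp
    (MeasurableEquiv.toLp 2 (ℝ × ℝ)).measurableEmbedding f).symm

lemma inv_eq_hat (U : 𝓢(ℝ × ℝ, ℂ)) (p : ℝ × ℝ) :
    (𝓕⁻ (tr U)) (WithLp.toLp 2 p) = hat U ((-(2 * Real.pi)) • p) := by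
  rw [SchwartzMap.fourierInv_coe, Real.fourierInv_eq', int_toLp]
  unfold hat
  congr 1; ext q
  rw [smul_eq_mul, tr_apply]
  congr 2
  simp [WithLp.prod_inner_apply]
  ring

/-- `hat` as a Schwartz function -/
noncomputable def hatS (U : 𝓢(ℝ × ℝ, ℂ)) : 𝓢(ℝ × ℝ, ℂ) :=
  SchwartzMap.compCLMOfContinuousLinearEquiv ℂ
    ((ContinuousLinearEquiv.smulLeft (Units.mk0 (-(2 * Real.pi))⁻¹ (by simp [Real.pi_ne_zero]))).trans
      (WithLp.prodContinuousLinearEquiv 2 ℝ ℝ ℝ).symm) (𝓕⁻ (tr U))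

lemma hatS_apply (U : 𝓢(ℝ × ℝ, ℂ)) (p : ℝ × ℝ) : hatS U p = hat U p := by
  have : hatS U p = (𝓕⁻ (tr U)) (WithLp.toLp 2 ((-(2 * Real.pi))⁻¹ • p)) := rfl
  rw [this, inv_eq_hat, smul_smul, mul_inv_cancel₀ (by simp [Real.pi_ne_zero]), one_smul]

lemma weight_int (H : 𝓢(ℝ × ℝ, ℂ)) {a : ℝ} (ha : 0 ≤ a) :
    Integrable (fun p : ℝ × ℝ => (1 + |p.2 - p.1 ^ 3|) ^ a * ‖H p‖ ^ 2) := by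
  obtain ⟨n, hn⟩ := exists_nat_ge (3 * a)
  obtain ⟨M, hM⟩ : ∃ M, ∀ p, ‖H p‖ ≤ M :=
    ⟨‖H.toBoundedContinuousFunction‖, fun p => H.toBoundedContinuousFunction.norm_coe_le_norm p⟩
  have hi : Integrable (fun p : ℝ × ℝ => (2 ^ a * 2 ^ (n - 1) * M) * (‖H p‖ + ‖p‖ ^ n * ‖H p‖)) :=
    (H.integrable.norm.add (H.integrable_pow_mul volume n)).const_mul _
  refine hi.mono' ?_ ?_
  · have := H.continuous.measurable
    exact Measurable.aestronglyMeasurable (by fun_prop)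
  · refine Filter.Eventually.of_forall fun p => ?_
    have h1 : |p.1| ≤ ‖p‖ := norm_fst_le p
    have h2 : |p.2| ≤ ‖p‖ := norm_snd_le p
    have h0 : 0 ≤ ‖p‖ := norm_nonneg p
    have h3 : 1 + |p.2 - p.1 ^ 3| ≤ 2 * (1 + ‖p‖) ^ 3 := by
      have : |p.2 - p.1 ^ 3| ≤ ‖p‖ + ‖p‖ ^ 3 := by
        refine (abs_sub _ _).trans ?_
        rw [abs_pow]; gcongr
      nlinarith [pow_nonneg h0 2, pow_nonneg h0 3]
    have h4 : (1 + |p.2 - p.1 ^ 3|) ^ a ≤ 2 ^ a * (2 ^ (n - 1) * (1 + ‖p‖ ^ n)) := by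
      calc _ ≤ (2 * (1 + ‖p‖) ^ 3) ^ a := Real.rpow_le_rpow (by positivity) h3 ha
        _ = 2 ^ a * (1 + ‖p‖) ^ (3 * a) := by
            rw [Real.mul_rpow (by norm_num) (by positivity), ← Real.rpow_natCast, ← Real.rpow_mul (by positivity)]
            norm_num
        _ ≤ 2 ^ a * (1 + ‖p‖) ^ n := by
            gcongr
            rw [← Real.rpow_natCast]
            exact Real.rpow_le_rpow_of_exponent_le (by linarith) hn
        _ ≤ _ := by
            gcongr
            simpa using add_pow_le zero_le_one h0 n
    rw [Real.norm_of_nonneg (by positivity)]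
    calc _ ≤ (2 ^ a * (2 ^ (n - 1) * (1 + ‖p‖ ^ n))) * (M * ‖H p‖) := by
          gcongr
          rw [sq]; gcongr; exact hM p
      _ = _ := by ring

lemma lint_weight (U : 𝓢(ℝ × ℝ, ℂ)) {b : ℝ} (hb : 0 ≤ b) :
    ∫⁻ p, R (2 * b) p * ‖hat U p‖ₑ ^ 2 =
      ENNReal.ofReal (∫ p : ℝ × ℝ, (1 + |p.2 - p.1 ^ 3|) ^ (2 * b) * ‖hat U p‖ ^ 2) := by
  rw [ofReal_integral_eq_lintegral_ofReal]
  · congr 1; ext p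
    rw [ENNReal.ofReal_mul (by positivity), ENNReal.ofReal_pow (by positivity), ofReal_norm, R]
  · simpa only [hatS_apply] using weight_int (hatS U) (a := 2 * b) (by linarith)
  · exact Filter.Eventually.of_forall fun p => by positivity

lemma conv_le (f g : 𝓢(E2, ℂ)) (x : ℝ × ℝ) :
    ‖SchwartzMap.convolution (.mul ℂ ℂ) f g (WithLp.toLp 2 x)‖ₑ ≤
      ∫⁻ t : ℝ × ℝ, ‖f (WithLp.toLp 2 t)‖ₑ * ‖g (WithLp.toLp 2 (x - t))‖ₑ := by
  rw [SchwartzMap.convolution_apply, convolution_def]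
  refine (enorm_integral_le_lintegral_enorm _).trans (le_of_eq ?_)
  rw [lint_toLp]
  simp [enorm_mul]

lemma plancherel (G : 𝓢(E2, ℂ)) : eLpNorm (𝓕 G : 𝓢(E2, ℂ)) 2 volume = eLpNorm G 2 volume := by
  have h := SchwartzMap.norm_fourier_toL2_eq G
  rw [SchwartzMap.norm_toLp, SchwartzMap.norm_toLp] at h
  exact (ENNReal.toReal_eq_toReal_iff' ((𝓕 G).memLp 2 volume).2.ne (G.memLp 2 volume).2.ne).1 h

lemma sq_eLpNorm {α : Type*} [MeasurableSpace α] (μ : Measure α) (f : α → ℂ) :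
    eLpNorm f 2 μ ^ 2 = ∫⁻ x, ‖f x‖ₑ ^ 2 ∂μ := by
  have := eLpNorm_nnreal_pow_eq_lintegral (μ := μ) (f := f) (p := 2) (by norm_num)
  simpa using this

lemma main {b : ℝ} (hb : 1 / 2 < b) : ∃ C < ∞, ∀ U₁ U₂ U₃ : 𝓢(ℝ × ℝ, ℂ),
    ∫⁻ p, ‖U₁ p * U₂ p * U₃ p‖ₑ ^ 2 ≤
      C * ((∫⁻ p, R (2 * b) p * ‖hat U₁ p‖ₑ ^ 2) * (∫⁻ p, R (2 * b) p * ‖hat U₂ p‖ₑ ^ 2) *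
        ∫⁻ p, R (2 * b) p * ‖hat U₃ p‖ₑ ^ 2) := by
  obtain ⟨C, hC, h⟩ := conv_bound hb
  set c : ℝ := -(2 * Real.pi) with hc
  have hc0 : c ≠ 0 := by simp [hc, Real.pi_ne_zero]
  set κ : ℝ≥0∞ := ENNReal.ofReal |(c ^ Module.finrank ℝ (ℝ × ℝ))⁻¹| with hκ
  have hκt : κ < ∞ := ENNReal.ofReal_lt_top
  refine ⟨κ ^ 5 * C, ENNReal.mul_lt_top (ENNReal.pow_lt_top hκt) hC, fun U₁ U₂ U₃ => ?_⟩
  have sc := fun f => scale (volume : Measure (ℝ × ℝ)) hc0 f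
  rw [← hκ] at sc
  set f₁ := 𝓕⁻ (tr U₁) with hf1
  set f₂ := 𝓕⁻ (tr U₂) with hf2
  set f₃ := 𝓕⁻ (tr U₃) with hf3
  set G := SchwartzMap.convolution (.mul ℂ ℂ) f₁ (SchwartzMap.convolution (.mul ℂ ℂ) f₂ f₃) with hG
  have hFG (p : ℝ × ℝ) : (𝓕 G) (WithLp.toLp 2 p) = U₁ p * U₂ p * U₃ p := by
    rw [hG, SchwartzMap.fourier_convolution, SchwartzMap.fourier_convolution, hf1, hf2, hf3]
    simp [tr_apply, mul_assoc]
  have e1 : ∫⁻ p, ‖U₁ p * U₂ p * U₃ p‖ₑ ^ 2 = ∫⁻ p : ℝ × ℝ, ‖G (WithLp.toLp 2 p)‖ₑ ^ 2 := by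
    simp_rw [← hFG]
    rw [← lint_toLp (fun x => ‖(𝓕 G : 𝓢(E2, ℂ)) x‖ₑ ^ 2), ← lint_toLp (fun x => ‖G x‖ₑ ^ 2),
      ← sq_eLpNorm, ← sq_eLpNorm, plancherel]
  have hle (p : ℝ × ℝ) : ‖G (WithLp.toLp 2 p)‖ₑ ≤ κ ^ 2 *
      ∫⁻ t, ∫⁻ s, ‖hat U₁ t‖ₑ * ‖hat U₂ s‖ₑ * ‖hat U₃ (c • p - t - s)‖ₑ := by
    calc _ ≤ ∫⁻ t : ℝ × ℝ, ‖f₁ (WithLp.toLp 2 t)‖ₑ *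
            ∫⁻ s : ℝ × ℝ, ‖f₂ (WithLp.toLp 2 s)‖ₑ * ‖f₃ (WithLp.toLp 2 (p - t - s))‖ₑ := by
          refine (conv_le _ _ p).trans ?_
          gcongr with t
          exact conv_le _ _ _
      _ = ∫⁻ t : ℝ × ℝ, ∫⁻ s : ℝ × ℝ, ‖hat U₁ (c • t)‖ₑ * ‖hat U₂ (c • s)‖ₑ *
            ‖hat U₃ (c • p - c • t - c • s)‖ₑ := by
          congr 1; ext t
          rw [← lintegral_const_mul' _ _ (by simp)]
          congr 1; ext s
          rw [hf1, hf2, hf3, inv_eq_hat, inv_eq_hat, inv_eq_hat, ← hc, smul_sub, smul_sub, mul_assoc]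
      _ = _ := by
          simp_rw [fun t : ℝ × ℝ => sc (fun s => ‖hat U₁ (c • t)‖ₑ * ‖hat U₂ s‖ₑ *
            ‖hat U₃ (c • p - c • t - s)‖ₑ)]
          rw [lintegral_const_mul' _ _ hκt.ne, sc (fun t => ∫⁻ s, ‖hat U₁ t‖ₑ * ‖hat U₂ s‖ₑ *
            ‖hat U₃ (c • p - t - s)‖ₑ)]
          ring
  have hm (U : 𝓢(ℝ × ℝ, ℂ)) : Measurable (fun p => ‖hat U p‖ₑ) := by
    simp_rw [← hatS_apply]
    exact (hatS U).continuous.measurable.enorm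
  rw [e1]
  calc _ ≤ ∫⁻ p : ℝ × ℝ, (κ ^ 2 *
        ∫⁻ t, ∫⁻ s, ‖hat U₁ t‖ₑ * ‖hat U₂ s‖ₑ * ‖hat U₃ (c • p - t - s)‖ₑ) ^ 2 := by
        apply lintegral_mono; intro p
        exact pow_le_pow_left' (hle p) 2
    _ = κ ^ 5 * ∫⁻ p : ℝ × ℝ, (∫⁻ t, ∫⁻ s, ‖hat U₁ t‖ₑ * ‖hat U₂ s‖ₑ * ‖hat U₃ (p - t - s)‖ₑ) ^ 2 := by
        rw [sc (fun p => (κ ^ 2 *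
          ∫⁻ t, ∫⁻ s, ‖hat U₁ t‖ₑ * ‖hat U₂ s‖ₑ * ‖hat U₃ (p - t - s)‖ₑ) ^ 2)]
        simp_rw [mul_pow]
        rw [lintegral_const_mul' _ _ (by simp [hκt.ne])]
        ring
    _ ≤ _ := by
        rw [mul_assoc]
        gcongr
        exact h _ _ _ (hm U₁) (hm U₂) (hm U₃)
end Tri

/-- Trilinear estimate (Lemma 2.3 of the paper):
`‖U₁U₂U₃‖_{L²(ℝ²)} ≤ C ∏ ‖U_i‖_{X^{0,b}}` for `b > 1/2`. -/
theorem trilinear_L2 (b : ℝ) (hb : 1 / 2 < b) :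
    ∃ C > 0, ∀ U₁ U₂ U₃ : SchwartzMap (ℝ × ℝ) ℂ,
      eLpNorm (fun p : ℝ × ℝ => U₁ p * U₂ p * U₃ p) 2 volume ≤
        ENNReal.ofReal (C *
          ((∫ p : ℝ × ℝ, (1 + |p.2 - p.1 ^ 3|) ^ (2 * b) *
            ‖∫ q : ℝ × ℝ, Complex.exp (-Complex.I * (q.1 * p.1 + q.2 * p.2)) * U₁ q‖ ^ 2) ^
            ((1 : ℝ) / 2) *
          (∫ p : ℝ × ℝ, (1 + |p.2 - p.1 ^ 3|) ^ (2 * b) *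
            ‖∫ q : ℝ × ℝ, Complex.exp (-Complex.I * (q.1 * p.1 + q.2 * p.2)) * U₂ q‖ ^ 2) ^
            ((1 : ℝ) / 2) *
          (∫ p : ℝ × ℝ, (1 + |p.2 - p.1 ^ 3|) ^ (2 * b) *
            ‖∫ q : ℝ × ℝ, Complex.exp (-Complex.I * (q.1 * p.1 + q.2 * p.2)) * U₃ q‖ ^ 2) ^
            ((1 : ℝ) / 2))) := by
  obtain ⟨C, hC, h⟩ := Tri.main hb
  refine ⟨√(C.toReal) + 1, by positivity, fun U₁ U₂ U₃ => ?_⟩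
  have h := h U₁ U₂ U₃
  have hb0 : 0 ≤ b := by linarith
  rw [Tri.lint_weight U₁ hb0, Tri.lint_weight U₂ hb0, Tri.lint_weight U₃ hb0] at h
  have hnn (U : SchwartzMap (ℝ × ℝ) ℂ) : 0 ≤ ∫ p : ℝ × ℝ, (1 + |p.2 - p.1 ^ 3|) ^ (2 * b) * ‖Tri.hat U p‖ ^ 2 :=
    integral_nonneg fun p => by positivity
  change _ ≤ ENNReal.ofReal ((√(C.toReal) + 1) *
    ((∫ p : ℝ × ℝ, (1 + |p.2 - p.1 ^ 3|) ^ (2 * b) * ‖Tri.hat U₁ p‖ ^ 2) ^ ((1:ℝ) / 2) *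
     (∫ p : ℝ × ℝ, (1 + |p.2 - p.1 ^ 3|) ^ (2 * b) * ‖Tri.hat U₂ p‖ ^ 2) ^ ((1:ℝ) / 2) *
     (∫ p : ℝ × ℝ, (1 + |p.2 - p.1 ^ 3|) ^ (2 * b) * ‖Tri.hat U₃ p‖ ^ 2) ^ ((1:ℝ) / 2)))
  have n1 := hnn U₁
  have n2 := hnn U₂
  have n3 := hnn U₃
  generalize (∫ p : ℝ × ℝ, (1 + |p.2 - p.1 ^ 3|) ^ (2 * b) * ‖Tri.hat U₁ p‖ ^ 2) = A₁ at *
  generalize (∫ p : ℝ × ℝ, (1 + |p.2 - p.1 ^ 3|) ^ (2 * b) * ‖Tri.hat U₂ p‖ ^ 2) = A₂ at *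
  generalize (∫ p : ℝ × ℝ, (1 + |p.2 - p.1 ^ 3|) ^ (2 * b) * ‖Tri.hat U₃ p‖ ^ 2) = A₃ at *
  rw [← Tri.sq_eLpNorm] at h
  refine (ENNReal.pow_le_pow_left_iff (n := 2) (by norm_num)).1 (h.trans ?_)
  rw [← ENNReal.ofReal_toReal hC.ne, ← ENNReal.ofReal_mul n1, ← ENNReal.ofReal_mul (by positivity),
    ← ENNReal.ofReal_mul (by positivity), ← ENNReal.ofReal_pow (by positivity)]
  apply ENNReal.ofReal_le_ofReal
  simp only [← Real.sqrt_eq_rpow, mul_pow, Real.sq_sqrt n1, Real.sq_sqrt n2, Real.sq_sqrt n3]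
  gcongr
  rw [ENNReal.toReal_ofReal ENNReal.toReal_nonneg]
  nlinarith [Real.sq_sqrt (ENNReal.toReal_nonneg (a := C)), Real.sqrt_nonneg C.toReal]
end
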